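/- arXiv:0909.2347 — 2 statements merged into one kernel-verified Lean document; each statement's English description precedes it below -/
import Mathlib

section
/- Let n ≥ 2, k ≥ 1, let z ∈ ℂ, and let x ∈ ℂ^k have nonzero, pairwise distinct entries and satisfy the Bethe Ansatz equations x_i^{n+k} = (−1)^{k−1} z·(x_1⋯x_k) for all i. Then, with the hopping operators a_i on H_k defined using this z, the Bethe vector b(x) is a simultaneous eigenvector: e_r(𝒜)·b(x) = h_r(x)·b(x) for every 1 ≤ r ≤ n−1, and consequently s_λ(𝒜)·b(x) = s_{λ^t}(x)·b(x) for every partition λ ∈ 𝔓_{≤n−1,k}. -/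
noncomputable section

open scoped BigOperators

/-- `𝔓_{≤r,c}`: partitions with at most `r` parts, each part at most `c`,
encoded as weakly decreasing functions `Fin r → Fin (c+1)`. -/
abbrev PartBox (r c : ℕ) :=
  {f : Fin r → Fin (c + 1) // ∀ i j : Fin r, i ≤ j → (f j : ℕ) ≤ (f i : ℕ)}

/-- The parts of a partition, as natural numbers. -/
def partVal {r c : ℕ} (σ : PartBox r c) (i : Fin r) : ℕ := (σ.1 i : ℕ)

/-- `|σ|`, the number of boxes of the partition. -/
def partSum {r c : ℕ} (σ : PartBox r c) : ℕ := ∑ i, partVal σ i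

/-- A tuple of parts, padded by zeros to an arbitrary length. -/
def padded {r : ℕ} (f : Fin r → ℕ) (t : ℕ) : ℕ := if h : t < r then f ⟨t, h⟩ else 0

/-- The transpose (conjugate) partition of `μ`, with `c` parts:
`(transpGen μ c) j = μ^t_{j+1} = #{i | μ_i ≥ j+1}`. -/
def transpGen {r : ℕ} (μ : Fin r → ℕ) (c : ℕ) : Fin c → ℕ :=
  fun j => (Finset.univ.filter fun i : Fin r => (j : ℕ) + 1 ≤ μ i).card

/-- `I^{(m)}(τ)_j = (m+1)/2 + τ_{m+1-j} - (m+1-j)` (1-based `j`), as a rational number. -/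
def Imap (m : ℕ) (τ : Fin m → ℕ) (j : Fin m) : ℚ :=
  ((m : ℚ) + 1) / 2 + (τ j.rev : ℚ) - ((m : ℚ) - (j : ℚ))

/-- `ζ^t = exp(2πι t/N)` for rational exponents `t`. -/
def zeta (N : ℕ) (t : ℚ) : ℂ :=
  Complex.exp (2 * Real.pi * Complex.I * (t : ℂ) / (N : ℂ))

/-- Complete homogeneous symmetric polynomial `h_r(x)` of a tuple of complex numbers,
with `h_0 = 1` and `h_r = 0` for `r < 0`. -/
def hC {m : ℕ} (x : Fin m → ℂ) (r : ℤ) : ℂ :=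
  if 0 ≤ r then
    ∑ p ∈ (Fintype.piFinset fun _ : Fin m => Finset.range (r.toNat + 1)).filter
        (fun p => ∑ i, p i = r.toNat),
      ∏ i, x i ^ p i
  else 0

/-- The Schur polynomial `s_λ(x) = det(h_{λ_i - i + j}(x))_{1 ≤ i,j ≤ m}` of a partition
with at most `m` parts, evaluated at an `m`-tuple of complex numbers. -/
def schurC {m : ℕ} (x : Fin m → ℂ) (lam : Fin m → ℕ) : ℂ :=
  (Matrix.of fun i j : Fin m => hC x ((lam i : ℤ) - (i : ℕ) + (j : ℕ))).det

/-- A canonical "gap" of a proper subset `I ⊊ ℤ/nℤ`: the element of the complement with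
the smallest representative. -/
def zgap {n : ℕ} [NeZero n] (I : Finset (ZMod n)) : ZMod n :=
  if h : ((Finset.univ \ I).image ZMod.val).Nonempty then
    ((((Finset.univ \ I).image ZMod.val).min' h : ℕ) : ZMod n)
  else 0

/-- The cyclically ordered product `∏_{i ∈ I} a_i` in which, whenever `i, i+1 ∈ I`, the
factor `a_{i+1}` stands to the left of the factor `a_i`. -/
def cycProdDesc {n : ℕ} [NeZero n] {A : Type*} [Monoid A] (a : ZMod n → A)
    (I : Finset (ZMod n)) : A :=
  ((List.range n).map fun t =>
    if zgap I - 1 - (t : ZMod n) ∈ I then a (zgap I - 1 - (t : ZMod n)) else 1).prod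

/-- The determinant of a square matrix over a (possibly noncommutative) ring, expanded via
the Leibniz formula, the factors of each summand multiplied in the order of the columns. -/
def ncDet {A : Type*} [Ring A] {r : ℕ} (M : Fin r → Fin r → A) : A :=
  ∑ σ : Equiv.Perm (Fin r),
    ((Equiv.Perm.sign σ : ℤ) : A) * ((List.finRange r).map fun i => M (σ i) i).prod

/-- The `k`-particle space `H_k`, the free `R`-module with basis `𝔓_{≤ n-1,k}`
(a partition `λ` is identified with the level-`k` configuration `m(λ)`). -/
abbrev HkSp (R : Type*) [CommRing R] (n k : ℕ) := PartBox (n - 1) k →₀ R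

/-- The configuration `m(λ)` on `ℤ/nℤ` attached to a partition `λ ∈ 𝔓_{≤ n-1,k}`:
`m(λ)_i = λ_i - λ_{i+1}` for `1 ≤ i ≤ n-1` and `m(λ)_0 = k - λ_1`. -/
def cfgOf (n k : ℕ) (σ : PartBox (n - 1) k) (c : ZMod n) : ℕ :=
  if c.val = 0 then k - padded (partVal σ) 0
  else padded (partVal σ) (c.val - 1) - padded (partVal σ) (c.val)

/-- The basis vector of `H_k` labelled by a configuration `m` (zero if `m` is not the
configuration of a partition in the box), with coefficient `r`. -/
def toBasis (R : Type*) [CommRing R] (n k : ℕ) [NeZero n] (m : ZMod n → ℕ) (r : R) :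
    HkSp R n k :=
  ∑ μ : PartBox (n - 1) k, if cfgOf n k μ = m then Finsupp.single μ r else 0

/-- The hopping operator `a_i` on `H_k`: move one particle from site `i` to site `i+1`
(zero if site `i` is unoccupied), with the extra factor `z` when `i = 0`. -/
def aOp (R : Type*) [CommRing R] (n k : ℕ) [NeZero n] (z : R) (i : ZMod n) :
    Module.End R (HkSp R n k) :=
  Finsupp.lift (HkSp R n k) R (PartBox (n - 1) k) fun σ =>
    if cfgOf n k σ i = 0 then 0
    else
      toBasis R n k
        (fun c => cfgOf n k σ c - (Pi.single i 1 : ZMod n → ℕ) c +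
          (Pi.single (i + 1) 1 : ZMod n → ℕ) c)
        (if i = 0 then z else 1)

/-- The noncommutative elementary symmetric polynomials `e_t(𝒜)` in the hopping operators,
with the conventions `e_0 = id`, `e_n = z • id` and `e_t = 0` for `t < 0` or `t > n`. -/
def eAInt (R : Type*) [CommRing R] (n k : ℕ) [NeZero n] (z : R) (t : ℤ) :
    Module.End R (HkSp R n k) :=
  if t = 0 then 1
  else if 1 ≤ t ∧ t ≤ (n : ℤ) - 1 then
    ∑ I ∈ Finset.powersetCard t.toNat (Finset.univ : Finset (ZMod n)),
      cycProdDesc (aOp R n k z) I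
  else if t = (n : ℤ) then z • (1 : Module.End R (HkSp R n k)) else 0

/-- The noncommutative Schur polynomial
`s_λ(𝒜) = det(e_{λ^t_i - i + j}(𝒜))_{1 ≤ i,j ≤ λ_1}`. -/
def sAOp (R : Type*) [CommRing R] (n k : ℕ) [NeZero n] (z : R) (σ : PartBox (n - 1) k) :
    Module.End R (HkSp R n k) :=
  ncDet fun i j : Fin (padded (partVal σ) 0) =>
    eAInt R n k z
      ((transpGen (partVal σ) (padded (partVal σ) 0) i : ℤ) - ((i : ℕ) : ℤ) + ((j : ℕ) : ℤ))

/-- The padded partition `λ̂ = (λ_1 + m_0, …, λ_{n-1} + m_0, m_0)` with `m_0 = k - λ_1`. -/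
def lamHat (n k : ℕ) (σ : PartBox (n - 1) k) (i : Fin n) : ℕ :=
  padded (partVal σ) i + (k - padded (partVal σ) 0)

/-- The Bethe vector `b(x) = Σ_λ s_{λ̂^t}(x₁⁻¹, …, x_k⁻¹) · m(λ) ∈ H_k`. -/
def betheVec (n k : ℕ) (x : Fin k → ℂ) : HkSp ℂ n k :=
  ∑ σ : PartBox (n - 1) k,
    Finsupp.single σ (schurC (fun i => (x i)⁻¹) (transpGen (lamHat n k σ) k))

/-- The Hermitian inner product on `H_k` (conjugate-linear in the first argument) making
the basis of partitions/configurations orthonormal. -/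
def pairHk {n k : ℕ} (f g : HkSp ℂ n k) : ℂ :=
  ∑ σ : PartBox (n - 1) k, (starRingEnd ℂ) (f σ) * g σ

/-!
Writing a configuration as a weakly increasing sequence `P` of particle positions in `{1, …, n}`,
the corresponding component of `b(x)` is, up to the constant Vandermonde factor, the alternant
`det (x_j ^ (-(P_i + i)))`. The product of the hopping operators over a set `I` maps some
configuration to that of `P` exactly when `I` consists of the sites that the particles pass when the
`i`-th one moves back by `α_i`, without overtaking the particle behind it on the circle. The
components of `e_r(𝒜) b(x)` are therefore sums of alternants of `P - α` over all such `α` with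
`|α| = r`, where a particle leaving the window `{1, …, n}` costs a factor `z`: the Bethe equations
say precisely that the alternant picks up this factor.

The sum over `α` of the alternants, weighted by `X ^ |α|`, is a determinant of geometric sums.
Multiplying by `∏ (1 - x_j X)` telescopes them, and by the Bethe equations the result is
`1 - c X ^ (n + k)` times the alternant of `P`. Comparing coefficients gives the eigenvalue
`h_r(x)` for every `r < n + k`. Hence the noncommutative determinant `s_λ(𝒜)` acts on `b(x)` as the
dual Jacobi–Trudi determinant with entries `h_r(x)`.
-/

/-! ### Complete homogeneous polynomials and alternants -/

section CompleteSeries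

open PowerSeries

variable {R ι : Type*} [CommRing R] [Fintype ι]

/-- The generating series `∑ h_r(x) X ^ r = ∏ 1 / (1 - x_j X)` of the complete homogeneous
symmetric polynomials. -/
def completeSeries (x : ι → R) : R⟦X⟧ := ∏ j, mk fun p => x j ^ p

theorem mk_pow_mul_one_sub (a : R) : mk (fun p => a ^ p) * (1 - C a * X) = 1 := by
  ext (_ | r)
  · simp
  · simp [mul_sub, ← mul_assoc, coeff_succ_mul_X, coeff_one, pow_succ]

theorem completeSeries_mul_prod_one_sub (x : ι → R) :
    completeSeries x * ∏ j, (1 - C (x j) * X) = 1 := by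
  rw [completeSeries, ← Finset.prod_mul_distrib]
  exact Finset.prod_eq_one fun j _ => mk_pow_mul_one_sub _

theorem completeSeries_mul_prod_erase [DecidableEq ι] (x : ι → R) (l : ι) :
    completeSeries x * ∏ j ∈ Finset.univ.erase l, (1 - C (x j) * X) = mk fun p => x l ^ p := by
  rw [completeSeries, ← Finset.mul_prod_erase _ _ (Finset.mem_univ l), mul_assoc,
    ← Finset.prod_mul_distrib, Finset.prod_eq_one fun j _ => mk_pow_mul_one_sub (x j), mul_one]

end CompleteSeries

section CompleteHomogeneous

variable {m : ℕ} (x : Fin m → ℂ)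

theorem hC_natCast (r : ℕ) : hC x r = PowerSeries.coeff r (completeSeries x) := by
  rw [completeSeries, PowerSeries.coeff_prod, hC, if_pos (by positivity)]
  simp only [Int.toNat_natCast, PowerSeries.coeff_mk]
  symm
  refine Finset.sum_bij (fun l _ => l) ?_ (fun _ _ _ _ h => DFunLike.coe_injective h) ?_
    fun _ _ => rfl
  · intro l hl
    have hsum : ∑ i, l i = r := (Finset.mem_finsuppAntidiag.1 hl).1
    refine Finset.mem_filter.2 ⟨Fintype.mem_piFinset.2 fun a => ?_, hsum⟩
    rw [Finset.mem_range_succ_iff, ← hsum]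
    exact Finset.single_le_sum (fun _ _ => Nat.zero_le _) (Finset.mem_univ a)
  · intro p hp
    refine ⟨Finsupp.equivFunOnFinite.symm p, ?_, by simp⟩
    simpa [Finset.mem_finsuppAntidiag] using (Finset.mem_filter.1 hp).2

theorem hC_of_neg {r : ℤ} (hr : r < 0) : hC x r = 0 := if_neg hr.not_ge

theorem hC_zero : hC x 0 = 1 := by
  simpa [completeSeries, PowerSeries.coeff_prod] using hC_natCast x 0

theorem hC_natCast_sub (r b : ℕ) :
    hC x ((r : ℤ) - b) = PowerSeries.coeff r (PowerSeries.X ^ b * completeSeries x) := by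
  rw [PowerSeries.coeff_X_pow_mul']
  split_ifs with h
  · rw [← Nat.cast_sub h, hC_natCast]
  · exact hC_of_neg x (by omega)

/-- The product `∏_{a ≠ l} (1 - x_a X)`, whose coefficients express the powers of `x_l`
through the complete homogeneous polynomials of `x`. -/
def omitProd (l : Fin m) : Polynomial ℂ :=
  ∏ a ∈ Finset.univ.erase l, (1 - Polynomial.C (x a) * Polynomial.X)

theorem natDegree_omitProd_lt (l : Fin m) : (omitProd x l).natDegree < m := by
  have hdeg : (omitProd x l).natDegree ≤ ∑ a ∈ Finset.univ.erase l, 1 :=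
    (Polynomial.natDegree_prod_le _ _).trans (Finset.sum_le_sum fun a _ => by compute_degree)
  have hm := l.pos
  rw [Finset.sum_const, Finset.card_erase_of_mem (Finset.mem_univ l), Finset.card_fin] at hdeg
  simp only [smul_eq_mul, mul_one] at hdeg
  omega

theorem pow_eq_sum_hC (l : Fin m) (p : ℕ) :
    x l ^ p = ∑ j : Fin m, hC x ((p : ℤ) - (m - 1) + j) * (omitProd x l).coeff (m - 1 - j) := by
  have hser : (PowerSeries.mk fun p => x l ^ p) =
      ((omitProd x l : Polynomial ℂ) : PowerSeries ℂ) * completeSeries x := by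
    rw [← completeSeries_mul_prod_erase x l, mul_comm, omitProd,
      ← Polynomial.coeToPowerSeries.ringHom_apply, map_prod]
    simp
  conv_lhs => rw [← PowerSeries.coeff_mk p fun p => x l ^ p, hser,
    Polynomial.as_sum_range' _ m (natDegree_omitProd_lt x l)]
  rw [← Polynomial.coeToPowerSeries.ringHom_apply, map_sum, Finset.sum_mul, map_sum,
    ← Finset.sum_range_reflect, Finset.sum_range]
  refine Finset.sum_congr rfl fun j _ => ?_
  have hindex : (p : ℤ) - (m - 1) + j = p - (m - 1 - j : ℕ) := by omega
  rw [hindex, hC_natCast_sub, Polynomial.coeToPowerSeries.ringHom_apply,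
    Polynomial.coe_monomial, PowerSeries.monomial_eq_C_mul_X_pow, mul_assoc,
    PowerSeries.coeff_C_mul, mul_comm]

end CompleteHomogeneous

section JacobiTrudi

variable {k : ℕ} (x : Fin k → ℂ) (q : ℕ → ℕ)

/-- The `m × m` Jacobi–Trudi matrix `(h_{q_i - i + j}(x))`, for a sequence `q` of parts;
`m` need not be the number of variables. -/
def jacobiTrudi (m : ℕ) : Matrix (Fin m) (Fin m) ℂ :=
  Matrix.of fun i j => hC x ((q i : ℤ) - (i : ℕ) + (j : ℕ))

theorem det_jacobiTrudi_succ {m : ℕ} (hq : q m = 0) :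
    (jacobiTrudi x q (m + 1)).det = (jacobiTrudi x q m).det := by
  rw [Matrix.det_succ_row _ (Fin.last m), Fintype.sum_eq_single (Fin.last m)]
  · have hminor : (jacobiTrudi x q (m + 1)).submatrix (Fin.last m).succAbove
        (Fin.last m).succAbove = jacobiTrudi x q m := by
      ext i j
      simp [jacobiTrudi]
    rw [hminor]
    simp [jacobiTrudi, hq, hC_zero, ← two_mul]
  · intro j hj
    have hneg : ((q m : ℕ) : ℤ) - m + (j : ℕ) < 0 := by
      have := Fin.val_lt_last hj
      omega
    simp [jacobiTrudi, hC_of_neg x hneg]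

theorem det_jacobiTrudi_add {L : ℕ} (hq : ∀ i, L ≤ i → q i = 0) (d : ℕ) :
    (jacobiTrudi x q (L + d)).det = (jacobiTrudi x q L).det := by
  induction d with
  | zero => rfl
  | succ d ih => rw [← add_assoc, det_jacobiTrudi_succ x q (hq _ (L.le_add_right d)), ih]

end JacobiTrudi

section Alternant

variable {F : Type*} [Field F] {k : ℕ}

/-- The alternant `det (x_j ^ (-(Q_i + i)))`; the exponents are negated because Bethe vectors
are built from Schur polynomials in the inverses of the Bethe roots. -/
def alternant (x : Fin k → F) (Q : Fin k → ℤ) : F :=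
  (Matrix.of fun i j : Fin k => x j ^ (-(Q i + (i : ℕ)))).det

theorem alternant_zero_ne_zero {x : Fin k → F} (hx : Function.Injective x) :
    alternant x 0 ≠ 0 := by
  have hvand : (Matrix.vandermonde fun i => (x i)⁻¹).det ≠ 0 :=
    Matrix.det_vandermonde_ne_zero_iff.2 fun a b h => hx (inv_injective h)
  rw [← Matrix.det_transpose] at hvand
  convert hvand using 1
  rw [alternant]
  congr 1
  ext i j
  simp [Matrix.vandermonde_apply]

/-- The bialternant formula. -/
theorem alternant_rev_eq_mul_schurC (x : Fin k → ℂ) (lam : Fin k → ℕ) :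
    alternant x (fun i => lam i.rev) = alternant x 0 * schurC (fun i => (x i)⁻¹) lam := by
  set y : Fin k → ℂ := fun i => (x i)⁻¹
  let E : Matrix (Fin k) (Fin k) ℂ := Matrix.of fun j l => (omitProd y l).coeff (k - 1 - j)
  have hfactor (mu : Fin k → ℕ) : alternant x (fun i => mu i.rev) =
      (Fin.revPerm (n := k)).sign * (schurC y mu * E.det) := by
    rw [schurC, ← Matrix.det_mul, ← Matrix.det_permute, alternant]
    congr 1
    ext i l
    have hpow : x l ^ (-((mu i.rev : ℤ) + (i : ℕ))) = y l ^ (mu i.rev + i : ℕ) := by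
      rw [zpow_neg, inv_pow]; norm_cast
    simp only [Matrix.of_apply, Matrix.submatrix_apply, id, Matrix.mul_apply, E, hpow,
      pow_eq_sum_hC y l]
    refine Finset.sum_congr rfl fun j _ => ?_
    congr 2
    rw [Fin.revPerm_apply, Fin.val_rev]
    omega
  have hschur : schurC y 0 = 1 := by
    have h := det_jacobiTrudi_add y (fun _ => 0) (L := 0) (fun _ _ => rfl) k
    rw [zero_add, Matrix.det_fin_zero] at h
    exact h
  have hzero := hfactor 0
  simp only [Pi.zero_apply, Nat.cast_zero] at hzero
  rw [hfactor, show alternant x 0 = _ from hzero, hschur]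
  ring

end Alternant

/-! ### Cylindric sequences and the cyclic Pieri rule -/

section CyclicPred

variable {K : ℕ} (n : ℕ) {P Q : Fin (K + 1) → ℤ}

/-- The sequence `(P_K - n, P_0, …, P_{K-1})`. Reading `P` as positions of particles on a circle of
circumference `n`, it sends every particle to the position of the particle behind it. -/
def cyclicPred (P : Fin (K + 1) → ℤ) : Fin (K + 1) → ℤ :=
  Fin.cons (P (Fin.last K) - n) fun i => P i.castSucc

theorem cyclicPred_zero (P : Fin (K + 1) → ℤ) : cyclicPred n P 0 = P (Fin.last K) - n := rfl

theorem cyclicPred_succ (P : Fin (K + 1) → ℤ) (i : Fin K) :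
    cyclicPred n P i.succ = P i.castSucc := rfl

theorem cyclicPred_le_cyclicPred_iff : cyclicPred n P ≤ cyclicPred n Q ↔ P ≤ Q := by
  simp only [Pi.le_def, Fin.forall_fin_succ (P := fun i => cyclicPred n P i ≤ _),
    Fin.forall_fin_succ' (P := fun i => P i ≤ _), cyclicPred_zero, cyclicPred_succ,
    sub_le_sub_iff_right, and_comm]

theorem cyclicPred_surjective : Function.Surjective (cyclicPred (K := K) n) := by
  intro Q
  refine ⟨Fin.snoc (fun i => Q i.succ) (Q 0 + n), funext fun i => ?_⟩
  cases i using Fin.cases <;> simp [cyclicPred]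

/-- A sequence is cylindric if it extends to a weakly increasing sequence `ℤ → ℤ` with
`P (i + K + 1) = P i + n`. -/
def IsCylindric (P : Fin (K + 1) → ℤ) : Prop := cyclicPred n P ≤ P

/-- The distances from each entry of a cylindric sequence to its cyclic predecessor. -/
def gap (P : Fin (K + 1) → ℤ) (i : Fin (K + 1)) : ℕ := (P i - cyclicPred n P i).toNat

variable {n}

theorem isCylindric_iff : IsCylindric n P ↔ Monotone P ∧ P (Fin.last K) - n ≤ P 0 := by
  rw [IsCylindric, Pi.le_def, Fin.forall_fin_succ, Fin.monotone_iff_le_succ, and_comm]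
  rfl

theorem IsCylindric.cast_gap (hP : IsCylindric n P) (i : Fin (K + 1)) :
    (gap n P i : ℤ) = P i - cyclicPred n P i :=
  Int.toNat_of_nonneg (sub_nonneg.2 (hP i))

theorem IsCylindric.sum_gap (hP : IsCylindric n P) : ∑ i, gap n P i = n := by
  zify
  simp only [hP.cast_gap]
  rw [Finset.sum_sub_distrib, Fin.sum_univ_succ (cyclicPred n P), Fin.sum_univ_castSucc P]
  simp only [cyclicPred_zero, cyclicPred_succ]
  ring

end CyclicPred

theorem det_sub_cyclic_shift {R : Type*} [CommRing R] {K : ℕ}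
    (W : Matrix (Fin (K + 1)) (Fin (K + 1)) R) (a : R) (w : Fin K → R) :
    (Matrix.of (Fin.cons (W 0 - a • W (Fin.last K)) fun i => W i.succ - w i • W i.castSucc)).det =
      (1 - a * ∏ i, w i) * W.det := by
  let v : Fin (K + 1) → R := fun i => a * Fin.partialProd w i
  let A : Matrix (Fin (K + 1)) (Fin (K + 1)) R := Matrix.of fun i => W i - v i • W (Fin.last K)
  have hB : A.det = (Matrix.of (Fin.cons (W 0 - a • W (Fin.last K))
      fun i => W i.succ - w i • W i.castSucc)).det := by
    refine Matrix.det_eq_of_forall_row_eq_smul_add_pred w (fun j => ?_) fun i j => ?_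
    · simp [A, v]
    · simp only [A, v, Matrix.of_apply, Fin.cons_succ, Fin.partialProd_succ, Pi.sub_apply,
        Pi.smul_apply, smul_eq_mul]
      ring
  have hA : A = A.updateRow (Fin.last K) ((1 - v (Fin.last K)) • W (Fin.last K)) := by
    rw [sub_smul, one_smul]
    exact (Matrix.updateRow_eq_self A _).symm
  have hv : v (Fin.last K) = a * ∏ i, w i := by
    simp [v, Fin.partialProd, List.take_of_length_le, List.prod_ofFn]
  rw [← hB, hA, Matrix.det_updateRow_smul, hv]
  congr 1
  refine Matrix.det_eq_of_forall_row_eq_smul_add_const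
    (fun i => if i = Fin.last K then 0 else -v i) (Fin.last K) (if_pos rfl) fun i j => ?_
  obtain rfl | hi := eq_or_ne i (Fin.last K)
  · simp
  · simp [A, hi, sub_eq_add_neg]

section Pieri

open PowerSeries

variable {F : Type*} [Field F]

theorem one_sub_mul_sum_pow_mul_zpow {a : F} (ha : a ≠ 0) (l : ℤ) (d : ℕ) :
    (1 - C a * X) * ∑ s ∈ Finset.range d, X ^ s * C (a ^ (l + s)) =
      C (a ^ l) - X ^ d * C (a ^ (l + d)) := by
  induction d with
  | zero => simp
  | succ d ih =>
    have hpow : a ^ (l + (d + 1 : ℕ)) = a * a ^ (l + d) := by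
      rw [← zpow_one_add₀ ha, Nat.cast_succ]
      ring_nf
    rw [Finset.sum_range_succ, mul_add, ih, hpow, map_mul]
    ring

theorem sum_Iic_alternant_eq_det {k : ℕ} (x : Fin k → F) (P : Fin k → ℤ) (D : Fin k → ℕ) :
    ∑ α ∈ Finset.Iic D, X ^ (∑ i, α i) * C (alternant x fun i => P i - α i) =
      (Matrix.of fun i j =>
        ∑ s ∈ Finset.Iic (D i), X ^ s * C (x j ^ (-(P i + (i : ℕ)) + s))).det := by
  symm
  convert (Matrix.detRowAlternating (R := F⟦X⟧) (n := Fin k)).toMultilinearMap.map_sum_finset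
    (fun i (s : ℕ) j => X ^ s * C (x j ^ (-(P i + (i : ℕ)) + s))) fun i => Finset.Iic (D i)
    using 1
  · congr 1
    ext i j : 1
    simp
  · refine Finset.sum_congr rfl fun α _ => ?_
    rw [alternant, RingHom.map_det, ← Finset.prod_pow_eq_pow_sum, ← Matrix.det_mul_column]
    change _ = Matrix.det _
    congr 1
    ext i j : 1
    simp only [RingHom.mapMatrix_apply, Matrix.map_apply, Matrix.of_apply]
    ring_nf

variable {n K : ℕ} {c : F} {x : Fin (K + 1) → F} {P : Fin (K + 1) → ℤ}

/-- Multiplying the rows of geometric sums by `1 - x_j X` telescopes each of them to a difference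
of two powers of `x_j`, the second of which is cancelled by the row above; the first row meets the
last one, where `x_j ^ (n + K + 1) = c` enters. -/
theorem prod_one_sub_mul_sum_alternant (hx : ∀ j, x j ≠ 0) (hc : ∀ j, x j ^ (n + (K + 1)) = c)
    (hP : IsCylindric n P) :
    (∏ j, (1 - C (x j) * X)) *
        ∑ α ∈ Finset.Iic (gap n P), X ^ (∑ i, α i) * C (alternant x fun i => P i - α i) =
      (1 - C c * X ^ (n + (K + 1))) * C (alternant x P) := by
  let W : Matrix (Fin (K + 1)) (Fin (K + 1)) F⟦X⟧ :=
    Matrix.of fun i j => C (x j ^ (-(P i + (i : ℕ))))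
  have hW : C (alternant x P) = W.det := RingHom.map_det _ _
  have hcX : C c * X ^ (n + (K + 1)) =
      C c * X ^ (gap n P 0 + 1) * ∏ i : Fin K, X ^ (gap n P i.succ + 1) := by
    rw [mul_assoc, Finset.prod_pow_eq_pow_sum, ← pow_add,
      ← Fin.sum_univ_succ fun i => gap n P i + 1, Finset.sum_add_distrib, hP.sum_gap]
    simp
  rw [sum_Iic_alternant_eq_det, ← Matrix.det_mul_row, hW, hcX, ← det_sub_cyclic_shift]
  congr 1
  ext i j : 1
  simp only [Matrix.of_apply, ← Nat.range_succ_eq_Iic]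
  rw [one_sub_mul_sum_pow_mul_zpow (hx j)]
  cases i using Fin.cases with
  | zero =>
    have hexp : -(P 0 + ((0 : Fin (K + 1)) : ℕ)) + (gap n P 0 + 1 : ℕ) =
        (n + (K + 1) : ℕ) + -(P (Fin.last K) + (Fin.last K : ℕ)) := by
      rw [Nat.cast_succ, hP.cast_gap, cyclicPred_zero, Fin.val_zero, Fin.val_last]
      push_cast
      ring
    rw [hexp, zpow_add₀ (hx j), zpow_natCast, hc, map_mul]
    simp only [W, Fin.cons_zero, Pi.sub_apply, Pi.smul_apply, Matrix.of_apply, smul_eq_mul]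
    ring
  | succ i =>
    have hexp : -(P i.succ + (i.succ : ℕ)) + (gap n P i.succ + 1 : ℕ) =
        -(P i.castSucc + (i.castSucc : ℕ)) := by
      rw [Nat.cast_succ, hP.cast_gap, cyclicPred_succ, Fin.val_succ, Fin.val_castSucc]
      push_cast
      ring
    rw [hexp]
    simp [W]

theorem hC_mul_alternant {c : ℂ} {x : Fin (K + 1) → ℂ} (hx : ∀ j, x j ≠ 0)
    (hc : ∀ j, x j ^ (n + (K + 1)) = c) (hP : IsCylindric n P) {r : ℕ} (hr : r < n + (K + 1)) :
    hC x r * alternant x P =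
      ∑ α ∈ Finset.Iic (gap n P) with ∑ i, α i = r, alternant x fun i => P i - α i := by
  have hseries : ∑ α ∈ Finset.Iic (gap n P), X ^ (∑ i, α i) * C (alternant x fun i => P i - α i) =
      completeSeries x * (1 - C c * X ^ (n + (K + 1))) * C (alternant x P) := by
    rw [mul_assoc, ← prod_one_sub_mul_sum_alternant hx hc hP, ← mul_assoc,
      completeSeries_mul_prod_one_sub, one_mul]
  have hcoeff := congrArg (coeff r) hseries
  rw [coeff_mul_C, mul_sub, mul_one, map_sub, ← mul_assoc, coeff_mul_X_pow', if_neg hr.not_ge,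
    sub_zero, ← hC_natCast, map_sum] at hcoeff
  rw [← hcoeff, Finset.sum_filter]
  refine Finset.sum_congr rfl fun α _ => ?_
  rw [coeff_mul_C, coeff_X_pow, ite_mul, one_mul, zero_mul]
  simp only [eq_comm]

theorem alternant_cyclicPred {z : F} (hx : ∀ j, x j ≠ 0)
    (hz : ∀ j, x j ^ (n + (K + 1)) = (-1) ^ K * z * ∏ j, x j) (Q : Fin (K + 1) → ℤ) :
    alternant x (cyclicPred n Q) = z * alternant x Q := by
  let v : Fin (K + 1) → F := Fin.cons ((-1) ^ K * z * ∏ j, x j) 1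
  have hrows : (∏ j, x j) * alternant x (cyclicPred n Q) =
      (∏ i, v i) * ((-1) ^ K * alternant x Q) := by
    have hsign : (-1) ^ K * alternant x Q = ((Matrix.of fun i j : Fin (K + 1) =>
        x j ^ (-(Q i + (i : ℕ)))).submatrix (finRotate (K + 1)).symm id).det := by
      rw [Matrix.det_permute, Equiv.Perm.sign_symm, sign_finRotate]
      simp [alternant]
    rw [hsign, alternant, ← Matrix.det_mul_row, ← Matrix.det_mul_column]
    congr 1
    ext i j : 1
    simp only [Matrix.of_apply, Matrix.submatrix_apply, id]
    cases i using Fin.cases with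
    | zero =>
      have hrot : (finRotate (K + 1)).symm 0 = Fin.last K := by
        rw [Equiv.symm_apply_eq, finRotate_last]
      simp only [v, Fin.cons_zero, cyclicPred_zero, hrot]
      rw [← hz j, ← zpow_natCast, ← zpow_add₀ (hx j), ← zpow_one_add₀ (hx j), Fin.val_zero,
        Fin.val_last]
      push_cast
      ring_nf
    | succ i =>
      have hrot : (finRotate (K + 1)).symm i.succ = i.castSucc := by
        rw [Equiv.symm_apply_eq, finRotate_apply, Fin.coeSucc_eq_succ]
      simp only [v, Fin.cons_succ, Pi.one_apply, one_mul, cyclicPred_succ, hrot]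
      rw [← zpow_one_add₀ (hx j), Fin.val_succ, Fin.val_castSucc]
      push_cast
      ring_nf
  have hprod : ∏ j, x j ≠ 0 := Finset.prod_ne_zero_iff.2 fun j _ => hx j
  have hv : ∏ i, v i = (-1) ^ K * z * ∏ j, x j := by simp [v, Fin.prod_univ_succ]
  have hsq : ((-1 : F) ^ K) * (-1) ^ K = 1 := by rw [← mul_pow]; simp
  rw [hv] at hrows
  refine mul_left_cancel₀ hprod (hrows.trans ?_)
  linear_combination z * (∏ j, x j) * alternant x Q * hsq

end Pieri

/-! ### Partitions in a box as configurations -/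

section Transpose

variable {r : ℕ} {μ : Fin r → ℕ}

theorem padded_of_le (μ : Fin r → ℕ) {t : ℕ} (ht : r ≤ t) : padded μ t = 0 :=
  dif_neg ht.not_gt

theorem padded_val (μ : Fin r → ℕ) (i : Fin r) : padded μ i = μ i := dif_pos i.is_lt

theorem antitone_padded (hμ : Antitone μ) : Antitone (padded μ) := by
  intro s t hst
  rcases lt_or_ge t r with ht | ht
  · exact (padded_val μ ⟨t, ht⟩).trans_le
      ((hμ (Fin.mk_le_mk.2 hst)).trans_eq (padded_val μ ⟨s, hst.trans_lt ht⟩).symm)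
  · exact (padded_of_le μ ht).trans_le (Nat.zero_le _)

theorem antitone_transpGen (μ : Fin r → ℕ) (c : ℕ) : Antitone (transpGen μ c) := fun _ _ hij =>
  Finset.card_le_card (Finset.monotone_filter_right _ fun _ _ h =>
    (Nat.succ_le_succ (Fin.le_def.1 hij)).trans h)

theorem transpGen_le (μ : Fin r → ℕ) (c : ℕ) (j : Fin c) : transpGen μ c j ≤ r :=
  (Finset.card_le_univ _).trans_eq (Fintype.card_fin r)

theorem succ_le_transpGen_iff (hμ : Antitone μ) {c : ℕ} (i : Fin r) (j : Fin c) :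
    (i : ℕ) + 1 ≤ transpGen μ c j ↔ (j : ℕ) + 1 ≤ μ i := by
  constructor
  · contrapose!
    intro hi
    have hsub : (Finset.univ.filter fun a => (j : ℕ) + 1 ≤ μ a) ⊆ Finset.Iio i := by
      intro a ha
      rw [Finset.mem_Iio]
      by_contra! hia
      exact ((Finset.mem_filter.1 ha).2.trans (hμ hia)).not_gt hi
    exact Nat.lt_succ_of_le ((Finset.card_le_card hsub).trans_eq (Fin.card_Iio i))
  · intro hi
    have hsub : Finset.Iic i ⊆ Finset.univ.filter fun a => (j : ℕ) + 1 ≤ μ a := fun a ha =>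
      Finset.mem_filter.2 ⟨Finset.mem_univ a, hi.trans (hμ (Finset.mem_Iic.1 ha))⟩
    exact (Fin.card_Iic i).symm.trans_le (Finset.card_le_card hsub)

theorem card_filter_succ_le_transpGen (hμ : Antitone μ) {c : ℕ} (hc : ∀ i, μ i ≤ c) (t : ℕ) :
    (Finset.univ.filter fun j : Fin c => t + 1 ≤ transpGen μ c j).card = padded μ t := by
  rcases lt_or_ge t r with ht | ht
  · lift t to Fin r using ht
    simp only [succ_le_transpGen_iff hμ, Nat.succ_le_iff, padded_val, Fin.card_filter_val_lt]
    exact min_eq_right (hc t)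
  · rw [padded_of_le μ ht, Finset.card_eq_zero, Finset.filter_eq_empty_iff]
    exact fun j _ hj => (hj.trans (transpGen_le μ c j)).not_gt (Nat.lt_succ_of_le ht)

theorem transpGen_transpGen (hμ : Antitone μ) {c : ℕ} (hc : ∀ i, μ i ≤ c) :
    transpGen (transpGen μ c) r = μ :=
  funext fun i => (card_filter_succ_le_transpGen hμ hc i).trans (padded_val μ i)

end Transpose

section ZModSum

variable {n : ℕ}

theorem intCast_zmod_inj_of_abs_sub_lt {a b : ℤ} (h : |a - b| < n) (hab : (a : ZMod n) = b) :
    a = b := by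
  rw [eq_comm, ZMod.intCast_eq_intCast_iff_dvd_sub] at hab
  exact sub_eq_zero.1 (Int.eq_zero_of_abs_lt_dvd hab h)

variable [NeZero n]

theorem exists_lt_natCast_succ_eq (c : ZMod n) : ∃ t < n, ((t + 1 : ℕ) : ZMod n) = c :=
  ⟨(c - 1).val, ZMod.val_lt _, by simp⟩

theorem sum_zmod_eq_sum_range {M : Type*} [AddCommMonoid M] (m : ZMod n → M) :
    ∑ c, m c = ∑ t ∈ Finset.range n, m ((t + 1 : ℕ) : ZMod n) := by
  symm
  refine Finset.sum_bij' (fun t _ => ((t + 1 : ℕ) : ZMod n)) (fun c _ => (c - 1).val)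
    (fun _ _ => Finset.mem_univ _) (fun _ _ => Finset.mem_range.2 (ZMod.val_lt _))
    (fun t ht => ?_) (fun c _ => by simp) fun _ _ => rfl
  simp [ZMod.val_cast_of_lt (Finset.mem_range.1 ht)]

end ZModSum

section LamHat

variable {n k : ℕ}

theorem antitone_padded_partVal {r c : ℕ} (σ : PartBox r c) : Antitone (padded (partVal σ)) :=
  antitone_padded σ.2

theorem padded_partVal_le {r c : ℕ} (σ : PartBox r c) (t : ℕ) : padded (partVal σ) t ≤ c := by
  rw [padded]
  split_ifs with h
  exacts [Nat.lt_succ_iff.1 (σ.1 _).2, Nat.zero_le c]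

theorem antitone_lamHat (σ : PartBox (n - 1) k) : Antitone (lamHat n k σ) := fun _ _ hij =>
  Nat.add_le_add_right (antitone_padded_partVal σ hij) _

theorem padded_lamHat (σ : PartBox (n - 1) k) {t : ℕ} (ht : t < n) :
    padded (lamHat n k σ) t = padded (partVal σ) t + (k - padded (partVal σ) 0) :=
  dif_pos ht

variable [NeZero n]

theorem lamHat_zero (σ : PartBox (n - 1) k) : lamHat n k σ 0 = k :=
  Nat.add_sub_of_le (padded_partVal_le σ 0)

theorem lamHat_le (σ : PartBox (n - 1) k) (i : Fin n) : lamHat n k σ i ≤ k :=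
  (antitone_lamHat σ (Fin.zero_le i)).trans_eq (lamHat_zero σ)

theorem lamHat_injective : Function.Injective (lamHat n k) := by
  have hpart (σ : PartBox (n - 1) k) (i : Fin (n - 1)) :
      partVal σ i = lamHat n k σ ⟨i, by omega⟩ -
        lamHat n k σ ⟨n - 1, Nat.sub_one_lt (NeZero.ne n)⟩ := by
    simp only [lamHat, padded_val, padded_of_le (partVal σ) le_rfl]
    omega
  intro σ τ h
  refine Subtype.ext (funext fun i => Fin.ext ?_)
  exact (hpart σ i).trans (h ▸ (hpart τ i).symm)

theorem exists_lamHat_eq {ν : Fin n → ℕ} (hν : Antitone ν) (h0 : ν 0 = k) :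
    ∃ σ, lamHat n k σ = ν := by
  have hn := NeZero.pos n
  let last : Fin n := ⟨n - 1, by omega⟩
  have hlast (i : Fin n) : ν last ≤ ν i := hν (Fin.mk_le_mk.2 (by omega))
  have hle (i : Fin n) : ν i ≤ k := (hν (Fin.zero_le i)).trans_eq h0
  let σ : PartBox (n - 1) k :=
    ⟨fun i => ⟨ν ⟨i, by omega⟩ - ν last, by have := hle ⟨i, by omega⟩; omega⟩,
      fun i j hij => Nat.sub_le_sub_right (hν hij) _⟩
  have hpadded (i : Fin n) : padded (partVal σ) i = ν i - ν last := by
    rcases lt_or_ge (i : ℕ) (n - 1) with hi | hi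
    · exact padded_val (partVal σ) ⟨i, hi⟩
    · rw [padded_of_le _ hi, show i = last from Fin.ext (by simp only [last]; omega), Nat.sub_self]
  refine ⟨σ, funext fun i => ?_⟩
  have h0' := hpadded 0
  rw [Fin.val_zero] at h0'
  rw [lamHat, hpadded, h0', h0]
  have := hlast i
  have := hle last
  omega

theorem cfgOf_natCast_succ (σ : PartBox (n - 1) k) {t : ℕ} (ht : t < n) :
    cfgOf n k σ ((t + 1 : ℕ) : ZMod n) =
      padded (lamHat n k σ) t - padded (lamHat n k σ) (t + 1) := by
  rw [cfgOf, padded_lamHat σ ht]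
  rcases (Nat.succ_le_of_lt ht).eq_or_lt with rfl | ht'
  · simp [padded_of_le]
  · rw [ZMod.val_cast_of_lt ht', if_neg t.succ_ne_zero, padded_lamHat σ ht', Nat.succ_sub_one,
      Nat.add_sub_add_right]

end LamHat

section Config

variable (n k : ℕ)

/-- The configuration of a partition as an integer-valued function, so that particles can be moved
without truncated subtraction. -/
def config (σ : PartBox (n - 1) k) : ZMod n → ℤ := fun c => cfgOf n k σ c

variable {n k} [NeZero n]

theorem config_natCast_succ (σ : PartBox (n - 1) k) {t : ℕ} (ht : t < n) :
    config n k σ ((t + 1 : ℕ) : ZMod n) =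
      padded (lamHat n k σ) t - padded (lamHat n k σ) (t + 1) := by
  rw [config, cfgOf_natCast_succ σ ht,
    Nat.cast_sub (antitone_padded (antitone_lamHat σ) t.le_succ)]

theorem sum_Ico_config (σ : PartBox (n - 1) k) {t : ℕ} (ht : t ≤ n) :
    ∑ s ∈ Finset.Ico t n, config n k σ ((s + 1 : ℕ) : ZMod n) = padded (lamHat n k σ) t := by
  rw [Finset.sum_congr rfl fun s hs => config_natCast_succ σ (Finset.mem_Ico.1 hs).2,
    ← neg_inj, ← Finset.sum_neg_distrib]
  simp only [neg_sub]
  rw [Finset.sum_Ico_sub (fun s => (padded (lamHat n k σ) s : ℤ)) ht, padded_of_le _ le_rfl]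
  simp

theorem config_injective : Function.Injective (config n k) := by
  refine fun σ τ h => lamHat_injective (funext fun i => ?_)
  have hi := sum_Ico_config σ i.is_lt.le
  rw [h, sum_Ico_config τ i.is_lt.le, padded_val, padded_val] at hi
  exact_mod_cast hi.symm

theorem mem_range_config {m : ZMod n → ℤ} : m ∈ Set.range (config n k) ↔ 0 ≤ m ∧ ∑ c, m c = k := by
  constructor
  · rintro ⟨σ, rfl⟩
    refine ⟨fun c => Nat.cast_nonneg _, ?_⟩
    rw [sum_zmod_eq_sum_range, Finset.range_eq_Ico, sum_Ico_config σ (Nat.zero_le n)]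
    exact congrArg Nat.cast ((padded_val _ 0).trans (lamHat_zero σ))
  · rintro ⟨hm, hk⟩
    lift m to ZMod n → ℕ using hm
    let tail (t : ℕ) : ℕ := ∑ s ∈ Finset.Ico t n, m ((s + 1 : ℕ) : ZMod n)
    have htail : Antitone tail := fun s t hst =>
      Finset.sum_le_sum_of_subset (Finset.Ico_subset_Ico_left hst)
    have htail_zero : tail 0 = k := by
      rw [← Nat.cast_inj (R := ℤ), ← hk, sum_zmod_eq_sum_range, Finset.range_eq_Ico]
      exact Nat.cast_sum _ _
    obtain ⟨σ, hσ⟩ := exists_lamHat_eq (n := n) (ν := fun i => tail i)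
      (fun i j hij => htail hij) htail_zero
    have hpadded (t : ℕ) : padded (lamHat n k σ) t = tail t := by
      rw [hσ, padded]
      split_ifs with ht
      · rfl
      · simp [tail, not_lt.1 ht]
    refine ⟨σ, funext fun c => ?_⟩
    obtain ⟨t, ht, rfl⟩ := exists_lt_natCast_succ_eq c
    rw [config_natCast_succ σ ht, hpadded, hpadded]
    simp only [tail]
    rw [Finset.sum_eq_sum_Ico_succ_bot ht]
    simp

end Config

section Occupation

/-- The number of entries of `Q` in each residue class modulo `n`. -/
def occupation (n : ℕ) {k : ℕ} (Q : Fin k → ℤ) : ZMod n → ℤ := ∑ i, Pi.single (Q i : ZMod n) 1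

/-- The positions in `{1, …, n}` of the particles of a configuration, in weakly increasing order;
site `0` is represented by `n`. -/
def positions (n k : ℕ) (σ : PartBox (n - 1) k) (i : Fin k) : ℤ := transpGen (lamHat n k σ) k i.rev

theorem occupation_cyclicPred {n K : ℕ} (Q : Fin (K + 1) → ℤ) :
    occupation n (cyclicPred n Q) = occupation n Q := by
  rw [occupation, occupation, Fin.sum_univ_succ, Fin.sum_univ_castSucc]
  simp [cyclicPred_zero, cyclicPred_succ, add_comm]

variable {n k : ℕ}

theorem monotone_positions (σ : PartBox (n - 1) k) : Monotone (positions n k σ) := fun _ _ hij =>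
  Nat.cast_le.2 (antitone_transpGen _ _ (Fin.rev_le_rev.2 hij))

variable [NeZero n]

theorem positions_mem_Icc (σ : PartBox (n - 1) k) (i : Fin k) :
    positions n k σ i ∈ Set.Icc 1 (n : ℤ) := by
  refine ⟨?_, Nat.cast_le.2 (transpGen_le _ _ _)⟩
  have h := (succ_le_transpGen_iff (antitone_lamHat σ) 0 i.rev).2
    (i.rev.is_lt.trans_eq (lamHat_zero σ).symm)
  rw [Fin.val_zero] at h
  exact Nat.one_le_cast.2 h

theorem exists_positions_eq {Q : Fin k → ℤ} (hQ : Monotone Q)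
    (hmem : ∀ i, Q i ∈ Set.Icc 1 (n : ℤ)) : ∃ σ, positions n k σ = Q := by
  lift Q to Fin k → ℕ using fun i => zero_le_one.trans (hmem i).1
  let μ : Fin k → ℕ := fun i => Q i.rev
  have hμ : Antitone μ := fun i j hij => Nat.cast_le.1 (hQ (Fin.rev_le_rev.2 hij))
  have hμn (i : Fin k) : μ i ≤ n := Nat.cast_le.1 (hmem i.rev).2
  have hzero : transpGen μ n 0 = k := by
    rw [transpGen, Finset.filter_true_of_mem fun i _ => ?_, Finset.card_fin]
    rw [Fin.val_zero]
    exact Nat.one_le_cast.1 (hmem i.rev).1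
  obtain ⟨σ, hσ⟩ := exists_lamHat_eq (antitone_transpGen μ n) hzero
  refine ⟨σ, funext fun i => ?_⟩
  rw [positions, hσ, transpGen_transpGen hμ hμn]
  simp [μ]

theorem config_eq_occupation_positions (σ : PartBox (n - 1) k) :
    config n k σ = occupation n (positions n k σ) := by
  funext c
  obtain ⟨t, ht, rfl⟩ := exists_lt_natCast_succ_eq c
  have hsite (i : Fin k) : (Pi.single (positions n k σ i : ZMod n) 1 : ZMod n → ℤ)
      ((t + 1 : ℕ) : ZMod n) = (if t + 1 ≤ transpGen (lamHat n k σ) k i.rev then 1 else 0) -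
        if t + 1 + 1 ≤ transpGen (lamHat n k σ) k i.rev then 1 else 0 := by
    have hi := positions_mem_Icc σ i
    have heq : ((t + 1 : ℕ) : ZMod n) = positions n k σ i ↔ (t + 1 : ℤ) = positions n k σ i := by
      refine ⟨fun h => intCast_zmod_inj_of_abs_sub_lt ?_ (by exact_mod_cast h),
        fun h => by rw [← h]; norm_cast⟩
      have := hi.1
      have := hi.2
      rw [abs_lt]
      omega
    rw [Pi.single_apply]
    simp only [heq]
    rw [positions]
    split_ifs <;> omega
  have hcount (s : ℕ) :
      ∑ i : Fin k, (if s + 1 ≤ transpGen (lamHat n k σ) k i.rev then 1 else 0 : ℤ) =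
        padded (lamHat n k σ) s := by
    refine (Equiv.sum_comp Fin.revPerm fun i =>
      if s + 1 ≤ transpGen (lamHat n k σ) k i then (1 : ℤ) else 0).trans ?_
    rw [Finset.sum_boole, card_filter_succ_le_transpGen (antitone_lamHat σ) (lamHat_le σ)]
  rw [config_natCast_succ σ ht, occupation, Finset.sum_apply,
    Finset.sum_congr rfl fun i _ => hsite i, Finset.sum_sub_distrib, hcount, hcount]

end Occupation

/-! ### Hopping operators acting on amplitudes -/

section Hopping

variable {R : Type*} [CommRing R] {n k : ℕ}

/-- The coefficients of a vector as a function of the configuration, extended by zero to all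
integer-valued functions on the circle. -/
def amplitude (f : HkSp R n k) : (ZMod n → ℤ) →₀ R := f.mapDomain (config n k)

/-- The change of configuration undone by a particle hopping from site `i` to site `i + 1`. -/
def hopShift (i : ZMod n) : ZMod n → ℤ := Pi.single i 1 - Pi.single (i + 1) 1

/-- The factor `c_i` of the hopping operator `a_i`. -/
def hopWeight (z : R) (i : ZMod n) : R := if i = 0 then z else 1

variable [NeZero n]

theorem amplitude_config (f : HkSp R n k) (σ : PartBox (n - 1) k) :
    amplitude f (config n k σ) = f σ :=
  Finsupp.mapDomain_apply config_injective f σ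

theorem amplitude_of_neg (f : HkSp R n k) {m : ZMod n → ℤ} {c : ZMod n} (hc : m c < 0) :
    amplitude f m = 0 :=
  Finsupp.mapDomain_of_notMem_range f m fun hm => hc.not_ge ((mem_range_config.1 hm).1 c)

theorem sum_hopShift (i : ZMod n) : ∑ c, hopShift i c = 0 := by
  simp [hopShift]

theorem toBasis_apply (m : ZMod n → ℕ) (r : R) (μ : PartBox (n - 1) k) :
    toBasis R n k m r μ = if cfgOf n k μ = m then r else 0 := by
  rw [toBasis, Finsupp.finsetSum_apply, Finset.sum_eq_single_of_mem μ (Finset.mem_univ μ)]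
  · split_ifs <;> simp
  · intro σ _ hσ
    split_ifs <;> simp [hσ]

theorem move_particle_iff {ι : Type*} [DecidableEq ι] {i j : ι} (hij : i ≠ j) (a b : ι → ℕ) :
    (a i ≠ 0 ∧ b = fun c => a c - (Pi.single i 1 : ι → ℕ) c + (Pi.single j 1 : ι → ℕ) c) ↔
      (fun c => (a c : ℤ)) = (fun c => (b c : ℤ)) + (Pi.single i 1 - Pi.single j 1) := by
  simp only [funext_iff, Pi.add_apply, Pi.sub_apply, Pi.single_apply]
  constructor
  · rintro ⟨ha, h⟩ c
    grind
  · intro h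
    exact ⟨fun ha => by grind, fun c => by grind⟩

variable [Nontrivial (ZMod n)]

theorem aOp_apply (z : R) (i : ZMod n) (f : HkSp R n k) (μ : PartBox (n - 1) k) :
    aOp R n k z i f μ = hopWeight z i * amplitude f (config n k μ + hopShift i) := by
  induction f using Finsupp.induction_linear with
  | zero => simp [amplitude]
  | add f g hf hg =>
    rw [map_add, Finsupp.add_apply, hf, hg, ← mul_add, amplitude, amplitude, amplitude,
      Finsupp.mapDomain_add, Finsupp.add_apply]
  | single σ r =>
    have hmove : _ ↔ config n k σ = config n k μ + hopShift i :=
      move_particle_iff (left_ne_add.2 one_ne_zero) (cfgOf n k σ) (cfgOf n k μ)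
    rw [amplitude, Finsupp.mapDomain_single, Finsupp.single_apply, ← if_congr hmove rfl rfl,
      ite_and, aOp, Finsupp.lift_apply, Finsupp.sum_single_index (by exact zero_smul R _),
      Finsupp.smul_apply, smul_eq_mul, hopWeight, mul_comm, ite_not]
    by_cases hi : cfgOf n k σ i = 0
    · simp [hi]
    · simp only [hi, if_false, toBasis_apply]
      split_ifs <;> simp

theorem list_prod_aOp_apply (z : R) (f : HkSp R n k) {L : List (ZMod n)} (hnodup : L.Nodup)
    (hdesc : L.Pairwise fun i j => j ≠ i + 1) (μ : PartBox (n - 1) k) :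
    (L.map (aOp R n k z)).prod f μ =
      (L.map (hopWeight z)).prod * amplitude f (config n k μ + (L.map hopShift).sum) := by
  induction L generalizing μ with
  | nil => simp [amplitude_config]
  | cons i L ih =>
    obtain ⟨hiL, hnodup⟩ := List.nodup_cons.1 hnodup
    obtain ⟨hisucc, hdesc⟩ := List.pairwise_cons.1 hdesc
    simp only [List.map_cons, List.prod_cons, List.sum_cons, Module.End.mul_apply]
    rw [aOp_apply, mul_assoc, ← add_assoc]
    congr 1
    rcases lt_or_ge ((config n k μ + hopShift i) (i + 1)) 0 with hneg | hnonneg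
    · have hsum : (L.map hopShift).sum (i + 1) = 0 := by
        refine (map_list_sum (Pi.evalAddMonoidHom (fun _ => ℤ) (i + 1)) _).trans ?_
        rw [List.map_map]
        refine List.sum_eq_zero fun a ha => ?_
        obtain ⟨j, hj, rfl⟩ := List.mem_map.1 ha
        have hij : i ≠ j := fun h => hiL (h ▸ hj)
        simp [hopShift, hij, (hisucc j hj).symm]
      rw [amplitude_of_neg _ hneg, amplitude_of_neg f (c := i + 1), mul_zero]
      rwa [Pi.add_apply, hsum, add_zero]
    · have hμ := mem_range_config.1 ⟨μ, rfl⟩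
      have hvalid : 0 ≤ config n k μ + hopShift i := by
        intro c
        obtain rfl | hc := eq_or_ne c (i + 1)
        · exact hnonneg
        · simp only [Pi.add_apply, hopShift, Pi.sub_apply, Pi.single_eq_of_ne hc, sub_zero]
          have hsingle : (0 : ZMod n → ℤ) ≤ Pi.single i 1 := Pi.single_nonneg.2 zero_le_one
          exact add_nonneg (hμ.1 c) (hsingle c)
      obtain ⟨ν, hν⟩ := (mem_range_config (k := k)).2 ⟨hvalid, by
        simp only [Pi.add_apply, Finset.sum_add_distrib, sum_hopShift, add_zero, hμ.2]⟩
      rw [← hν, amplitude_config, ih hnodup hdesc]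

end Hopping

section CyclicProduct

variable {n : ℕ}

/-- All sites of the circle in descending order, starting just behind `g`. -/
def descendingSites (g : ZMod n) : List (ZMod n) :=
  (List.range n).map fun t : ℕ => g - 1 - (t : ZMod n)

theorem nodup_descendingSites (g : ZMod n) : (descendingSites g).Nodup := by
  refine List.Nodup.map_on (fun s hs t ht hst => ?_) List.nodup_range
  have hval := congrArg ZMod.val (sub_right_injective hst)
  rwa [ZMod.val_cast_of_lt (List.mem_range.1 hs), ZMod.val_cast_of_lt (List.mem_range.1 ht)]
    at hval

theorem pairwise_descendingSites (g : ZMod n) :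
    (descendingSites g).Pairwise fun i j => j = i + 1 → j = g := by
  rw [descendingSites, List.pairwise_map]
  refine List.pairwise_lt_range.imp_of_mem fun {s t} _ ht hst hsucc => ?_
  have hle : t + 1 ≤ n := List.mem_range.1 ht
  have hdvd : n ∣ t + 1 - s := by
    rw [← ZMod.natCast_eq_zero_iff, Nat.cast_sub (by omega)]
    push_cast
    linear_combination -hsucc
  obtain rfl : s = 0 := by
    have := Nat.le_of_dvd (by omega) hdvd
    omega
  rw [hsucc]
  simp

variable [NeZero n]

theorem mem_descendingSites (g c : ZMod n) : c ∈ descendingSites g :=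
  List.mem_map.2 ⟨(g - 1 - c).val, List.mem_range.2 (ZMod.val_lt _), by simp⟩

theorem zgap_notMem {I : Finset (ZMod n)} (hI : I ≠ Finset.univ) : zgap I ∉ I := by
  have hne : ((Finset.univ \ I).image ZMod.val).Nonempty := by
    rw [Finset.image_nonempty, Finset.sdiff_nonempty]
    exact fun h => hI (Finset.univ_subset_iff.1 h)
  rw [zgap, dif_pos hne]
  obtain ⟨c, hc, hval⟩ := Finset.mem_image.1 (Finset.min'_mem _ hne)
  rw [← hval, ZMod.natCast_zmod_val]
  exact (Finset.mem_sdiff.1 hc).2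

theorem cycProdDesc_eq_prod_filter {A : Type*} [Monoid A] (a : ZMod n → A)
    (I : Finset (ZMod n)) :
    cycProdDesc a I = (((descendingSites (zgap I)).filter (· ∈ I)).map a).prod := by
  have hfilter (L : List (ZMod n)) :
      (L.map fun i => if i ∈ I then a i else 1).prod = ((L.filter (· ∈ I)).map a).prod := by
    induction L with
    | nil => rfl
    | cons i L ih => by_cases hi : i ∈ I <;> simp [hi, ih]
  rw [← hfilter, cycProdDesc, descendingSites]
  -- In `cycProdDesc` the list of indices is coerced to `List (ZMod n)` through the list monad.
  simp only [List.pure_def, List.bind_eq_flatMap, ← List.map_eq_flatMap, List.map_map,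
    Function.comp_def]

variable {R : Type*} [CommRing R] {k : ℕ} [Nontrivial (ZMod n)]

theorem cycProdDesc_aOp_apply (z : R) (f : HkSp R n k) {I : Finset (ZMod n)}
    (hI : I ≠ Finset.univ) (μ : PartBox (n - 1) k) :
    cycProdDesc (aOp R n k z) I f μ =
      (∏ i ∈ I, hopWeight z i) * amplitude f (config n k μ + ∑ i ∈ I, hopShift i) := by
  let L := (descendingSites (zgap I)).filter (· ∈ I)
  have hnodup : L.Nodup := (nodup_descendingSites _).filter _
  have hL : L.toFinset = I := by
    ext c
    simp [L, mem_descendingSites]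
  have hdesc : L.Pairwise fun i j => j ≠ i + 1 := by
    refine ((pairwise_descendingSites (zgap I)).filter _).imp_of_mem fun {i j} _ hj hij hsucc => ?_
    refine zgap_notMem hI (hij hsucc ▸ ?_)
    rw [← hL]
    exact List.mem_toFinset.2 hj
  rw [cycProdDesc_eq_prod_filter, list_prod_aOp_apply z f hnodup hdesc,
    ← List.prod_toFinset _ hnodup, ← List.sum_toFinset _ hnodup, hL]

theorem eAInt_natCast_apply (z : R) (r : ℕ) (f : HkSp R n k) (μ : PartBox (n - 1) k) :
    eAInt R n k z r f μ = ∑ I ∈ Finset.univ.powersetCard r,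
      (∏ i ∈ I, hopWeight z i) * amplitude f (config n k μ + ∑ i ∈ I, hopShift i) := by
  rw [eAInt]
  split_ifs with h0 hr hn
  · obtain rfl : r = 0 := Nat.cast_eq_zero.1 h0
    simp [amplitude_config]
  · rw [Int.toNat_natCast, LinearMap.sum_apply, Finsupp.finsetSum_apply]
    refine Finset.sum_congr rfl fun I hI => cycProdDesc_aOp_apply z f ?_ μ
    rintro rfl
    rw [Finset.mem_powersetCard_univ, Finset.card_univ, ZMod.card] at hI
    omega
  · obtain rfl : r = n := Nat.cast_injective hn
    have hshift : ∑ i : ZMod r, hopShift i = 0 := by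
      simp only [hopShift, Finset.sum_sub_distrib]
      exact sub_eq_zero.2 (Equiv.sum_comp (Equiv.addRight 1)
        fun i : ZMod r => (Pi.single i 1 : ZMod r → ℤ)).symm
    have hweight : ∏ i : ZMod r, hopWeight z i = z := by simp [hopWeight]
    have huniv : Finset.powersetCard r (Finset.univ : Finset (ZMod r)) = {Finset.univ} := by
      simpa using Finset.powersetCard_self (Finset.univ : Finset (ZMod r))
    rw [huniv, Finset.sum_singleton, hshift, hweight, add_zero, amplitude_config]
    rfl
  · rw [Finset.powersetCard_eq_empty.2, Finset.sum_empty]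
    · rfl
    · rw [Finset.card_univ, ZMod.card]
      omega

end CyclicProduct

/-! ### Sets of hops on a cylindric sequence -/

section HopSet

variable {K : ℕ} (n : ℕ) (P : Fin (K + 1) → ℤ) (α : Fin (K + 1) → ℕ)

/-- The site reached from that of the `i`-th particle by `s + 1` steps backwards. -/
def hopSite (i : Fin (K + 1)) (s : ℕ) : ZMod n := (P i - 1 - s : ℤ)

/-- The sites passed when the `i`-th particle takes `α i` steps backwards, for every `i`. -/
def hopSet : Finset (ZMod n) :=
  (Finset.univ.sigma fun i => Finset.range (α i)).image fun t => hopSite n P t.1 t.2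

variable {n P α}

theorem mem_hopSet {c : ZMod n} : c ∈ hopSet n P α ↔ ∃ i, ∃ s < α i, hopSite n P i s = c := by
  simp [hopSet]

theorem hopShift_hopSite (i : Fin (K + 1)) (s : ℕ) :
    hopShift (hopSite n P i s) =
      Pi.single ((P i - (s + 1 : ℕ) : ℤ) : ZMod n) 1 - Pi.single ((P i - s : ℤ) : ZMod n) 1 := by
  rw [hopShift, hopSite]
  congr 2 <;> push_cast <;> ring

/-- A hop across a pair of sites `c, c + 1` with `c + 1` empty must be preceded by a hop that fills
`c + 1`. -/
theorem add_one_mem_of_nonneg {I : Finset (ZMod n)} {m : ZMod n → ℤ}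
    (hI : 0 ≤ m + ∑ c ∈ I, hopShift c) {c : ZMod n} (hc : c ∈ I) (hm : m (c + 1) = 0) :
    c + 1 ∈ I := by
  by_contra hnot
  have hval := hI (c + 1)
  rw [Pi.add_apply, hm, zero_add, Finset.sum_apply, Pi.zero_apply] at hval
  simp [hopShift, Pi.single_apply, Finset.sum_sub_distrib, hnot, hc] at hval

namespace IsCylindric

theorem le_cyclicPred (hP : IsCylindric n P) {i j : Fin (K + 1)} (hij : i < j) :
    P i ≤ cyclicPred n P j := by
  cases j using Fin.cases with
  | zero => exact absurd hij (Fin.not_lt_zero i)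
  | succ j => exact (isCylindric_iff.1 hP).1 (Fin.le_castSucc_iff.2 hij)

theorem last_sub_le_cyclicPred (hP : IsCylindric n P) (i : Fin (K + 1)) :
    P (Fin.last K) - n ≤ cyclicPred n P i := by
  cases i using Fin.cases with
  | zero => exact le_rfl
  | succ i =>
    obtain ⟨hmono, hlast⟩ := isCylindric_iff.1 hP
    exact hlast.trans (hmono (Fin.zero_le _))

theorem hopSite_inj (hP : IsCylindric n P) {i j : Fin (K + 1)} {s t : ℕ} (hs : s < gap n P i)
    (ht : t < gap n P j) (h : hopSite n P i s = hopSite n P j t) : i = j ∧ s = t := by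
  have hmono := (isCylindric_iff.1 hP).1
  have hi := hP.cast_gap i
  have hj := hP.cast_gap j
  have hpos : P i - 1 - s = P j - 1 - t := by
    refine intCast_zmod_inj_of_abs_sub_lt (abs_lt.2 ?_) h
    have := hP.last_sub_le_cyclicPred i
    have := hP.last_sub_le_cyclicPred j
    have := hmono (Fin.le_last i)
    have := hmono (Fin.le_last j)
    omega
  rcases lt_trichotomy i j with hij | rfl | hij
  · have := hP.le_cyclicPred hij
    omega
  · exact ⟨rfl, by omega⟩
  · have := hP.le_cyclicPred hij
    omega

theorem injOn_hopSite (hP : IsCylindric n P) (hα : α ≤ gap n P) :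
    Set.InjOn (fun t : (_ : Fin (K + 1)) × ℕ => hopSite n P t.1 t.2)
      (Finset.univ.sigma fun i => Finset.range (α i) : Finset ((_ : Fin (K + 1)) × ℕ)) := by
  rintro ⟨i, s⟩ hs ⟨j, t⟩ ht h
  simp only [Finset.coe_sigma, Set.mem_sigma_iff, Finset.coe_range, Set.mem_Iio] at hs ht
  obtain ⟨rfl, rfl⟩ := hP.hopSite_inj (hs.2.trans_le (hα i)) (ht.2.trans_le (hα j)) h
  rfl

theorem card_hopSet (hP : IsCylindric n P) (hα : α ≤ gap n P) :
    (hopSet n P α).card = ∑ i, α i := by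
  simp [hopSet, Finset.card_image_of_injOn (hP.injOn_hopSite hα)]

theorem hopSite_mem_hopSet_iff (hP : IsCylindric n P) (hα : α ≤ gap n P) {i : Fin (K + 1)} {s : ℕ}
    (hs : s < gap n P i) : hopSite n P i s ∈ hopSet n P α ↔ s < α i := by
  rw [mem_hopSet]
  constructor
  · rintro ⟨j, t, ht, h⟩
    obtain ⟨rfl, rfl⟩ := hP.hopSite_inj (ht.trans_le (hα j)) hs h
    exact ht
  · exact fun hs => ⟨i, s, hs, rfl⟩

theorem injOn_hopSet (hP : IsCylindric n P) : Set.InjOn (hopSet n P) (Set.Iic (gap n P)) := by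
  have hle {α β : Fin (K + 1) → ℕ} (hα : α ≤ gap n P) (hβ : β ≤ gap n P)
      (h : hopSet n P α = hopSet n P β) : α ≤ β := fun i => by
    by_contra! hlt
    have hi := hlt.trans_le (hα i)
    exact lt_irrefl _ ((hP.hopSite_mem_hopSet_iff hβ hi).1
      (h ▸ (hP.hopSite_mem_hopSet_iff hα hi).2 hlt))
  exact fun α hα β hβ h => (hle hα hβ h).antisymm (hle hβ hα h.symm)

theorem occupation_add_sum_hopShift (hP : IsCylindric n P) (hα : α ≤ gap n P) :
    occupation n P + ∑ c ∈ hopSet n P α, hopShift c = occupation n fun i => P i - α i := by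
  rw [hopSet, Finset.sum_image (hP.injOn_hopSite hα), Finset.sum_sigma, occupation, occupation,
    ← Finset.sum_add_distrib]
  refine Finset.sum_congr rfl fun i _ => ?_
  simp only [hopShift_hopSite]
  rw [Finset.sum_range_sub fun s : ℕ => (Pi.single ((P i - s : ℤ) : ZMod n) 1 : ZMod n → ℤ)]
  simp

theorem zero_mem_hopSet_iff (hP : IsCylindric n P) (hα : α ≤ gap n P) (hfirst : 1 ≤ P 0)
    (hlast : P (Fin.last K) ≤ n) : 0 ∈ hopSet n P α ↔ P 0 ≤ α 0 := by
  rw [mem_hopSet]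
  constructor
  · rintro ⟨i, s, hs, h⟩
    have hmono := (isCylindric_iff.1 hP).1
    have hgap := hP.cast_gap i
    have hsgap := hs.trans_le (hα i)
    have hpos : P i - 1 - s = 0 := by
      refine intCast_zmod_inj_of_abs_sub_lt (abs_lt.2 ?_) (h.trans Int.cast_zero.symm)
      have := hP.last_sub_le_cyclicPred i
      have := hmono (Fin.le_last i)
      have := hmono (Fin.zero_le (Fin.last K))
      omega
    rcases (Fin.zero_le i).eq_or_lt with rfl | hi
    · omega
    · have := hP.le_cyclicPred hi
      omega
  · intro h
    refine ⟨0, (P 0 - 1).toNat, by omega, ?_⟩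
    rw [hopSite, Int.toNat_of_nonneg (by omega), sub_self, Int.cast_zero]

theorem occupation_hopSite (hP : IsCylindric n P) {i : Fin (K + 1)} {s : ℕ}
    (hs : s + 1 < gap n P i) : occupation n P (hopSite n P i s) = 0 := by
  obtain ⟨hmono, hcyc⟩ := isCylindric_iff.1 hP
  have hgap := hP.cast_gap i
  rw [occupation, Finset.sum_apply]
  refine Finset.sum_eq_zero fun j _ => Pi.single_eq_of_ne (fun h => ?_) _
  have hpos : P i - 1 - s = P j := by
    refine intCast_zmod_inj_of_abs_sub_lt (abs_lt.2 ?_) h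
    have := hP.last_sub_le_cyclicPred i
    have := hmono (Fin.le_last i)
    have := hmono (Fin.le_last j)
    have := hmono (Fin.zero_le j)
    omega
  rcases lt_or_ge j i with hji | hij
  · have := hP.le_cyclicPred hji
    omega
  · have := hmono hij
    omega

variable [NeZero n]

theorem hopSet_gap (hP : IsCylindric n P) : hopSet n P (gap n P) = Finset.univ := by
  rw [← Finset.card_eq_iff_eq_univ, hP.card_hopSet le_rfl, hP.sum_gap, ZMod.card]

theorem exists_hopSet_eq (hP : IsCylindric n P) {I : Finset (ZMod n)}
    (hI : 0 ≤ occupation n P + ∑ c ∈ I, hopShift c) : ∃ α ≤ gap n P, hopSet n P α = I := by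
  classical
  have hex (i : Fin (K + 1)) : ∃ s, s = gap n P i ∨ hopSite n P i s ∉ I := ⟨_, Or.inl rfl⟩
  have hle : (fun i => Nat.find (hex i)) ≤ gap n P := fun i => Nat.find_min' (hex i) (Or.inl rfl)
  refine ⟨_, hle, Finset.ext fun c => ?_⟩
  obtain ⟨i, s, hs, rfl⟩ := mem_hopSet.1 (hP.hopSet_gap.symm ▸ Finset.mem_univ c)
  rw [hP.hopSite_mem_hopSet_iff hle hs]
  refine ⟨fun h => not_not.1 (not_or.1 (Nat.find_min (hex i) h)).2, fun hmem => ?_⟩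
  by_contra! hfind
  have hnot (t : ℕ) (ht : Nat.find (hex i) ≤ t) : t < gap n P i → hopSite n P i t ∉ I := by
    induction t, ht using Nat.le_induction with
    | base => exact fun hlt => (Nat.find_spec (hex i)).resolve_left hlt.ne
    | succ t _ ih =>
      intro hlt hmem
      have hsucc : hopSite n P i (t + 1) + 1 = hopSite n P i t := by
        rw [hopSite, hopSite]
        push_cast
        ring
      refine ih (Nat.lt_of_succ_lt hlt) (hsucc ▸ add_one_mem_of_nonneg hI hmem ?_)
      rw [hsucc, hP.occupation_hopSite hlt]
  exact hnot s hfind hs hmem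

theorem sum_powersetCard_eq_sum_hopSet {M : Type*} [AddCommMonoid M] (hP : IsCylindric n P)
    {F : Finset (ZMod n) → M} (hF : ∀ I, ¬0 ≤ occupation n P + ∑ c ∈ I, hopShift c → F I = 0)
    (r : ℕ) :
    ∑ I ∈ Finset.univ.powersetCard r, F I =
      ∑ α ∈ Finset.Iic (gap n P) with ∑ i, α i = r, F (hopSet n P α) := by
  have hinj : Set.InjOn (hopSet n P) ((Finset.Iic (gap n P)).filter fun α => ∑ i, α i = r) :=
    hP.injOn_hopSet.mono fun α hα => Finset.mem_Iic.1 (Finset.mem_filter.1 hα).1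
  rw [← Finset.sum_image hinj]
  refine (Finset.sum_subset (fun I hI => ?_) fun I hI hnot => hF I fun hnonneg => hnot ?_).symm
  · obtain ⟨α, hα, rfl⟩ := Finset.mem_image.1 hI
    obtain ⟨hgap, hsum⟩ := Finset.mem_filter.1 hα
    rw [Finset.mem_powersetCard_univ, hP.card_hopSet (Finset.mem_Iic.1 hgap), hsum]
  · obtain ⟨α, hα, rfl⟩ := hP.exists_hopSet_eq hnonneg
    rw [Finset.mem_powersetCard_univ, hP.card_hopSet hα] at hI
    exact Finset.mem_image_of_mem _ (Finset.mem_filter.2 ⟨Finset.mem_Iic.2 hα, hI⟩)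

end IsCylindric

end HopSet

/-! ### The Bethe vector -/

section BetheVector

theorem betheVec_apply (n k : ℕ) (x : Fin k → ℂ) (σ : PartBox (n - 1) k) :
    betheVec n k x σ = schurC (fun i => (x i)⁻¹) (transpGen (lamHat n k σ) k) := by
  classical
  rw [betheVec, Finsupp.finsetSum_apply]
  simp only [Finsupp.single_apply, Finset.sum_ite_eq', Finset.mem_univ, if_true]

theorem alternant_zero_mul_amplitude_betheVec {n k : ℕ} [NeZero n] (x : Fin k → ℂ) {Q : Fin k → ℤ}
    (hQ : Monotone Q) (hmem : ∀ i, Q i ∈ Set.Icc 1 (n : ℤ)) :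
    alternant x 0 * amplitude (betheVec n k x) (occupation n Q) = alternant x Q := by
  obtain ⟨σ, rfl⟩ := exists_positions_eq hQ hmem
  rw [← config_eq_occupation_positions, amplitude_config, betheVec_apply,
    ← alternant_rev_eq_mul_schurC]
  rfl

variable {n K : ℕ} [NeZero n] {z : ℂ} {x : Fin (K + 1) → ℂ}

/-- When the first particle leaves the window `{1, …, n}` it re-enters as the last one; the weight
`z` of its hop is the factor by which the Bethe equations change the alternant. -/
theorem alternant_zero_mul_ite_mul_amplitude_betheVec (hx : ∀ j, x j ≠ 0)
    (hz : ∀ j, x j ^ (n + (K + 1)) = (-1) ^ K * z * ∏ j, x j) {P Q : Fin (K + 1) → ℤ}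
    (hmem : ∀ i, P i ∈ Set.Icc 1 (n : ℤ)) (hPQ : cyclicPred n P ≤ Q) (hQP : Q ≤ P) :
    alternant x 0 * ((if Q 0 ≤ 0 then z else 1) *
      amplitude (betheVec n (K + 1) x) (occupation n Q)) = alternant x Q := by
  split_ifs with hQ0
  · obtain ⟨Q, rfl⟩ := cyclicPred_surjective n Q
    rw [cyclicPred_le_cyclicPred_iff] at hPQ
    have hmono := (isCylindric_iff.1 (hQP.trans hPQ : IsCylindric n Q)).1
    rw [cyclicPred_zero, sub_nonpos] at hQ0
    rw [occupation_cyclicPred, alternant_cyclicPred hx hz, mul_left_comm,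
      alternant_zero_mul_amplitude_betheVec x hmono fun i =>
        ⟨(hmem i).1.trans (hPQ i), (hmono (Fin.le_last i)).trans hQ0⟩]
  · have hcyl : IsCylindric n Q := ((cyclicPred_le_cyclicPred_iff n).2 hQP).trans hPQ
    have hmono := (isCylindric_iff.1 hcyl).1
    rw [one_mul, alternant_zero_mul_amplitude_betheVec x hmono fun i =>
      ⟨(not_le.1 hQ0).trans_le (hmono (Fin.zero_le i)), (hQP i).trans (hmem i).2⟩]

theorem alternant_zero_mul_prod_hopWeight_mul_amplitude_betheVec (hx : ∀ j, x j ≠ 0)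
    (hz : ∀ j, x j ^ (n + (K + 1)) = (-1) ^ K * z * ∏ j, x j) {P : Fin (K + 1) → ℤ}
    (hP : IsCylindric n P) (hmem : ∀ i, P i ∈ Set.Icc 1 (n : ℤ)) {α : Fin (K + 1) → ℕ}
    (hα : α ≤ gap n P) :
    alternant x 0 * ((∏ c ∈ hopSet n P α, hopWeight z c) * amplitude (betheVec n (K + 1) x)
      (occupation n P + ∑ c ∈ hopSet n P α, hopShift c)) = alternant x fun i => P i - α i := by
  have hweight : ∏ c ∈ hopSet n P α, hopWeight z c = if P 0 - α 0 ≤ 0 then z else 1 := by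
    simp only [hopWeight, Finset.prod_ite_eq', sub_nonpos,
      hP.zero_mem_hopSet_iff hα (hmem 0).1 (hmem (Fin.last K)).2]
  rw [hweight, hP.occupation_add_sum_hopShift hα]
  refine alternant_zero_mul_ite_mul_amplitude_betheVec (Q := fun i => P i - α i) hx hz hmem
    (fun i => ?_) fun i => ?_
  · rw [le_sub_comm, ← hP.cast_gap]
    exact Nat.cast_le.2 (hα i)
  · exact sub_le_self _ (Nat.cast_nonneg _)

theorem eAInt_natCast_betheVec [Nontrivial (ZMod n)] (hx : ∀ j, x j ≠ 0)
    (hinj : Function.Injective x) (hz : ∀ j, x j ^ (n + (K + 1)) = (-1) ^ K * z * ∏ j, x j)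
    {r : ℕ} (hr : r < n + (K + 1)) :
    eAInt ℂ n (K + 1) z r (betheVec n (K + 1) x) = hC x r • betheVec n (K + 1) x := by
  ext μ
  have hmem := positions_mem_Icc μ
  have hP : IsCylindric n (positions n (K + 1) μ) :=
    isCylindric_iff.2 ⟨monotone_positions μ, by linarith [(hmem 0).1, (hmem (Fin.last K)).2]⟩
  refine mul_left_cancel₀ (alternant_zero_ne_zero hinj) ?_
  rw [eAInt_natCast_apply, Finsupp.smul_apply, smul_eq_mul, mul_left_comm, ← amplitude_config,
    config_eq_occupation_positions,
    alternant_zero_mul_amplitude_betheVec x (monotone_positions μ) hmem,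
    hC_mul_alternant hx hz hP hr, hP.sum_powersetCard_eq_sum_hopSet, Finset.mul_sum]
  · refine Finset.sum_congr rfl fun α hα => ?_
    rw [Finset.mem_filter, Finset.mem_Iic] at hα
    exact alternant_zero_mul_prod_hopWeight_mul_amplitude_betheVec hx hz hP hmem hα.1
  · intro I hI
    obtain ⟨c, hc⟩ := not_forall.1 hI
    rw [amplitude_of_neg _ (not_le.1 hc), mul_zero]

theorem eAInt_betheVec [Nontrivial (ZMod n)] (hx : ∀ j, x j ≠ 0) (hinj : Function.Injective x)
    (hz : ∀ j, x j ^ (n + (K + 1)) = (-1) ^ K * z * ∏ j, x j) {t : ℤ} (ht : t < n + (K + 1)) :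
    eAInt ℂ n (K + 1) z t (betheVec n (K + 1) x) = hC x t • betheVec n (K + 1) x := by
  rcases lt_or_ge t 0 with hneg | hnonneg
  · rw [hC_of_neg x hneg, zero_smul, eAInt, if_neg (by omega), if_neg (by omega),
      if_neg (by omega), LinearMap.zero_apply]
  · lift t to ℕ using hnonneg
    exact eAInt_natCast_betheVec hx hinj hz (by omega)

end BetheVector

section Schur

theorem ncDet_apply_of_forall_apply_eq_smul {R V : Type*} [CommRing R] [AddCommGroup V]
    [Module R V] {r : ℕ} {M : Fin r → Fin r → Module.End R V} {N : Matrix (Fin r) (Fin r) R} {v : V}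
    (h : ∀ i j, M i j v = N i j • v) : ncDet M v = N.det • v := by
  have hprod (τ : Equiv.Perm (Fin r)) (l : List (Fin r)) :
      (l.map fun i => M (τ i) i).prod v = (l.map fun i => N (τ i) i).prod • v := by
    induction l with
    | nil => simp
    | cons a l ih =>
      rw [List.map_cons, List.prod_cons, List.map_cons, List.prod_cons, Module.End.mul_apply, ih,
        map_smul, h, smul_smul, mul_comm]
  rw [ncDet, Matrix.det_apply', Finset.sum_smul, LinearMap.sum_apply]
  refine Finset.sum_congr rfl fun τ _ => ?_
  rw [Module.End.mul_apply, hprod, map_smul, Module.End.intCast_apply, ← Int.cast_smul_eq_zsmul R,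
    smul_smul, mul_comm, ← List.ofFn_eq_map, List.prod_ofFn]


theorem schurC_transpGen_eq_det {r k : ℕ} (x : Fin k → ℂ) (σ : PartBox r k) :
    schurC x (transpGen (partVal σ) k) =
      (Matrix.of fun i j : Fin (padded (partVal σ) 0) =>
        hC x ((transpGen (partVal σ) (padded (partVal σ) 0) i : ℤ) - (i : ℕ) + (j : ℕ))).det := by
  let q : ℕ → ℕ := fun j => (Finset.univ.filter fun i : Fin r => j + 1 ≤ partVal σ i).card
  have hq (j : ℕ) (hj : padded (partVal σ) 0 ≤ j) : q j = 0 := by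
    rw [Finset.card_eq_zero, Finset.filter_eq_empty_iff]
    intro i _
    have hi := antitone_padded_partVal σ (Nat.zero_le i)
    rw [padded_val] at hi
    exact (Nat.lt_succ_of_le (hi.trans hj)).not_ge
  have hdet (m : ℕ) (hm : padded (partVal σ) 0 ≤ m) :
      (jacobiTrudi x q m).det = (jacobiTrudi x q (padded (partVal σ) 0)).det := by
    obtain ⟨d, rfl⟩ := Nat.exists_eq_add_of_le hm
    exact det_jacobiTrudi_add x q hq d
  exact hdet k (padded_partVal_le σ 0)

theorem sAOp_betheVec {n K : ℕ} [NeZero n] [Nontrivial (ZMod n)] {z : ℂ} {x : Fin (K + 1) → ℂ}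
    (hx : ∀ j, x j ≠ 0) (hinj : Function.Injective x)
    (hz : ∀ j, x j ^ (n + (K + 1)) = (-1) ^ K * z * ∏ j, x j) (σ : PartBox (n - 1) (K + 1)) :
    sAOp ℂ n (K + 1) z σ (betheVec n (K + 1) x) =
      schurC x (transpGen (partVal σ) (K + 1)) • betheVec n (K + 1) x := by
  rw [schurC_transpGen_eq_det]
  refine ncDet_apply_of_forall_apply_eq_smul fun i j => eAInt_betheVec hx hinj hz ?_
  have hi := transpGen_le (partVal σ) _ i
  have hj := j.is_lt.trans_le (padded_partVal_le σ 0)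
  omega

end Schur

/-- If `x` is a solution of the Bethe Ansatz equations with nonzero,
pairwise distinct entries, then the Bethe vector `b(x)` is a simultaneous eigenvector:
`e_r(𝒜) b(x) = h_r(x) b(x)` for `1 ≤ r ≤ n-1`, and `s_λ(𝒜) b(x) = s_{λ^t}(x) b(x)` for
every `λ ∈ 𝔓_{≤ n-1,k}`. -/
theorem bethe_vector_eigenvector (n k : ℕ) [NeZero n] (hn : 2 ≤ n) (hk : 1 ≤ k) (z : ℂ)
    (x : Fin k → ℂ) (hx0 : ∀ i, x i ≠ 0) (hxd : Function.Injective x)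
    (hbae : ∀ i, x i ^ (n + k) = (-1) ^ (k - 1) * z * ∏ j, x j) :
    (∀ r : ℕ, 1 ≤ r → r ≤ n - 1 →
        eAInt ℂ n k z (r : ℤ) (betheVec n k x) = hC x (r : ℤ) • betheVec n k x) ∧
    (∀ σ : PartBox (n - 1) k,
        sAOp ℂ n k z σ (betheVec n k x) =
          schurC x (transpGen (partVal σ) k) • betheVec n k x) := by
  obtain ⟨K, rfl⟩ := Nat.exists_eq_add_of_le' hk
  rw [Nat.add_sub_cancel] at hbae
  have : Fact (1 < n) := ⟨hn⟩
  exact ⟨fun r _ hr => eAInt_betheVec hx0 hxd hbae (by omega), sAOp_betheVec hx0 hxd hbae⟩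
end
end

section
/- Let n ≥ 2, k ≥ 1 and work at z = 1. Then all structure constants ⟨m(ν), s_λ(𝒜)·m(μ)⟩ (λ, μ, ν ∈ 𝔓_{≤n−1,k}) are integers, and the ℤ-linear map from the free ℤ-module with basis 𝔓_{≤n−1,k}, equipped with the product λ ⊛ μ = Σ_ν ⟨m(ν), s_λ(𝒜)·m(μ)⟩·ν, to the quotient ring Λ^{(k)}/⟨h_n − 1, h_{n+1}, …, h_{n+k−1}, h_{n+k} + (−1)^k e_k⟩ that sends λ to the class of the Schur polynomial s_{λ^t}, is an isomorphism of rings. -/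
set_option synthInstance.maxHeartbeats 1000000
set_option maxHeartbeats 1000000

noncomputable section

open scoped BigOperators

open MvPolynomial in
/-- The complete homogeneous symmetric polynomials `h_t` as elements of the ring
`Λ^{(k)} = ℤ[e_1, …, e_k]` of symmetric polynomials in `k` variables
(with `h_t = 0` for `t < 0`). -/
def hLam (k : ℕ) (t : ℤ) : ↥(symmetricSubalgebra (Fin k) ℤ) :=
  if 0 ≤ t then
    ⟨hsymm (Fin k) ℤ t.toNat,
      (mem_symmetricSubalgebra _).2 (hsymm_isSymmetric (Fin k) ℤ t.toNat)⟩
  else 0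

open MvPolynomial in
/-- The elementary symmetric polynomial `e_r` as an element of `Λ^{(k)}`. -/
def eLam (k r : ℕ) : ↥(symmetricSubalgebra (Fin k) ℤ) :=
  ⟨esymm (Fin k) ℤ r, (mem_symmetricSubalgebra _).2 (esymm_isSymmetric (Fin k) ℤ r)⟩

open MvPolynomial in
/-- The Schur polynomial `s_μ = det(h_{μ_i-i+j})_{1 ≤ i,j ≤ k}` of a partition `μ` with at
most `k` parts, as an element of `Λ^{(k)}`. -/
def schurLam (k : ℕ) (μ : Fin k → ℕ) : ↥(symmetricSubalgebra (Fin k) ℤ) :=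
  (Matrix.of fun i j : Fin k => hLam k ((μ i : ℤ) - (i : ℕ) + (j : ℕ))).det

open MvPolynomial in
/-- The ideal `⟨h_n - 1, h_{n+1}, …, h_{n+k-1}, h_{n+k} + (-1)^k e_k⟩` of `Λ^{(k)}`. -/
def fusionIdeal (n k : ℕ) : Ideal ↥(symmetricSubalgebra (Fin k) ℤ) :=
  Ideal.span
    {x | x = hLam k (n : ℤ) - 1 ∨
      (∃ j : ℕ, 1 ≤ j ∧ j ≤ k - 1 ∧ x = hLam k ((n : ℤ) + (j : ℤ))) ∨
      x = hLam k ((n : ℤ) + (k : ℤ)) + (-1) ^ k * eLam k k}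

open MvPolynomial in
/-- The ℤ-linear map from the free ℤ-module with basis `𝔓_{≤ n-1,k}` to the quotient ring
`Λ^{(k)}/⟨h_n - 1, h_{n+1}, …, h_{n+k-1}, h_{n+k} + (-1)^k e_k⟩`, sending a partition `λ`
to the class of the Schur polynomial `s_{λ^t}`. -/
def fusionToQuot (n k : ℕ) :
    (PartBox (n - 1) k →₀ ℤ) →ₗ[ℤ]
      (↥(symmetricSubalgebra (Fin k) ℤ) ⧸ fusionIdeal n k) :=
  Finsupp.lift _ ℤ (PartBox (n - 1) k) fun σ =>
    Ideal.Quotient.mk (fusionIdeal n k) (schurLam k (transpGen (partVal σ) k))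

/-- The fusion product on the free ℤ-module with basis `𝔓_{≤ n-1,k}`, with structure
constants the (integral) matrix elements `⟨m(ν), s_λ(𝒜) m(μ)⟩` (read off as integers via
the floor of the real part, cf. the integrality assertion). -/
def fusionMulZ (n k : ℕ) [NeZero n] (lam mu : PartBox (n - 1) k) :
    PartBox (n - 1) k →₀ ℤ :=
  ∑ nu : PartBox (n - 1) k,
    Finsupp.single nu
      ⌊(pairHk (Finsupp.single nu 1) (sAOp ℂ n k 1 lam (Finsupp.single mu 1))).re⌋

/-- The empty partition. -/
def partEmpty (r c : ℕ) : PartBox r c := ⟨fun _ => 0, by intro i j _; simp⟩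

/-!
Write `h` and `e` for the classes of the complete and elementary symmetric polynomials in the
quotient ring. Let `u` be the solution, with initial values `0, …, 0, 1`, of the linear recurrence
with characteristic polynomial `∑ (-1)^r h_r X^(n-r)`. The dual Jacobi–Trudi identity writes the
class of `s_{λ^t}` as a determinant of windows of `u` at positions given by `λ`. Coefficients of
the characteristic polynomial of the companion matrix give a Pieri rule: multiplying such a
determinant by `h_r` sums it over all shapes obtained by adding a vertical strip of size `r`. The
relations `h_n = 1` and `h_m = 0` for `n < m < n + k` make `u` periodic up to a scalar with period
`n + k`, so that the determinants live on cylindric shapes and vanish on those shapes which violate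
the cylindric inequalities. On the remaining shapes adding a vertical strip is hopping, so the Pieri
rule says that `e_r(𝒜)` acts as multiplication by `h_r`. Hence `s_λ(𝒜)` acts as multiplication by
the class of `s_{λ^t}`, and the map is multiplicative.

Its image is stable under all `h_r`, hence an ideal containing `1`, which gives surjectivity. For
injectivity, the solutions of the Bethe equations provide at least as many distinct characters of
the quotient as there are partitions in the `(n - 1) × k` box, and distinct characters are linearly
independent.
-/

namespace FusionRing

open Finset.HasAntidiagonal (antidiagonal mem_antidiagonal)

section GeneratingFunctions

open MvPolynomial

variable {σ R : Type*} [Fintype σ] [DecidableEq σ] [CommRing R]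

lemma mk_pow_mul_one_sub_C_mul_X (a : R) :
    PowerSeries.mk (fun m => a ^ m) * (1 - PowerSeries.C a * PowerSeries.X) = 1 := by
  ext m
  rw [mul_sub, mul_one, mul_left_comm, map_sub, PowerSeries.coeff_C_mul]
  rcases m with _ | m
  · simp
  · simp [PowerSeries.coeff_succ_mul_X, PowerSeries.coeff_one, pow_succ']

lemma sum_finsuppAntidiag_prod_X_pow (m : ℕ) :
    ∑ l ∈ Finset.univ.finsuppAntidiag m, ∏ i, (X i : MvPolynomial σ R) ^ l i = hsymm σ R m := by
  rw [hsymm]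
  refine Finset.sum_bij'
    (i := fun l hl => (⟨Finsupp.toMultiset l, by
      rw [Finsupp.card_toMultiset, Finsupp.sum_fintype _ _ fun _ => rfl]
      exact (Finset.mem_finsuppAntidiag.1 hl).1⟩ : Sym σ m))
    (j := fun s _ => Multiset.toFinsupp (s : Multiset σ))
    (fun _ _ => Finset.mem_univ _) (fun s _ => ?_) (fun l _ => Finsupp.toMultiset_toFinsupp l)
    (fun s _ => Sym.coe_injective (Multiset.toFinsupp_toMultiset (s : Multiset σ)))
    (fun l hl => ?_)
  · refine Finset.mem_finsuppAntidiag.2 ⟨?_, Finset.subset_univ _⟩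
    change ∑ i, Multiset.toFinsupp (s : Multiset σ) i = m
    simp only [Multiset.toFinsupp_apply]
    rw [Multiset.sum_count_eq_card fun _ _ => Finset.mem_univ _]
    exact s.2
  · change _ = ((Finsupp.toMultiset l).map X).prod
    rw [Finsupp.toMultiset_map, Finsupp.prod_toMultiset,
      Finsupp.prod_mapDomain_index (fun _ => pow_zero _) fun _ _ _ => pow_add _ _ _,
      Finsupp.prod_fintype _ _ fun _ => pow_zero _]

lemma mk_hsymm_eq_prod :
    PowerSeries.mk (hsymm σ R) =
      ∏ i : σ, PowerSeries.mk fun m => (X i : MvPolynomial σ R) ^ m := by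
  ext1 m
  simp only [PowerSeries.coeff_mk, PowerSeries.coeff_prod]
  exact (sum_finsuppAntidiag_prod_X_pow m).symm

lemma mk_hsymm_mul_prod_one_sub :
    PowerSeries.mk (hsymm σ R) *
      ∏ i : σ, (1 - PowerSeries.C (X i : MvPolynomial σ R) * PowerSeries.X) = 1 := by
  rw [mk_hsymm_eq_prod, ← Finset.prod_mul_distrib]
  exact Finset.prod_eq_one fun i _ => mk_pow_mul_one_sub_C_mul_X _

lemma coeff_prod_one_sub_C_mul_X {ι : Type*} (s : Finset ι) (x : ι → R) (m : ℕ) :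
    PowerSeries.coeff m (∏ i ∈ s, (1 - PowerSeries.C (x i) * PowerSeries.X)) =
      (-1) ^ m * ∑ t ∈ s.powersetCard m, ∏ i ∈ t, x i := by
  classical
  have coeff_term (t : Finset ι) :
      PowerSeries.coeff m (∏ i ∈ t, (PowerSeries.C (-x i) * PowerSeries.X)) =
        if t.card = m then (-1) ^ m * ∏ i ∈ t, x i else 0 := by
    rw [Finset.prod_mul_distrib, Finset.prod_const, ← map_prod, PowerSeries.coeff_C_mul,
      PowerSeries.coeff_X_pow, Finset.prod_neg]
    rcases eq_or_ne t.card m with h | h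
    · simp [h]
    · simp [h, h.symm]
  simp only [sub_eq_add_neg, ← neg_mul, ← map_neg]
  rw [Finset.prod_one_add, map_sum]
  simp only [coeff_term]
  rw [← Finset.sum_filter, ← Finset.mul_sum, Finset.powersetCard_eq_filter]

lemma sum_antidiagonal_hsymm_mul_esymm (m : ℕ) :
    ∑ p ∈ antidiagonal m, hsymm σ R p.1 * ((-1) ^ p.2 * esymm σ R p.2) =
      if m = 0 then 1 else 0 := by
  have h := congrArg (PowerSeries.coeff m) (mk_hsymm_mul_prod_one_sub (σ := σ) (R := R))
  simpa only [PowerSeries.coeff_mul, PowerSeries.coeff_one, coeff_prod_one_sub_C_mul_X,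
    PowerSeries.coeff_mk, esymm] using h

end GeneratingFunctions

section DualJacobiTrudi

variable {A : Type*} [CommRing A]

/-- The Toeplitz matrix `(f (a - c))_{a,c}` of size `N`. -/
def toeplitz (N : ℕ) (f : ℤ → A) : Matrix (Fin N) (Fin N) A :=
  Matrix.of fun a c => f ((a : ℤ) - (c : ℤ))

lemma toeplitz_mul_toeplitz_eq_one (N : ℕ) {f g : ℤ → A} (f_neg : ∀ m < 0, f m = 0)
    (g_neg : ∀ m < 0, g m = 0)
    (hfg : ∀ m : ℕ, ∑ p ∈ antidiagonal m, f p.1 * g p.2 = if m = 0 then 1 else 0) :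
    toeplitz N f * toeplitz N g = 1 := by
  ext a c
  simp only [Matrix.mul_apply, toeplitz, Matrix.of_apply]
  have eq_zero_of_lt (b : Fin N) (h : b < c ∨ a < b) : f ((a : ℤ) - b) * g ((b : ℤ) - c) = 0 := by
    rcases h with h | h
    · rw [g_neg _ (by omega), mul_zero]
    · rw [f_neg _ (by omega), zero_mul]
  rcases lt_or_ge a c with hac | hca
  · rw [Matrix.one_apply_ne hac.ne]
    exact Finset.sum_eq_zero fun b _ => eq_zero_of_lt b (by omega)
  · have hone : (1 : Matrix (Fin N) (Fin N) A) a c = if (a : ℕ) - c = 0 then 1 else 0 := by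
      rw [Matrix.one_apply]
      exact if_congr (by omega) rfl rfl
    rw [hone, ← hfg]
    refine (Finset.sum_of_injOn
      (fun p => (⟨(c + p.2) % N, Nat.mod_lt _ (by omega)⟩ : Fin N)) ?_ ?_ ?_ ?_).symm
    · intro p hp q hq hpq
      rw [Finset.mem_coe, mem_antidiagonal] at hp hq
      simp only [Fin.mk.injEq] at hpq
      rw [Nat.mod_eq_of_lt (by omega), Nat.mod_eq_of_lt (by omega)] at hpq
      ext <;> omega
    · exact fun _ _ => Finset.mem_coe.2 (Finset.mem_univ _)
    · intro b _ hb
      refine eq_zero_of_lt b ?_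
      by_contra! hcb
      refine hb ⟨((a : ℕ) - b, (b : ℕ) - c), ?_, ?_⟩
      · rw [Finset.mem_coe, mem_antidiagonal]
        omega
      · ext
        simp only
        rw [Nat.mod_eq_of_lt (by omega)]
        omega
    · intro p hp
      rw [mem_antidiagonal] at hp
      simp only
      rw [Nat.mod_eq_of_lt (by omega)]
      congr 2 <;> push_cast <;> omega

lemma det_toeplitz {N : ℕ} {f : ℤ → A} (f_neg : ∀ m < 0, f m = 0) (f_zero : f 0 = 1) :
    (toeplitz N f).det = 1 := by
  rw [Matrix.det_of_isLowerTriangular]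
  · simp [toeplitz, f_zero]
  · intro i j hij
    have : i < j := hij
    exact f_neg _ (by omega)

lemma det_toBlocks₁₁_of_mul_eq_one {l m : Type*} [Fintype l] [Fintype m] [DecidableEq l]
    [DecidableEq m] {M M' : Matrix (l ⊕ m) (l ⊕ m) A} (hM : M * M' = 1) :
    M.toBlocks₁₁.det = M.det * M'.toBlocks₂₂.det := by
  have hmul : M * Matrix.fromBlocks 1 M'.toBlocks₁₂ 0 M'.toBlocks₂₂ =
      Matrix.fromBlocks M.toBlocks₁₁ 0 M.toBlocks₂₁ 1 := by
    rw [← Matrix.fromBlocks_toBlocks M, ← Matrix.fromBlocks_toBlocks M',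
      Matrix.fromBlocks_multiply, ← Matrix.fromBlocks_one, Matrix.fromBlocks_inj] at hM
    conv_lhs => rw [← Matrix.fromBlocks_toBlocks M, Matrix.fromBlocks_multiply]
    rw [hM.2.1, hM.2.2.2]
    simp
  have hdet := congrArg Matrix.det hmul
  rw [Matrix.det_mul, Matrix.det_fromBlocks_zero₂₁, Matrix.det_fromBlocks_zero₁₂] at hdet
  simpa using hdet.symm

lemma det_castAdd_minor_of_mul_eq_one {k n : ℕ} {H G : Matrix (Fin (k + n)) (Fin (k + n)) A}
    (hHG : H * G = 1) (w : Equiv.Perm (Fin (k + n))) :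
    (H.submatrix (fun i => w (Fin.castAdd n i)) (Fin.castAdd n)).det =
      ((Equiv.Perm.sign w : ℤ) : A) * H.det *
        (G.submatrix (Fin.natAdd k) fun j => w (Fin.natAdd k j)).det := by
  let e : Fin k ⊕ Fin n ≃ Fin (k + n) := finSumFinEquiv
  have hmul : H.submatrix (e.trans w) e * G.submatrix e (e.trans w) = 1 := by
    rw [Matrix.submatrix_mul_equiv, hHG, Matrix.submatrix_one_equiv]
  have hdet : (H.submatrix (e.trans w) e).det = ((Equiv.Perm.sign w : ℤ) : A) * H.det := by
    rw [← Matrix.det_permute, ← Matrix.det_submatrix_equiv_self e]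
    rfl
  rw [← hdet]
  exact det_toBlocks₁₁_of_mul_eq_one hmul

lemma sign_eq_prod_of_strictMono_blocks {k n : ℕ} (w : Equiv.Perm (Fin (k + n)))
    (hk : StrictMono fun i => w (Fin.castAdd n i)) (hn : StrictMono fun j => w (Fin.natAdd k j)) :
    Equiv.Perm.sign w = ∏ j : Fin n, ∏ i : Fin k,
      if w (Fin.natAdd k j) < w (Fin.castAdd n i) then -1 else 1 := by
  have prod_Ioi (i : Fin (k + n)) (F : Fin (k + n) → ℤˣ) :
      ∏ j ∈ Finset.Ioi i, F j = ∏ j, if i < j then F j else 1 := by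
    rw [← Finset.prod_filter]
    exact Finset.prod_congr (by ext; simp) fun _ _ => rfl
  rw [Equiv.Perm.sign_eq_prod_prod_Ioi, Finset.prod_comm]
  simp only [prod_Ioi, Fin.prod_univ_add]
  have left_left (i j : Fin k) : (if Fin.castAdd n i < Fin.castAdd n j then
      if w (Fin.castAdd n i) < w (Fin.castAdd n j) then (1 : ℤˣ) else -1 else 1) = 1 := by
    split_ifs with h h'
    · rfl
    · exact absurd (hk (a := i) (b := j) h) h'
    · rfl
  have right_right (i j : Fin n) : (if Fin.natAdd k i < Fin.natAdd k j then
      if w (Fin.natAdd k i) < w (Fin.natAdd k j) then (1 : ℤˣ) else -1 else 1) = 1 := by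
    split_ifs with h h'
    · rfl
    · exact absurd (hn (a := i) (b := j) (by simpa using h)) h'
    · rfl
  have right_left (i : Fin n) (j : Fin k) : ¬ Fin.natAdd k i < Fin.castAdd n j := by
    simp only [Fin.lt_def, Fin.val_natAdd, Fin.val_castAdd]
    omega
  have left_right (i : Fin k) (j : Fin n) : (if Fin.castAdd n i < Fin.natAdd k j then
      if w (Fin.castAdd n i) < w (Fin.natAdd k j) then (1 : ℤˣ) else -1 else 1) =
      if w (Fin.natAdd k j) < w (Fin.castAdd n i) then -1 else 1 := by
    have hne : w (Fin.natAdd k j) ≠ w (Fin.castAdd n i) := by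
      simp only [ne_eq, EmbeddingLike.apply_eq_iff_eq, Fin.ext_iff, Fin.val_natAdd,
        Fin.val_castAdd]
      omega
    rw [if_pos (by simp only [Fin.lt_def, Fin.val_natAdd, Fin.val_castAdd]; omega)]
    rcases lt_or_gt_of_ne hne with h | h
    · rw [if_pos h, if_neg h.not_gt]
    · rw [if_neg h.not_gt, if_pos h]
  simp only [left_left, right_right, right_left, left_right, if_false, Finset.prod_const_one,
    one_mul, mul_one]

/-- The tuples `lam` and `p` are the parts of conjugate partitions, `lam` with at most `n` parts
and `p` with at most `k` parts. -/
structure IsConjugate {n k : ℕ} (lam : Fin n → ℕ) (p : Fin k → ℕ) : Prop where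
  le_left : ∀ j, lam j ≤ k
  le_right : ∀ a, p a ≤ n
  lt_iff_lt : ∀ (a : Fin k) (j : Fin n), (j : ℕ) < p a ↔ (a : ℕ) < lam j

namespace IsConjugate

variable {n k : ℕ} {lam : Fin n → ℕ} {p : Fin k → ℕ}

lemma symm (h : IsConjugate lam p) : IsConjugate p lam :=
  ⟨h.le_right, h.le_left, fun j a => (h.lt_iff_lt a j).symm⟩

lemma antitone_left (h : IsConjugate lam p) : Antitone lam := by
  intro i j hij
  by_contra! hlt
  have hj := (h.lt_iff_lt ⟨lam i, hlt.trans_le (h.le_left j)⟩ j).2 hlt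
  exact lt_irrefl _ ((h.lt_iff_lt _ i).1 ((Fin.le_def.1 hij).trans_lt hj))

/-- The Grassmannian permutation of conjugate partitions: the sequences `p_{k-1-i} + i` and
`k + j - lam_j` are complementary in `{0, …, k + n - 1}` and increasing. -/
def shuffleFun (h : IsConjugate lam p) : Fin (k + n) → Fin (k + n) :=
  Fin.addCases (fun i => ⟨p i.rev + i, by have := h.le_right i.rev; omega⟩)
    fun j => ⟨k + j - lam j, by omega⟩

variable (h : IsConjugate lam p)

@[simp]
lemma shuffleFun_castAdd (i : Fin k) : (h.shuffleFun (Fin.castAdd n i) : ℕ) = p i.rev + i := by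
  simp [shuffleFun]

@[simp]
lemma shuffleFun_natAdd (j : Fin n) : (h.shuffleFun (Fin.natAdd k j) : ℕ) = k + j - lam j := by
  simp [shuffleFun]

include h in
lemma sub_lt_iff (i : Fin k) (j : Fin n) : k + (j : ℕ) - lam j < p i.rev + i ↔ i.rev < lam j := by
  have h1 := h.lt_iff_lt i.rev j
  have h2 := h.le_left j
  rw [Fin.val_rev] at h1 ⊢
  omega

include h in
lemma lt_sub_iff (i : Fin k) (j : Fin n) :
    p i.rev + i < k + (j : ℕ) - lam j ↔ ¬ i.rev < lam j := by
  have h1 := h.lt_iff_lt i.rev j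
  have h2 := h.le_left j
  rw [Fin.val_rev] at h1 ⊢
  omega

lemma strictMono_shuffleFun_castAdd : StrictMono fun i => h.shuffleFun (Fin.castAdd n i) := by
  intro i j hij
  have := h.symm.antitone_left (Fin.rev_le_rev.2 hij.le)
  simp only [Fin.lt_def, shuffleFun_castAdd]
  omega

lemma strictMono_shuffleFun_natAdd : StrictMono fun j => h.shuffleFun (Fin.natAdd k j) := by
  intro i j hij
  have := h.antitone_left hij.le
  have := h.le_left i
  simp only [Fin.lt_def, shuffleFun_natAdd]
  omega

lemma shuffleFun_castAdd_ne_natAdd (i : Fin k) (j : Fin n) :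
    h.shuffleFun (Fin.castAdd n i) ≠ h.shuffleFun (Fin.natAdd k j) := by
  have h1 := h.sub_lt_iff i j
  have h2 := h.lt_sub_iff i j
  rw [ne_eq, Fin.ext_iff, shuffleFun_castAdd, shuffleFun_natAdd]
  omega

lemma shuffleFun_injective : Function.Injective h.shuffleFun := by
  intro x y
  refine Fin.addCases (fun i => ?_) (fun i => ?_) x <;>
    refine Fin.addCases (fun j => ?_) (fun j => ?_) y <;> intro hxy
  · rw [h.strictMono_shuffleFun_castAdd.injective hxy]
  · exact absurd hxy (h.shuffleFun_castAdd_ne_natAdd i j)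
  · exact absurd hxy.symm (h.shuffleFun_castAdd_ne_natAdd j i)
  · rw [h.strictMono_shuffleFun_natAdd.injective hxy]

/-- `IsConjugate.shuffleFun` as a permutation. -/
def shuffle : Equiv.Perm (Fin (k + n)) :=
  Equiv.ofBijective h.shuffleFun (Finite.injective_iff_bijective.1 h.shuffleFun_injective)

lemma sign_shuffle : Equiv.Perm.sign h.shuffle = ∏ j, (-1) ^ lam j := by
  rw [sign_eq_prod_of_strictMono_blocks h.shuffle h.strictMono_shuffleFun_castAdd
    h.strictMono_shuffleFun_natAdd]
  refine Finset.prod_congr rfl fun j _ => ?_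
  simp only [shuffle, Equiv.ofBijective_apply, Fin.lt_def, shuffleFun_castAdd, shuffleFun_natAdd,
    h.sub_lt_iff]
  simp only [← Fin.revPerm_apply]
  rw [Equiv.prod_comp Fin.revPerm fun i : Fin k => if (i : ℕ) < lam j then (-1 : ℤˣ) else 1,
    Fin.prod_univ_eq_prod_range (fun i => if i < lam j then (-1 : ℤˣ) else 1) k,
    ← Finset.prod_filter, Finset.prod_const]
  congr 1
  have hrange : (Finset.range k).filter (· < lam j) = Finset.range (lam j) := by
    ext i
    have := h.le_left j
    simp only [Finset.mem_filter, Finset.mem_range]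
    omega
  rw [hrange, Finset.card_range]

end IsConjugate

/-- The sequences `h`, `e`, extended by zero to negative indices, have generating functions
`H(T)`, `E(T)` satisfying `H(T) E(-T) = 1`. -/
structure IsDualPair (h e : ℤ → A) : Prop where
  h_neg : ∀ m < 0, h m = 0
  e_neg : ∀ m < 0, e m = 0
  h_zero : h 0 = 1
  sum_antidiagonal : ∀ m : ℕ,
    ∑ p ∈ antidiagonal m, h p.1 * ((-1) ^ p.2 * e p.2) = if m = 0 then 1 else 0

/-- The Jacobi–Trudi matrix `(f (mu_i - i + j))_{i,j}`. -/
def jacobiTrudi {m : ℕ} (f : ℤ → A) (mu : Fin m → ℕ) : Matrix (Fin m) (Fin m) A :=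
  Matrix.of fun i j => f ((mu i : ℤ) - (i : ℕ) + (j : ℕ))

lemma toeplitz_minor_h {n k : ℕ} {lam : Fin n → ℕ} {p : Fin k → ℕ} (hc : IsConjugate lam p)
    (h : ℤ → A) :
    ((toeplitz (k + n) h).submatrix (fun i => hc.shuffle (Fin.castAdd n i)) (Fin.castAdd n)).det =
      (jacobiTrudi h p).det := by
  rw [← Matrix.det_submatrix_equiv_self Fin.revPerm (jacobiTrudi h p)]
  congr 1
  ext i j
  simp only [toeplitz, jacobiTrudi, Matrix.submatrix_apply, Matrix.of_apply, Fin.revPerm_apply,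
    IsConjugate.shuffle, Equiv.ofBijective_apply, hc.shuffleFun_castAdd, Fin.val_rev,
    Fin.val_castAdd]
  congr 1
  omega

lemma toeplitz_minor_e {n k : ℕ} {lam : Fin n → ℕ} {p : Fin k → ℕ} (hc : IsConjugate lam p)
    (e : ℤ → A) :
    ((toeplitz (k + n) fun m => (-1) ^ m.natAbs * e m).submatrix (Fin.natAdd k)
        fun j => hc.shuffle (Fin.natAdd k j)).det =
      (∏ j, (-1) ^ lam j) * (jacobiTrudi e lam).det := by
  have hmatrix : ((toeplitz (k + n) fun m => (-1) ^ m.natAbs * e m).submatrix (Fin.natAdd k)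
        fun j => hc.shuffle (Fin.natAdd k j)) =
      Matrix.of fun i j : Fin n => (-1 : A) ^ (i : ℕ) * (Matrix.of fun i j : Fin n =>
        (-1 : A) ^ ((j : ℕ) + lam j) * (jacobiTrudi e lam).transpose i j) i j := by
    ext i j
    have hle := hc.le_left j
    have hindex : (((k + i : ℕ) : ℤ) - ((k + j - lam j : ℕ) : ℤ)) =
        (lam j : ℤ) - (j : ℕ) + (i : ℕ) := by omega
    simp only [toeplitz, jacobiTrudi, Matrix.submatrix_apply, Matrix.of_apply,
      Matrix.transpose_apply, IsConjugate.shuffle, Equiv.ofBijective_apply, hc.shuffleFun_natAdd,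
      Fin.val_natAdd, hindex]
    rw [← mul_assoc, ← pow_add]
    congr 1
    exact neg_one_pow_congr (by grind)
  rw [hmatrix, Matrix.det_mul_column, Matrix.det_mul_row, Matrix.det_transpose, ← mul_assoc,
    ← Finset.prod_mul_distrib]
  congr 1
  refine Finset.prod_congr rfl fun j _ => ?_
  rw [← pow_add]
  exact neg_one_pow_congr (by grind)

theorem IsDualPair.det_jacobiTrudi {n k : ℕ} {lam : Fin n → ℕ} {p : Fin k → ℕ} {h e : ℤ → A}
    (hd : IsDualPair h e) (hc : IsConjugate lam p) :
    (jacobiTrudi h p).det = (jacobiTrudi e lam).det := by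
  have hinv : toeplitz (k + n) h * toeplitz (k + n) (fun m => (-1) ^ m.natAbs * e m) = 1 :=
    toeplitz_mul_toeplitz_eq_one _ hd.h_neg (fun m hm => by rw [hd.e_neg m hm, mul_zero])
      hd.sum_antidiagonal
  rw [← toeplitz_minor_h hc, det_castAdd_minor_of_mul_eq_one hinv hc.shuffle, toeplitz_minor_e,
    det_toeplitz hd.h_neg hd.h_zero, hc.sign_shuffle, mul_one, ← mul_assoc]
  push_cast
  rw [← Finset.prod_mul_distrib, Finset.prod_eq_one, one_mul]
  exact fun j _ => by rw [← pow_add, Even.neg_one_pow ⟨lam j, rfl⟩]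

end DualJacobiTrudi

section ShiftedDeterminants

open Polynomial
open scoped Matrix

variable {A : Type*} [CommRing A]

lemma det_map_C_add_X_smul_map_C {ι : Type*} [Fintype ι] [DecidableEq ι] (M Q : Matrix ι ι A) :
    (M.map C + (X : A[X]) • Q.map C).det =
      ∑ J : Finset ι, C (Matrix.of fun i => if i ∈ J then Q i else M i).det * X ^ J.card := by
  rw [add_comm]
  refine ((Matrix.detRowAlternating (n := ι) (R := A[X])).map_add_univ _ _).trans
    (Finset.sum_congr rfl fun J _ => ?_)
  have hX : (X : A[X]) ^ J.card = ∏ i, if i ∈ J then X else 1 := by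
    rw [Finset.prod_ite_mem, Finset.univ_inter, Finset.prod_const]
  rw [mul_comm, RingHom.map_det, hX, ← Matrix.det_mul_column]
  change Matrix.det _ = _
  congr 1
  ext1 i j
  by_cases hi : i ∈ J <;> simp [Finset.piecewise, hi]

lemma sum_det_piecewise_mul {ι : Type*} [Fintype ι] [DecidableEq ι] (M Q : Matrix ι ι A) (r : ℕ) :
    ∑ J ∈ (Finset.univ : Finset ι).powersetCard r,
        (Matrix.of fun i => if i ∈ J then (M * Q) i else M i).det =
      (1 + (X : A[X]) • Q.map C).det.coeff r * M.det := by
  have hfactor : (M.map C + (X : A[X]) • (M * Q).map C).det =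
      C M.det * (1 + (X : A[X]) • Q.map C).det := by
    rw [RingHom.map_det, ← Matrix.det_mul, RingHom.mapMatrix_apply, mul_add, mul_one,
      Matrix.mul_smul, Matrix.map_mul]
  have hcoeff := congrArg (coeff · r) (det_map_C_add_X_smul_map_C M (M * Q))
  simp only [hfactor, coeff_C_mul, finsetSum_coeff, coeff_X_pow, mul_ite, mul_one, mul_zero]
    at hcoeff
  rw [mul_comm, hcoeff, Finset.powersetCard_eq_filter, Finset.sum_filter]
  simp only [Finset.powerset_univ, eq_comm]

variable (E : LinearRecurrence A)

/-- The companion matrix of a linear recurrence, which shifts windows of solutions by one step. -/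
def companion : Matrix (Fin E.order) (Fin E.order) A := LinearMap.toMatrix' E.tupleSucc

lemma companion_apply (i j : Fin E.order) :
    companion E i j =
      if (i : ℕ) + 1 < E.order then (if (j : ℕ) = i + 1 then 1 else 0) else E.coeffs j := by
  simp only [companion, LinearMap.toMatrix'_apply, LinearRecurrence.tupleSucc, LinearMap.coe_mk,
    AddHom.coe_mk]
  split_ifs with hi hj
  · simp [Pi.single_apply, Fin.ext_iff, hj]
  · simp [Fin.ext_iff, Ne.symm hj]
  · simp [Pi.single_apply]

lemma companion_mulVec_window {u : ℕ → A} (hu : E.IsSolution u) (a : ℕ) :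
    companion E *ᵥ (fun j : Fin E.order => u (a + j)) = fun j : Fin E.order => u (a + 1 + j) := by
  rw [companion, LinearMap.toMatrix'_mulVec]
  ext i
  simp only [LinearRecurrence.tupleSucc, LinearMap.coe_mk, AddHom.coe_mk]
  split_ifs with h
  · congr 1
    omega
  · rw [← hu a]
    congr 1
    omega

/-- The matrix with ones on the diagonal and `a` on the superdiagonal. -/
def superBidiagonal (n : ℕ) (a : A) : Matrix (Fin n) (Fin n) A :=
  Matrix.of fun i j => if j = i then 1 else if (j : ℕ) = i + 1 then a else 0

lemma det_superBidiagonal (n : ℕ) (a : A) : (superBidiagonal n a).det = 1 := by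
  rw [Matrix.det_of_isUpperTriangular]
  · simp [superBidiagonal]
  · intro i j hij
    have : j < i := hij
    simp only [superBidiagonal, Matrix.of_apply]
    rw [if_neg (by omega), if_neg (by omega)]

lemma superBidiagonal_mulVec_neg_pow {n : ℕ} (a : A) (last : Fin n) (hlast : (last : ℕ) + 1 = n) :
    superBidiagonal n a *ᵥ (fun j => (-a) ^ (j.rev : ℕ)) = Pi.single last 1 := by
  ext i
  have hentry (j : Fin n) : superBidiagonal n a i j = (if j = i then 1 else 0) +
      if (j : ℕ) = i + 1 then a else 0 := by
    simp only [superBidiagonal, Matrix.of_apply]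
    split_ifs <;> simp_all
  simp only [Matrix.mulVec, dotProduct, hentry, add_mul, Finset.sum_add_distrib, ite_mul, one_mul,
    zero_mul, Finset.sum_ite_eq', Finset.mem_univ, if_true]
  rcases eq_or_ne i last with rfl | hi
  · rw [Finset.sum_eq_zero fun j _ => if_neg (by omega), Pi.single_eq_same, Fin.val_rev, hlast]
    simp
  · let next : Fin n := ⟨i + 1, by omega⟩
    have hnext : (i.rev : ℕ) = next.rev + 1 := by simp only [Fin.val_rev, next]; omega
    rw [Finset.sum_eq_single next (fun j _ hj => if_neg fun h => hj (Fin.ext h)) (by simp),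
      if_pos rfl, Pi.single_eq_of_ne hi, hnext, pow_succ]
    ring

lemma det_one_add_X_smul_companion (hE : 0 < E.order) :
    (1 + (X : A[X]) • (companion E).map C).det =
      1 + ∑ j : Fin E.order, X * C (E.coeffs j) * (-X) ^ (j.rev : ℕ) := by
  let last : Fin E.order := ⟨E.order - 1, by omega⟩
  let B : Matrix (Fin E.order) (Fin E.order) A[X] := superBidiagonal E.order X
  have hB : B.det = 1 := det_superBidiagonal _ _
  have hrankOne : 1 + (X : A[X]) • (companion E).map C =
      B + Matrix.replicateCol Unit (Pi.single last 1 : Fin E.order → A[X]) *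
        Matrix.replicateRow Unit fun j => X * C (E.coeffs j) := by
    ext1 i j
    have hlast : (i : ℕ) + 1 < E.order ↔ i ≠ last := by simp only [ne_eq, Fin.ext_iff, last]; omega
    have hnext (h : (j : ℕ) = i + 1) : j ≠ i ∧ i ≠ last :=
      ⟨by rintro rfl; omega, hlast.1 (by omega)⟩
    rw [Matrix.add_apply, Matrix.add_apply, Matrix.smul_apply, Matrix.map_apply, companion_apply,
      Matrix.one_apply, Matrix.mul_apply, Fintype.sum_unique]
    simp only [B, superBidiagonal, Matrix.of_apply, Matrix.replicateCol_apply,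
      Matrix.replicateRow_apply, Pi.single_apply, hlast, smul_eq_mul, eq_comm (a := i) (b := j)]
    by_cases hj : (j : ℕ) = i + 1
    · simp [hj, hnext hj]
    · by_cases hi : i = last <;> simp only [hj, if_false] <;> simp [hi]
  have hinv : B⁻¹ *ᵥ (Pi.single last 1 : Fin E.order → A[X]) = fun j => (-X) ^ (j.rev : ℕ) := by
    rw [← superBidiagonal_mulVec_neg_pow X last (Nat.sub_add_cancel hE), Matrix.mulVec_mulVec,
      Matrix.nonsing_inv_mul _ (by simp [hB]), Matrix.one_mulVec]
  rw [hrankOne, Matrix.det_add_replicateCol_mul_replicateRow (by simp [hB]), hB, one_mul,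
    Matrix.det_unique, Matrix.add_apply, Matrix.one_apply_eq, Matrix.mul_assoc,
    ← Matrix.replicateCol_mulVec, hinv]
  simp [Matrix.mul_apply]

/-- The determinant of the windows `(u (x i), u (x i + 1), …)` of a sequence. -/
def shiftDet {n : ℕ} (u : ℕ → A) (x : Fin n → ℕ) : A :=
  (Matrix.of fun i j : Fin n => u (x i + j)).det

theorem sum_shiftDet_add_indicator {u : ℕ → A} (hu : E.IsSolution u) (x : Fin E.order → ℕ) (r : ℕ) :
    ∑ J ∈ (Finset.univ : Finset (Fin E.order)).powersetCard r,
        shiftDet u (fun i => x i + if i ∈ J then 1 else 0) =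
      (1 + (X : A[X]) • (companion E).map C).det.coeff r * shiftDet u x := by
  have htranspose : (1 + (X : A[X]) • (companion E).map C).det =
      (1 + (X : A[X]) • (companion E).transpose.map C).det := by
    rw [← Matrix.det_transpose]
    simp [Matrix.transpose_map]
  rw [htranspose, shiftDet, ← sum_det_piecewise_mul]
  refine Finset.sum_congr rfl fun J _ => ?_
  have hrow (i : Fin E.order) :
      ((Matrix.of fun i j : Fin E.order => u (x i + j)) * (companion E).transpose) i =
        fun j : Fin E.order => u (x i + 1 + j) := by
    rw [← companion_mulVec_window E hu, ← Matrix.vecMul_transpose]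
    rfl
  rw [shiftDet]
  congr 1
  ext i j
  simp only [Matrix.of_apply, hrow]
  split_ifs <;> rfl

lemma shiftDet_eq_zero_of_eq {n : ℕ} (u : ℕ → A) {x : Fin n → ℕ} {i j : Fin n} (hij : i ≠ j)
    (h : x i = x j) : shiftDet u x = 0 :=
  Matrix.det_zero_of_row_eq hij (by ext l; simp [h])

lemma shiftDet_eq_zero_of_eq_add {n : ℕ} {u : ℕ → A} {N : ℕ} {c : A}
    (hu : ∀ a, u (a + N) = c * u a) {x : Fin n → ℕ} {i j : Fin n} (hij : i ≠ j)
    (h : x i = x j + N) : shiftDet u x = 0 := by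
  have hrow : (Matrix.of fun i l : Fin n => u (x i + l)) =
      (Matrix.of fun i l : Fin n => u (x i + l)).updateRow i
        (c • (Matrix.of fun i l : Fin n => u (x i + l)) j) := by
    ext a l
    rcases eq_or_ne a i with rfl | ha
    · rw [Matrix.updateRow_self, Matrix.of_apply, h, add_right_comm, hu]
      rfl
    · rw [Matrix.updateRow_ne ha]
  rw [shiftDet, hrow, Matrix.det_updateRow_smul, Matrix.det_updateRow_eq_zero hij.symm, mul_zero]

end ShiftedDeterminants

open Finset.HasAntidiagonal (antidiagonal mem_antidiagonal)

section FusionPairs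

open Polynomial

variable {A : Type*} [CommRing A] {n k : ℕ} {h e : ℤ → A}

/-- A dual pair satisfying the relations `e m = 0` for `m > k`, `h n = 1` and `h m = 0` for
`n < m < n + k`, which hold for `h` and `e` in `Λ⁽ᵏ⁾ / fusionIdeal n k`. -/
structure IsFusionPair (n k : ℕ) (h e : ℤ → A) : Prop extends IsDualPair h e where
  e_eq_zero : ∀ m : ℤ, k < m → e m = 0
  h_level : h n = 1
  h_eq_zero : ∀ m : ℤ, n < m → m < n + k → h m = 0

/-- The linear recurrence of order `n` with characteristic polynomial `∑ (-1)^r h_r X^(n-r)`. -/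
def fusionRecurrence (n : ℕ) (h : ℤ → A) : LinearRecurrence A where
  order := n
  coeffs i := (-1) ^ (i.rev : ℕ) * h (i.rev + 1)

/-- The solution of `fusionRecurrence` starting with `0, …, 0, 1`. -/
def fusionSeq (n : ℕ) (h : ℤ → A) : ℕ → A :=
  (fusionRecurrence n h).mkSol fun i => if (i : ℕ) + 1 = n then 1 else 0

lemma isSolution_fusionSeq (n : ℕ) (h : ℤ → A) :
    (fusionRecurrence n h).IsSolution (fusionSeq n h) :=
  LinearRecurrence.is_sol_mkSol _ _

lemma fusionSeq_of_lt (h : ℤ → A) {a : ℕ} (ha : a < n) :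
    fusionSeq n h a = if a + 1 = n then 1 else 0 :=
  (fusionRecurrence n h).mkSol_eq_init _ ⟨a, ha⟩

lemma IsDualPair.e_zero (hd : IsDualPair h e) : e 0 = 1 := by
  simpa [hd.h_zero] using hd.sum_antidiagonal 0

lemma sum_rev {M : Type*} [AddCommMonoid M] (f : ℕ → M) :
    ∑ i : Fin n, f i.rev = ∑ r ∈ Finset.range n, f r :=
  (Equiv.sum_comp Fin.revPerm fun i : Fin n => f i).trans (Fin.sum_univ_eq_sum_range f n)

lemma IsDualPair.e_succ (hd : IsDualPair h e) (m : ℕ) :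
    e (m + 1) = ∑ r ∈ Finset.range (m + 1), (-1) ^ r * h (r + 1) * e (m - r) := by
  have hsum := hd.sum_antidiagonal (m + 1)
  rw [Finset.Nat.sum_antidiagonal_eq_sum_range_succ
    fun i j => h (i : ℕ) * ((-1) ^ j * e (j : ℕ)), Finset.sum_range_succ'] at hsum
  rw [if_neg m.succ_ne_zero, Nat.cast_zero, hd.h_zero, one_mul, Nat.sub_zero] at hsum
  have hterm (r : ℕ) (hr : r ∈ Finset.range (m + 1)) :
      h (r + 1 : ℕ) * ((-1) ^ (m + 1 - (r + 1)) * e (m + 1 - (r + 1) : ℕ)) =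
        (-1) ^ m * ((-1) ^ r * h (r + 1) * e (m - r)) := by
    have hrm : r ≤ m := Finset.mem_range_succ_iff.1 hr
    have hsign : (-1 : A) ^ (m - r) = (-1) ^ m * (-1) ^ r := by
      rw [← pow_add]
      exact neg_one_pow_congr (by rw [Nat.even_sub hrm, Nat.even_add])
    rw [Nat.add_sub_add_right, hsign, Nat.cast_sub hrm, Nat.cast_succ]
    ring
  rw [Finset.sum_congr rfl hterm, ← Finset.mul_sum, pow_succ, Nat.cast_succ] at hsum
  have hunit : (-1 : A) ^ m * (-1) ^ m = 1 := by rw [← mul_pow, neg_one_mul, neg_neg, one_pow]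
  linear_combination (-(-1) ^ m : A) * hsum +
    (∑ r ∈ Finset.range (m + 1), (-1) ^ r * h (r + 1) * e (m - r) - e (m + 1)) * hunit

lemma IsFusionPair.e_succ (hf : IsFusionPair n k h e) {m : ℕ} (hm : m + 1 < n + k) :
    e (m + 1) = ∑ i : Fin n, (-1) ^ (i.rev : ℕ) * h (i.rev + 1) * e (m - i.rev) := by
  let f : ℕ → A := fun r => (-1) ^ r * h (r + 1) * e (m - r)
  have hzero (r : ℕ) (hr : m < r ∨ n ≤ r ∧ r ≤ m) : f r = 0 := by
    rcases hr with hr | hr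
    · simp only [f, hf.e_neg (m - r) (by omega), mul_zero]
    · simp only [f, hf.h_eq_zero (r + 1) (by omega) (by omega), mul_zero, zero_mul]
  rw [hf.toIsDualPair.e_succ, sum_rev f]
  rcases le_total (m + 1) n with hmn | hmn
  · refine Finset.sum_subset (Finset.range_mono hmn) fun r _ hr => hzero r (Or.inl ?_)
    simpa using hr
  · refine (Finset.sum_subset (Finset.range_mono hmn) fun r hr hrn => hzero r ?_).symm
    simp only [Finset.mem_range] at hr hrn
    omega

lemma IsFusionPair.fusionSeq_eq (hf : IsFusionPair n k h e) {a : ℕ} (ha : a + 1 < 2 * n + k) :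
    fusionSeq n h a = e (a + 1 - n) := by
  induction a using Nat.strong_induction_on with
  | h a ih =>
    rcases lt_or_ge a n with han | han
    · rw [fusionSeq_of_lt h han]
      split_ifs with hlast
      · rw [← hf.e_zero]
        congr 1
        omega
      · exact (hf.e_neg _ (by omega)).symm
    · obtain ⟨m, rfl⟩ := Nat.exists_eq_add_of_le' han
      have hshift : ((m + n : ℕ) : ℤ) + 1 - n = m + 1 := by push_cast; ring
      rw [hshift, hf.e_succ (by omega)]
      refine (isSolution_fusionSeq n h m).trans (Finset.sum_congr rfl fun i _ => ?_)
      change Fin n at i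
      rw [ih (m + i) (by omega) (by omega)]
      have hindex : ((m + i : ℕ) : ℤ) + 1 - n = m - i.rev := by rw [Fin.val_rev]; omega
      rw [hindex]
      rfl

lemma IsFusionPair.fusionSeq_add [NeZero n] (hf : IsFusionPair n k h e) (a : ℕ) :
    fusionSeq n h (a + (n + k)) = fusionSeq n h (2 * n + k - 1) * fusionSeq n h a := by
  have hn := NeZero.pos n
  let E := fusionRecurrence n h
  set c := fusionSeq n h (2 * n + k - 1) with hc
  have hsol := isSolution_fusionSeq n h
  have hleft : E.IsSolution fun a => fusionSeq n h (a + (n + k)) := fun a => by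
    change fusionSeq n h (a + n + (n + k)) =
      ∑ i : Fin n, E.coeffs i * fusionSeq n h (a + i + (n + k))
    simp only [add_right_comm a _ (n + k)]
    exact hsol (a + (n + k))
  have hright : E.IsSolution fun a => c * fusionSeq n h a :=
    E.solSpace.smul_mem c hsol
  refine congrFun ((E.eq_iff_eqOn_range_order _ _ hleft hright).2 fun a ha => ?_) a
  have han : a < n := Finset.mem_range.1 ha
  change fusionSeq n h (a + (n + k)) = c * fusionSeq n h a
  rw [fusionSeq_of_lt h han]
  split_ifs with hlast
  · rw [mul_one, hc]
    congr 1
    omega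
  · rw [mul_zero, hf.fusionSeq_eq (by omega)]
    exact hf.e_eq_zero _ (by omega)

lemma IsFusionPair.coeff_det_companion [NeZero n] (hf : IsFusionPair n k h e) {r : ℕ}
    (hr : r < n + k) :
    (1 + (X : A[X]) • (companion (fusionRecurrence n h)).map C).det.coeff r = h r := by
  rw [det_one_add_X_smul_companion _ (NeZero.pos n)]
  change (1 + ∑ i : Fin n, X * C ((-1) ^ (i.rev : ℕ) * h (i.rev + 1)) * (-X) ^ (i.rev : ℕ) :
    A[X]).coeff r = h r
  rw [sum_rev fun i => X * C ((-1) ^ i * h (i + 1)) * (-X : A[X]) ^ i]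
  have hterm (i : ℕ) :
      X * C ((-1) ^ i * h (i + 1)) * (-X : A[X]) ^ i = C (h (i + 1)) * X ^ (i + 1) := by
    have hunit : (-1 : A[X]) ^ i * (-1) ^ i = 1 := by rw [← mul_pow, neg_one_mul, neg_neg, one_pow]
    rw [C_mul, C_pow, C_neg, C_1, neg_pow, pow_succ]
    linear_combination (X * C (h (i + 1)) * X ^ i) * hunit
  simp only [hterm, coeff_add, finsetSum_coeff, coeff_C_mul_X_pow, coeff_one]
  cases r with
  | zero => simp [hf.h_zero]
  | succ r =>
    simp only [Nat.succ_ne_zero, if_false, zero_add, Nat.add_right_cancel_iff, Finset.sum_ite_eq,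
      Finset.mem_range, Nat.cast_succ]
    split_ifs with hrn
    · rfl
    · exact (hf.h_eq_zero _ (by omega) (by omega)).symm

end FusionPairs

section FusionDet

variable {A : Type*} [CommRing A] {n k : ℕ} [NeZero n] {h e : ℤ → A}

/-- The set `I`, viewed as a vertical strip, added to the shape `x`. -/
def bump {n : ℕ} (x : ZMod n → ℕ) (I : Finset (ZMod n)) : ZMod n → ℕ :=
  fun j => x j + if j ∈ I then 1 else 0

/-- The occupation number at site `i` of the cylindric shape `x` with `x (j - n) = x j + k`;
it is negative if `x` fails to be weakly decreasing there. -/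
def occ {n : ℕ} (k : ℕ) (x : ZMod n → ℕ) (i : ZMod n) : ℤ :=
  x (i - 1) + (if i = 0 then k else 0) - x i

lemma val_finEquiv (i : Fin n) : (ZMod.finEquiv n i).val = i := by
  obtain _ | n := n
  · exact i.elim0
  · rfl

lemma val_sub_one_add_one (i : ZMod n) : (i - 1).val + 1 = if i = 0 then n else i.val := by
  have hn := NeZero.pos n
  split_ifs with hi
  · have hcast : i - 1 = ((n - 1 : ℕ) : ZMod n) := by
      rw [hi, Nat.cast_sub hn, ZMod.natCast_self, Nat.cast_one]
    rw [hcast, ZMod.val_cast_of_lt (by omega), Nat.sub_add_cancel hn]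
  · have hpos : 0 < i.val := ZMod.val_pos.2 hi
    have hlt := ZMod.val_lt i
    have hcast : i - 1 = ((i.val - 1 : ℕ) : ZMod n) := by
      rw [Nat.cast_sub hpos, ZMod.natCast_zmod_val, Nat.cast_one]
    rw [hcast, ZMod.val_cast_of_lt (by omega), Nat.sub_add_cancel hpos]

/-- The determinant attached to a cylindric shape; by `IsFusionPair.fusionDet_eq` it is
`det (e (x_i - i + j))` when the entries of `x` are at most `k`. -/
def fusionDet (h : ℤ → A) (x : ZMod n → ℕ) : A :=
  shiftDet (fusionSeq n h) fun i : Fin n => x (ZMod.finEquiv n i) + i.rev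

lemma IsFusionPair.fusionDet_eq (hf : IsFusionPair n k h e) {x : ZMod n → ℕ} (hx : ∀ j, x j ≤ k) :
    fusionDet h x = (jacobiTrudi e fun i : Fin n => x (ZMod.finEquiv n i)).det := by
  rw [fusionDet, shiftDet, jacobiTrudi]
  congr 2
  ext i j
  have hxi := hx (ZMod.finEquiv n i)
  rw [hf.fusionSeq_eq (by rw [Fin.val_rev]; omega), Fin.val_rev]
  congr 1
  omega

theorem IsFusionPair.sum_fusionDet_bump (hf : IsFusionPair n k h e) (x : ZMod n → ℕ) {r : ℕ}
    (hr : r < n + k) :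
    ∑ I ∈ (Finset.univ : Finset (ZMod n)).powersetCard r, fusionDet h (bump x I) =
      h r * fusionDet h x := by
  have hpieri : ∑ J ∈ (Finset.univ : Finset (Fin n)).powersetCard r,
      shiftDet (fusionSeq n h)
        (fun i : Fin n => x (ZMod.finEquiv n i) + i.rev + if i ∈ J then 1 else 0) =
      h r * fusionDet h x := by
    rw [← hf.coeff_det_companion hr]
    exact sum_shiftDet_add_indicator _ (isSolution_fusionSeq n h) _ r
  rw [← hpieri]
  refine (Finset.sum_equiv (Equiv.finsetCongr (ZMod.finEquiv n).toEquiv) (fun J => ?_)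
    fun J _ => congrArg (shiftDet _) (funext fun i => ?_)).symm
  · rw [Finset.mem_powersetCard_univ, Finset.mem_powersetCard_univ, Equiv.finsetCongr_apply,
      Finset.card_map]
  · have hmem : ZMod.finEquiv n i ∈ (ZMod.finEquiv n).toEquiv.finsetCongr J ↔ i ∈ J :=
      Finset.mem_map' _
    simp only [bump, hmem]
    ring

lemma IsFusionPair.fusionDet_add_const (hf : IsFusionPair n k h e) (hk : 0 < k) (x : ZMod n → ℕ)
    (c : ℕ) : fusionDet h (fun j => x j + c) = fusionDet h x := by
  induction c with
  | zero => rfl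
  | succ c ih =>
    have hpieri := hf.sum_fusionDet_bump (fun j => x j + c) (r := n) (by omega)
    have huniv : (Finset.univ : Finset (ZMod n)).powersetCard n = {Finset.univ} := by
      simpa only [Finset.card_univ, ZMod.card] using
        Finset.powersetCard_self (Finset.univ : Finset (ZMod n))
    rw [hf.h_level, one_mul, ih, huniv, Finset.sum_singleton] at hpieri
    refine Eq.trans (congrArg _ (funext fun j => ?_)) hpieri
    simp only [bump, Finset.mem_univ, if_true, add_assoc]

lemma IsFusionPair.fusionDet_eq_zero (hf : IsFusionPair n k h e) {x : ZMod n → ℕ} {i : ZMod n}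
    (hi : occ k x i = -1) : fusionDet h x = 0 := by
  obtain ⟨a, rfl⟩ := (ZMod.finEquiv n).surjective i
  obtain ⟨b, hb⟩ := (ZMod.finEquiv n).surjective (ZMod.finEquiv n a - 1)
  rw [occ, ← hb] at hi
  have hab : a ≠ b := by
    rintro rfl
    split_ifs at hi <;> omega
  have hbval : (b : ℕ) + 1 = if ZMod.finEquiv n a = 0 then n else (a : ℕ) := by
    rw [← val_finEquiv b, hb, val_sub_one_add_one, val_finEquiv]
  split_ifs at hi hbval with ha
  · have haval : (a : ℕ) = 0 := by rw [← val_finEquiv, ha, ZMod.val_zero]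
    refine shiftDet_eq_zero_of_eq_add hf.fusionSeq_add hab ?_
    rw [Fin.val_rev, Fin.val_rev]
    omega
  · refine shiftDet_eq_zero_of_eq _ hab ?_
    rw [Fin.val_rev, Fin.val_rev]
    omega

end FusionDet

section Hopping

lemma padded_le {r c : ℕ} (σ : PartBox r c) (t : ℕ) : padded (partVal σ) t ≤ c := by
  rw [padded]
  split_ifs with h
  · exact Nat.lt_succ_iff.1 (σ.1 ⟨t, h⟩).2
  · exact Nat.zero_le _

lemma antitone_padded {r c : ℕ} (σ : PartBox r c) : Antitone (padded (partVal σ)) := by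
  intro s t hst
  simp only [padded]
  split_ifs with ht hs
  · exact σ.2 _ _ hst
  · omega
  · exact Nat.zero_le _
  · exact le_rfl

variable {n k : ℕ}

/-- The cylindric shape of a partition. -/
def shape (σ : PartBox (n - 1) k) (j : ZMod n) : ℕ := padded (partVal σ) j.val

/-- `x` is the cylindric shape of `σ` up to adding a constant. -/
def Represents (σ : PartBox (n - 1) k) (x : ZMod n → ℕ) : Prop :=
  ∃ c, ∀ j, x j = shape σ j + c

lemma represents_shape (σ : PartBox (n - 1) k) : Represents σ (shape σ) := ⟨0, fun _ => rfl⟩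

lemma occ_bump_singleton (x : ZMod n → ℕ) (i c : ZMod n) :
    occ k (bump x {i}) c = occ k x c - (if c = i then 1 else 0) + if c = i + 1 then 1 else 0 := by
  simp only [occ, bump, Finset.mem_singleton, sub_eq_iff_eq_add]
  push_cast
  ring

lemma bump_insert (x : ZMod n → ℕ) {I : Finset (ZMod n)} {i : ZMod n} (hi : i ∉ I) :
    bump x (insert i I) = bump (bump x I) {i} := by
  ext j
  rcases eq_or_ne j i with rfl | hj
  · simp [bump, hi]
  · simp [bump, hj]

/-- The factors `a j`, `j ∈ I`, multiplied in the order in which `j` runs through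
`g + (s - 1), …, g + 1, g`. -/
def sweepProd {M : Type*} [Monoid M] (a : ZMod n → M) (I : Finset (ZMod n)) (g : ZMod n)
    (s : ℕ) : M :=
  ((List.range s).reverse.map fun t : ℕ => if g + t ∈ I then a (g + t) else 1).prod

/-- The elements of `I` met while running through `g, g + 1, …, g + (s - 1)`. -/
def swept (I : Finset (ZMod n)) (g : ZMod n) (s : ℕ) : Finset (ZMod n) :=
  I.filter fun j => (j - g).val < s

lemma sweepProd_succ {M : Type*} [Monoid M] (a : ZMod n → M) (I : Finset (ZMod n)) (g : ZMod n)
    (s : ℕ) :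
    sweepProd a I g (s + 1) = (if g + s ∈ I then a (g + s) else 1) * sweepProd a I g s := by
  simp [sweepProd, List.range_succ]

lemma val_add_natCast_sub (g : ZMod n) {s : ℕ} (hs : s < n) : (g + s - g).val = s := by
  rw [add_sub_cancel_left, ZMod.val_cast_of_lt hs]

lemma cfgOf_injective : Function.Injective (cfgOf n k) := by
  intro σ τ h
  have hpadded (t : ℕ) (ht : t < n) : padded (partVal σ) t = padded (partVal τ) t := by
    induction t with
    | zero =>
      have hzero := congrFun h 0
      simp only [cfgOf, ZMod.val_zero, if_true] at hzero
      have hσ := padded_le σ 0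
      have hτ := padded_le τ 0
      omega
    | succ t ih =>
      have hsucc := congrFun h (t + 1 : ℕ)
      simp only [cfgOf, ZMod.val_cast_of_lt ht, Nat.succ_ne_zero, if_false,
        Nat.add_sub_cancel] at hsucc
      have hσ := antitone_padded σ (Nat.le_add_right t 1)
      have hτ := antitone_padded τ (Nat.le_add_right t 1)
      have hprev := ih (by omega)
      omega
  refine Subtype.ext (funext fun i => Fin.ext ?_)
  simpa [padded, partVal] using hpadded i (by omega)

/-- A hop that is blocked at its turn stays blocked: its left neighbour has already moved. -/
lemma occ_bump_eq_neg_one {x : ZMod n → ℕ} {I : Finset (ZMod n)} {g : ZMod n} (hg : g ∉ I) {s : ℕ}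
    (hs : s < n) (hI : g + (s : ZMod n) ∈ I) (hocc : occ k (bump x (swept I g s)) (g + s) = 0) :
    occ k (bump x I) (g + s) = -1 := by
  have hspos : s ≠ 0 := by
    rintro rfl
    exact hg (by simpa using hI)
  have hi : g + s ∉ swept I g s := fun h =>
    (Finset.mem_filter.1 h).2.ne (val_add_natCast_sub g hs)
  have hprev : g + s - 1 ∈ swept I g s ↔ g + s - 1 ∈ I := by
    have hcast : g + s - 1 - g = ((s - 1 : ℕ) : ZMod n) := by
      rw [Nat.cast_sub (by omega), Nat.cast_one]
      ring
    rw [swept, Finset.mem_filter, hcast, ZMod.val_cast_of_lt (by omega)]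
    exact and_iff_left (by omega)
  simp only [occ, bump, hi, hI, hprev, if_true, if_false] at hocc ⊢
  omega

variable [NeZero n]

lemma cfgOf_eq_occ {σ : PartBox (n - 1) k} {x : ZMod n → ℕ} (hx : Represents σ x) (i : ZMod n) :
    (cfgOf n k σ i : ℤ) = occ k x i := by
  obtain ⟨c, hc⟩ := hx
  have hval := val_sub_one_add_one i
  simp only [occ, cfgOf, hc, shape, ZMod.val_eq_zero]
  split_ifs at hval ⊢ with hi
  · have hlast : padded (partVal σ) (i - 1).val = 0 := dif_neg (by omega)
    have hle := padded_le σ 0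
    rw [hlast, hi, ZMod.val_zero]
    omega
  · have hle := antitone_padded σ (Nat.sub_le i.val 1)
    rw [eq_tsub_of_add_eq hval]
    omega

lemma exists_represents {x : ZMod n → ℕ} (hx : ∀ i, 0 ≤ occ k x i) :
    ∃ σ : PartBox (n - 1) k, Represents σ x := by
  let y : ℕ → ℕ := fun t => x ((min t (n - 1) : ℕ) : ZMod n)
  have hy : Antitone y := antitone_nat_of_succ_le fun t => by
    rcases lt_or_ge (t + 1) n with ht | ht
    · have hocc := hx (t + 1 : ℕ)
      have hne : ((t + 1 : ℕ) : ZMod n) ≠ 0 := by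
        rw [← ZMod.val_pos, ZMod.val_cast_of_lt ht]
        exact t.succ_pos
      have hpred : ((t + 1 : ℕ) : ZMod n) - 1 = t := by rw [Nat.cast_succ, add_sub_cancel_right]
      rw [occ, if_neg hne, hpred] at hocc
      simp only [y, min_eq_left (show t + 1 ≤ n - 1 by omega),
        min_eq_left (show t ≤ n - 1 by omega)]
      omega
    · simp only [y, min_eq_right (show n - 1 ≤ t + 1 by omega),
        min_eq_right (show n - 1 ≤ t by omega), le_refl]
  have hyval (j : ZMod n) : y j.val = x j := by
    have hj := ZMod.val_lt j
    simp only [y, min_eq_left (show j.val ≤ n - 1 by omega), ZMod.natCast_zmod_val]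
  have hlast : ((0 : ZMod n) - 1).val = n - 1 := by
    exact Nat.eq_sub_of_add_eq ((val_sub_one_add_one 0).trans (if_pos rfl))
  have hy0 : y 0 ≤ y (n - 1) + k := by
    have hocc := hx 0
    rw [occ, if_pos rfl, ← hyval, ← hyval, hlast, ZMod.val_zero] at hocc
    omega
  refine ⟨⟨fun j => ⟨y j - y (n - 1), ?_⟩, fun i j hij => ?_⟩, y (n - 1), fun j => ?_⟩
  · have hle := hy (Nat.zero_le (j : ℕ))
    omega
  · exact Nat.sub_le_sub_right (hy hij) _
  · have hle := hy (show j.val ≤ n - 1 from Nat.le_sub_one_of_lt (ZMod.val_lt j))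
    rw [← hyval, shape, padded]
    split_ifs with hj
    · exact (Nat.sub_add_cancel hle).symm
    · rw [show j.val = n - 1 by have := ZMod.val_lt j; omega, zero_add]

lemma toBasis_cfgOf (R : Type*) [CommRing R] (σ : PartBox (n - 1) k) (r : R) :
    toBasis R n k (cfgOf n k σ) r = Finsupp.single σ r := by
  simp only [toBasis, cfgOf_injective.eq_iff, Finset.sum_ite_eq', Finset.mem_univ, if_true]

variable (R : Type*) [CommRing R]

lemma aOp_single (z : R) (σ : PartBox (n - 1) k) (i : ZMod n) :
    aOp R n k z i (Finsupp.single σ 1) =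
      if cfgOf n k σ i = 0 then 0
      else toBasis R n k (fun c => cfgOf n k σ c - (Pi.single i 1 : ZMod n → ℕ) c +
        (Pi.single (i + 1) 1 : ZMod n → ℕ) c) (if i = 0 then z else 1) := by
  simp [aOp]

lemma aOp_single_of_occ_eq_zero {σ : PartBox (n - 1) k} {x : ZMod n → ℕ} (hx : Represents σ x)
    {i : ZMod n} (hi : occ k x i = 0) (z : R) : aOp R n k z i (Finsupp.single σ 1) = 0 := by
  rw [aOp_single, if_pos]
  exact_mod_cast (cfgOf_eq_occ hx i).trans hi

lemma exists_aOp_single_eq {σ : PartBox (n - 1) k} {x : ZMod n → ℕ} (hx : Represents σ x)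
    {i : ZMod n} (hi : occ k x i ≠ 0) :
    ∃ τ : PartBox (n - 1) k, aOp R n k 1 i (Finsupp.single σ 1) = Finsupp.single τ 1 ∧
      Represents τ (bump x {i}) := by
  have hcfg : ∀ c, (cfgOf n k σ c : ℤ) = occ k x c := cfgOf_eq_occ hx
  have hbump (c : ZMod n) : occ k (bump x {i}) c =
      cfgOf n k σ c - (if c = i then 1 else 0) + if c = i + 1 then 1 else 0 := by
    rw [occ_bump_singleton, hcfg]
  rw [← hcfg, Nat.cast_ne_zero] at hi
  obtain ⟨τ, hτ⟩ : ∃ τ : PartBox (n - 1) k, Represents τ (bump x {i}) :=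
    exists_represents fun c => by
      rw [hbump]
      by_cases hc : c = i
      · rw [if_pos hc, hc]
        split_ifs <;> omega
      · rw [if_neg hc]
        split_ifs <;> omega
  refine ⟨τ, ?_, hτ⟩
  rw [aOp_single, if_neg hi, ite_self, ← toBasis_cfgOf]
  congr 1
  ext c
  have hτc := (cfgOf_eq_occ hτ c).trans (hbump c)
  simp only [Pi.single_apply]
  by_cases hc : c = i
  · rw [if_pos hc] at hτc ⊢
    rw [hc] at hτc ⊢
    split_ifs at hτc ⊢ <;> omega
  · rw [if_neg hc] at hτc ⊢
    split_ifs at hτc ⊢ <;> omega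

lemma zgap_notMem {I : Finset (ZMod n)} (hI : I.card < n) : zgap I ∉ I := by
  have hne : ((Finset.univ \ I).image ZMod.val).Nonempty := by
    rw [Finset.image_nonempty, Finset.sdiff_nonempty]
    intro h
    have hcard := Finset.card_le_card h
    rw [Finset.card_univ, ZMod.card] at hcard
    omega
  rw [zgap, dif_pos hne]
  obtain ⟨a, ha, hval⟩ := Finset.mem_image.1 (Finset.min'_mem _ hne)
  rw [← hval, ZMod.natCast_zmod_val]
  exact (Finset.mem_sdiff.1 ha).2

lemma cycProdDesc_eq_sweepProd {M : Type*} [Monoid M] (a : ZMod n → M) (I : Finset (ZMod n)) :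
    cycProdDesc a I = sweepProd a I (zgap I) n := by
  have hcast : (do let t ← List.range n; pure ((t : ℕ) : ZMod n)) =
      (List.range n).map fun t => ((t : ℕ) : ZMod n) := by
    rw [List.map_eq_flatMap]; rfl
  have hreverse : (List.range n).reverse = (List.range n).map (n - 1 - ·) := by
    rw [List.range_eq_range', List.reverse_range', zero_add, ← List.range_eq_range']
  rw [cycProdDesc, hcast, sweepProd, hreverse, List.map_map, List.map_map]
  refine congrArg List.prod (List.map_congr_left fun t ht => ?_)
  have hgap : zgap I - 1 - (t : ZMod n) = zgap I + ((n - 1 - t : ℕ) : ZMod n) := by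
    have htn := List.mem_range.1 ht
    rw [Nat.sub_sub, Nat.cast_sub (by omega), ZMod.natCast_self, Nat.cast_add, Nat.cast_one]
    ring
  simp only [Function.comp_apply, hgap]

lemma swept_succ (I : Finset (ZMod n)) (g : ZMod n) {s : ℕ} (hs : s < n) :
    swept I g (s + 1) =
      if g + s ∈ I then insert (g + (s : ZMod n)) (swept I g s) else swept I g s := by
  have hval (j : ZMod n) : (j - g).val < s + 1 ↔ j = g + s ∨ (j - g).val < s := by
    rw [Nat.lt_succ_iff_lt_or_eq, or_comm, ← sub_eq_iff_eq_add',
      ← (ZMod.val_injective n).eq_iff (b := (s : ZMod n)), ZMod.val_cast_of_lt hs]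
  ext j
  simp only [swept, hval]
  split_ifs with hI <;> simp only [Finset.mem_insert, Finset.mem_filter] <;> grind

lemma swept_self (I : Finset (ZMod n)) (g : ZMod n) : swept I g n = I :=
  Finset.filter_true_of_mem fun j _ => ZMod.val_lt (j - g)

lemma sweepProd_aOp_single {σ : PartBox (n - 1) k} {x : ZMod n → ℕ} (hx : Represents σ x)
    {I : Finset (ZMod n)} {g : ZMod n} (hg : g ∉ I) {s : ℕ} (hs : s ≤ n) :
    (∃ τ : PartBox (n - 1) k,
      sweepProd (aOp R n k 1) I g s (Finsupp.single σ 1) = Finsupp.single τ 1 ∧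
        Represents τ (bump x (swept I g s))) ∨
    (sweepProd (aOp R n k 1) I g s (Finsupp.single σ 1) = 0 ∧ ∃ i, occ k (bump x I) i = -1) := by
  induction s with
  | zero => exact Or.inl ⟨σ, by simp [sweepProd], by simpa [swept, bump, Represents] using hx⟩
  | succ s ih =>
    rw [sweepProd_succ, Module.End.mul_apply, swept_succ I g (by omega)]
    rcases ih (by omega) with ⟨τ, hτ, hrep⟩ | ⟨hzero, hdead⟩
    · rw [hτ]
      split_ifs with hI
      · by_cases hocc : occ k (bump x (swept I g s)) (g + s) = 0
        · exact Or.inr ⟨aOp_single_of_occ_eq_zero R hrep hocc 1, _,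
            occ_bump_eq_neg_one hg (by omega) hI hocc⟩
        · have hi : g + s ∉ swept I g s := fun h =>
            (Finset.mem_filter.1 h).2.ne (val_add_natCast_sub g (by omega))
          rw [bump_insert x hi]
          exact Or.inl (exists_aOp_single_eq R hrep hocc)
      · exact Or.inl ⟨τ, rfl, hrep⟩
    · exact Or.inr ⟨by rw [hzero, map_zero], hdead⟩

theorem cycProdDesc_aOp_single {σ : PartBox (n - 1) k} {x : ZMod n → ℕ} (hx : Represents σ x)
    {I : Finset (ZMod n)} (hI : I.card < n) :
    (∃ τ : PartBox (n - 1) k,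
      cycProdDesc (aOp R n k 1) I (Finsupp.single σ 1) = Finsupp.single τ 1 ∧
        Represents τ (bump x I)) ∨
    (cycProdDesc (aOp R n k 1) I (Finsupp.single σ 1) = 0 ∧ ∃ i, occ k (bump x I) i = -1) := by
  simpa only [cycProdDesc_eq_sweepProd, swept_self] using
    sweepProd_aOp_single R hx (zgap_notMem hI) le_rfl

end Hopping

section NoncommutativeDeterminant

lemma map_list_prod_apply {R R' M M' ι : Type*} [Ring R] [Ring R'] [AddCommGroup M]
    [AddCommGroup M'] [Module R M] [Module R' M'] (θ : M →+ M') (l : List ι)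
    {f : ι → Module.End R M} {g : ι → Module.End R' M'} (hfg : ∀ i v, θ (f i v) = g i (θ v))
    (v : M) : θ ((l.map f).prod v) = (l.map g).prod (θ v) := by
  induction l with
  | nil => rfl
  | cons i l ih =>
    rw [List.map_cons, List.prod_cons, Module.End.mul_apply, hfg, ih, List.map_cons,
      List.prod_cons, Module.End.mul_apply]

lemma map_ncDet_apply {R R' M M' : Type*} [Ring R] [Ring R'] [AddCommGroup M] [AddCommGroup M']
    [Module R M] [Module R' M'] (θ : M →+ M') {r : ℕ} {f : Fin r → Fin r → Module.End R M}
    {g : Fin r → Fin r → Module.End R' M'} (hfg : ∀ i j v, θ (f i j v) = g i j (θ v)) (v : M) :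
    θ (ncDet f v) = ncDet g (θ v) := by
  rw [ncDet, ncDet, LinearMap.sum_apply, LinearMap.sum_apply, map_sum]
  refine Finset.sum_congr rfl fun w _ => ?_
  rw [Module.End.mul_apply, Module.End.mul_apply, Module.End.intCast_apply,
    Module.End.intCast_apply, map_zsmul, map_list_prod_apply θ _ fun i => hfg (w i) i]

lemma map_ncDet {A B : Type*} [Ring A] [Ring B] (F : A →+* B) {r : ℕ} (M : Fin r → Fin r → A) :
    F (ncDet M) = ncDet fun i j => F (M i j) := by
  simp only [ncDet, map_sum, map_mul, map_intCast, map_list_prod, List.map_map, Function.comp_def]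

lemma ncDet_eq_det {A : Type*} [CommRing A] {r : ℕ} (M : Fin r → Fin r → A) :
    ncDet M = (Matrix.of M).det := by
  simp only [ncDet, Matrix.det_apply', Fin.prod_univ_def, Matrix.of_apply]

end NoncommutativeDeterminant

section Transpose

variable {r c : ℕ} (σ : PartBox r c)

lemma padded_val (i : Fin r) : padded (partVal σ) i = partVal σ i := dif_pos i.2

lemma transpGen_le {m : ℕ} (a : Fin m) : transpGen (partVal σ) m a ≤ r :=
  (Finset.card_filter_le _ _).trans (Finset.card_fin r).le

lemma lt_transpGen_iff {m : ℕ} (a : Fin m) (j : ℕ) :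
    j < transpGen (partVal σ) m a ↔ (a : ℕ) < padded (partVal σ) j := by
  rw [transpGen]
  constructor
  · contrapose!
    intro ha
    have hsub : (Finset.univ.filter fun i : Fin r => (a : ℕ) + 1 ≤ partVal σ i) ⊆
        Finset.univ.filter fun i : Fin r => (i : ℕ) < j := by
      refine Finset.monotone_filter_right _ fun i _ hi => ?_
      by_contra! hji
      have := antitone_padded σ hji
      rw [padded_val] at this
      omega
    have := Finset.card_le_card hsub
    rw [Fin.card_filter_val_lt] at this
    omega
  · intro ha
    have hj : j < r := by
      by_contra hj
      rw [padded, dif_neg hj] at ha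
      omega
    have hsub : (Finset.univ.filter fun i : Fin r => (i : ℕ) < j + 1) ⊆
        Finset.univ.filter fun i : Fin r => (a : ℕ) + 1 ≤ partVal σ i := by
      refine Finset.monotone_filter_right _ fun i _ hi => ?_
      have := antitone_padded σ (Nat.lt_succ_iff.1 hi)
      rw [padded_val] at this
      omega
    have := Finset.card_le_card hsub
    rw [Fin.card_filter_val_lt] at this
    omega

lemma isConjugate_transpGen {n m : ℕ} (hn : r ≤ n) (hm : padded (partVal σ) 0 ≤ m) :
    IsConjugate (fun j : Fin n => padded (partVal σ) j) (transpGen (partVal σ) m) where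
  le_left j := (antitone_padded σ j.val.zero_le).trans hm
  le_right a := (transpGen_le σ a).trans hn
  lt_iff_lt a j := lt_transpGen_iff σ a j

end Transpose

section FusionAction

variable {A : Type*} [CommRing A] {n k : ℕ} [NeZero n] {h e : ℤ → A}

lemma IsFusionPair.fusionDet_shape (hf : IsFusionPair n k h e) (σ : PartBox (n - 1) k) {m : ℕ}
    (hm : padded (partVal σ) 0 ≤ m) :
    fusionDet h (shape σ) = (jacobiTrudi h (transpGen (partVal σ) m)).det := by
  rw [hf.fusionDet_eq (x := shape σ) fun j => padded_le σ j.val,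
    hf.toIsDualPair.det_jacobiTrudi (isConjugate_transpGen σ n.pred_le hm)]
  simp only [shape, val_finEquiv]

lemma IsFusionPair.fusionDet_shape_partEmpty (hf : IsFusionPair n k h e) :
    fusionDet h (shape (partEmpty (n - 1) k)) = 1 := by
  have hempty : padded (partVal (partEmpty (n - 1) k)) 0 ≤ 0 := by
    rw [padded]
    split_ifs <;> rfl
  rw [hf.fusionDet_shape _ hempty, Matrix.det_isEmpty]

lemma IsFusionPair.fusionDet_eq_of_represents (hf : IsFusionPair n k h e) (hk : 0 < k)
    {σ : PartBox (n - 1) k} {x : ZMod n → ℕ} (hx : Represents σ x) :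
    fusionDet h x = fusionDet h (shape σ) := by
  obtain ⟨c, hc⟩ := hx
  rw [funext hc, hf.fusionDet_add_const hk]

variable {φ : HkSp ℤ n k →ₗ[ℤ] A}

lemma IsFusionPair.map_cycProdDesc_single (hf : IsFusionPair n k h e) (hk : 0 < k)
    (hφ : ∀ σ, φ (Finsupp.single σ 1) = fusionDet h (shape σ)) (σ : PartBox (n - 1) k)
    {I : Finset (ZMod n)} (hI : I.card < n) :
    φ (cycProdDesc (aOp ℤ n k 1) I (Finsupp.single σ 1)) = fusionDet h (bump (shape σ) I) := by
  rcases cycProdDesc_aOp_single ℤ (represents_shape σ) hI with ⟨τ, hτ, hrep⟩ | ⟨hzero, i, hi⟩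
  · rw [hτ, hφ, hf.fusionDet_eq_of_represents hk hrep]
  · rw [hzero, map_zero, hf.fusionDet_eq_zero hi]

theorem IsFusionPair.map_eAInt (hf : IsFusionPair n k h e) (hk : 0 < k)
    (hφ : ∀ σ, φ (Finsupp.single σ 1) = fusionDet h (shape σ)) {t : ℤ} (ht : t < n + k)
    (v : HkSp ℤ n k) : φ (eAInt ℤ n k 1 t v) = h t * φ v := by
  suffices hcomp : φ ∘ₗ eAInt ℤ n k 1 t = LinearMap.mulLeft ℤ (h t) ∘ₗ φ from
    LinearMap.congr_fun hcomp v
  refine Finsupp.lhom_ext' fun σ => LinearMap.ext_ring ?_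
  change φ (eAInt ℤ n k 1 t (Finsupp.single σ 1)) = h t * φ (Finsupp.single σ 1)
  rw [eAInt]
  split_ifs with h0 h1 hlevel
  · rw [h0, hf.h_zero, one_mul, Module.End.one_apply]
  · lift t to ℕ using by omega
    rw [LinearMap.sum_apply, map_sum, hφ, ← hf.sum_fusionDet_bump _ (by omega), Int.toNat_natCast]
    refine Finset.sum_congr rfl fun I hI => hf.map_cycProdDesc_single hk hφ σ ?_
    rw [Finset.mem_powersetCard_univ.1 hI]
    omega
  · rw [hlevel, hf.h_level, one_smul, one_mul, Module.End.one_apply]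
  · have hzero : h t = 0 := by
      rcases lt_or_ge t 0 with hneg | hpos
      · exact hf.h_neg t hneg
      · exact hf.h_eq_zero t (by omega) ht
    rw [hzero, zero_mul, LinearMap.zero_apply, map_zero]

theorem IsFusionPair.map_sAOp (hf : IsFusionPair n k h e) (hk : 0 < k)
    (hφ : ∀ σ, φ (Finsupp.single σ 1) = fusionDet h (shape σ)) (σ : PartBox (n - 1) k)
    (v : HkSp ℤ n k) : φ (sAOp ℤ n k 1 σ v) = φ (Finsupp.single σ 1) * φ v := by
  have hentry (i j : Fin (padded (partVal σ) 0)) (w : HkSp ℤ n k) :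
      φ (eAInt ℤ n k 1 (transpGen (partVal σ) (padded (partVal σ) 0) i - (i : ℕ) + (j : ℕ)) w) =
        (Algebra.lmul ℤ A).toRingHom
          (h (transpGen (partVal σ) (padded (partVal σ) 0) i - (i : ℕ) + (j : ℕ))) (φ w) := by
    refine hf.map_eAInt hk hφ ?_ w
    have := transpGen_le σ i
    have := padded_le σ 0
    omega
  rw [sAOp, hφ, hf.fusionDet_shape σ le_rfl]
  refine (map_ncDet_apply φ.toAddMonoidHom hentry v).trans ?_
  rw [← map_ncDet, ncDet_eq_det]
  rfl

lemma IsFusionPair.e_mul_mem (hf : IsFusionPair n k h e) {M : AddSubgroup A}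
    (hM : ∀ t : ℤ, t < n + k → ∀ x ∈ M, h t * x ∈ M) {m : ℕ} (hm : m ≤ k) :
    ∀ x ∈ M, e m * x ∈ M := by
  induction m using Nat.strong_induction_on with
  | _ m ih =>
    intro x hx
    obtain _ | m := m
    · rwa [Nat.cast_zero, hf.toIsDualPair.e_zero, one_mul]
    · rw [Nat.cast_succ, hf.toIsDualPair.e_succ, Finset.sum_mul]
      refine sum_mem fun r hr => ?_
      have hrm : r ≤ m := Finset.mem_range_succ_iff.1 hr
      have := NeZero.pos n
      have hmem := hM (r + 1) (by omega) _ (ih (m - r) (by omega) (by omega) x hx)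
      rw [Nat.cast_sub hrm] at hmem
      rcases neg_one_pow_eq_or A r with hsign | hsign
      · simpa only [hsign, one_mul, mul_assoc] using hmem
      · simpa only [hsign, neg_one_mul, neg_mul, one_mul, mul_assoc] using neg_mem hmem

end FusionAction

section Quotient

open MvPolynomial

open Finset.HasAntidiagonal (antidiagonal)

variable {n k : ℕ}

/-- The elementary symmetric polynomial `e_t` in `Λ⁽ᵏ⁾`, with `e_t = 0` for `t < 0`. -/
def eLamInt (k : ℕ) (t : ℤ) : symmetricSubalgebra (Fin k) ℤ :=
  if 0 ≤ t then eLam k t.toNat else 0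

lemma coe_hLam_natCast (k m : ℕ) : (hLam k m : MvPolynomial (Fin k) ℤ) = hsymm (Fin k) ℤ m := by
  simp only [hLam, if_pos (Int.natCast_nonneg m), Int.toNat_natCast]

lemma coe_eLamInt_natCast (k m : ℕ) :
    (eLamInt k m : MvPolynomial (Fin k) ℤ) = esymm (Fin k) ℤ m := by
  rw [eLamInt, if_pos (Int.natCast_nonneg m), Int.toNat_natCast, eLam]

lemma eLamInt_eq_zero {m : ℤ} (hm : k < m) : eLamInt k m = 0 := by
  lift m to ℕ using by omega
  have hempty : (Finset.univ : Finset (Fin k)).powersetCard m = ∅ :=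
    Finset.powersetCard_eq_empty.2 (by rw [Finset.card_fin]; omega)
  refine Subtype.ext ?_
  rw [coe_eLamInt_natCast, esymm, hempty, Finset.sum_empty, ZeroMemClass.coe_zero]

lemma isDualPair_hLam_eLamInt (k : ℕ) : IsDualPair (hLam k) (eLamInt k) where
  h_neg m hm := if_neg hm.not_ge
  e_neg m hm := if_neg hm.not_ge
  h_zero := Subtype.ext ((coe_hLam_natCast k 0).trans (hsymm_zero _ _))
  sum_antidiagonal m := by
    refine Subtype.ext ?_
    have hsum := sum_antidiagonal_hsymm_mul_esymm (σ := Fin k) (R := ℤ) m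
    simp only [← coe_hLam_natCast, ← coe_eLamInt_natCast] at hsum
    push_cast
    rw [hsum]
    split_ifs <;> rfl

lemma IsDualPair.map {A B : Type*} [CommRing A] [CommRing B] {h e : ℤ → A} (hd : IsDualPair h e)
    (f : A →+* B) : IsDualPair (fun t => f (h t)) fun t => f (e t) where
  h_neg m hm := by rw [hd.h_neg m hm, map_zero]
  e_neg m hm := by rw [hd.e_neg m hm, map_zero]
  h_zero := by rw [hd.h_zero, map_one]
  sum_antidiagonal m := by
    have hsum := congrArg f (hd.sum_antidiagonal m)
    simpa only [map_sum, map_mul, map_pow, map_neg, map_one, apply_ite f, map_zero] using hsum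

/-- The quotient map `Λ⁽ᵏ⁾ → Λ⁽ᵏ⁾ / fusionIdeal n k`. -/
def fusionMk (n k : ℕ) :
    symmetricSubalgebra (Fin k) ℤ →+* symmetricSubalgebra (Fin k) ℤ ⧸ fusionIdeal n k :=
  Ideal.Quotient.mk _

/-- The class of `h_t` in `Λ⁽ᵏ⁾ / fusionIdeal n k`. -/
def hQuot (n k : ℕ) (t : ℤ) : symmetricSubalgebra (Fin k) ℤ ⧸ fusionIdeal n k :=
  fusionMk n k (hLam k t)

/-- The class of `e_t` in `Λ⁽ᵏ⁾ / fusionIdeal n k`. -/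
def eQuot (n k : ℕ) (t : ℤ) : symmetricSubalgebra (Fin k) ℤ ⧸ fusionIdeal n k :=
  fusionMk n k (eLamInt k t)

lemma isFusionPair_hQuot_eQuot (n k : ℕ) : IsFusionPair n k (hQuot n k) (eQuot n k) where
  toIsDualPair := (isDualPair_hLam_eLamInt k).map (B := _ ⧸ fusionIdeal n k) (fusionMk n k)
  e_eq_zero m hm := by rw [eQuot, eLamInt_eq_zero hm, map_zero]
  h_level := by
    rw [hQuot, ← map_one (fusionMk n k)]
    exact Ideal.Quotient.eq.2 (Ideal.subset_span (Or.inl rfl))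
  h_eq_zero m hnm hm := by
    obtain ⟨j, rfl⟩ := Int.le.dest hnm.le
    exact Ideal.Quotient.eq_zero_iff_mem.2
      (Ideal.subset_span (Or.inr (Or.inl ⟨j, by omega, by omega, rfl⟩)))

lemma fusionToQuot_single (σ : PartBox (n - 1) k) :
    fusionToQuot n k (Finsupp.single σ 1) =
      (jacobiTrudi (hQuot n k) (transpGen (partVal σ) k)).det := by
  rw [fusionToQuot, Finsupp.lift_apply, Finsupp.sum_single_index (by exact zero_smul _ _),
    one_smul]
  exact RingHom.map_det (n := Fin k) (S := _ ⧸ fusionIdeal n k) (fusionMk n k) _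

variable [NeZero n]

lemma fusionToQuot_single_eq_fusionDet (σ : PartBox (n - 1) k) :
    fusionToQuot n k (Finsupp.single σ 1) = fusionDet (hQuot n k) (shape σ) := by
  rw [fusionToQuot_single, (isFusionPair_hQuot_eQuot n k).fusionDet_shape σ (padded_le σ 0)]

lemma fusionToQuot_single_partEmpty :
    fusionToQuot n k (Finsupp.single (partEmpty (n - 1) k) 1) = 1 := by
  rw [fusionToQuot_single_eq_fusionDet, (isFusionPair_hQuot_eQuot n k).fusionDet_shape_partEmpty]

theorem fusionToQuot_sAOp (hk : 0 < k) (σ : PartBox (n - 1) k) (v : HkSp ℤ n k) :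
    fusionToQuot n k (sAOp ℤ n k 1 σ v) =
      fusionToQuot n k (Finsupp.single σ 1) * fusionToQuot n k v :=
  (isFusionPair_hQuot_eQuot n k).map_sAOp hk fusionToQuot_single_eq_fusionDet σ v

lemma eQuot_mul_mem_range_fusionToQuot (hk : 0 < k) {m : ℕ} (hm : m ≤ k)
    {a : symmetricSubalgebra (Fin k) ℤ ⧸ fusionIdeal n k}
    (ha : a ∈ LinearMap.range (fusionToQuot n k)) :
    eQuot n k m * a ∈ LinearMap.range (fusionToQuot n k) := by
  have hf := isFusionPair_hQuot_eQuot n k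
  refine hf.e_mul_mem (M := (LinearMap.range (fusionToQuot n k)).toAddSubgroup) ?_ hm a ha
  rintro t ht _ ⟨v, rfl⟩
  exact ⟨_, hf.map_eAInt hk fusionToQuot_single_eq_fusionDet ht v⟩

theorem fusionToQuot_surjective (hk : 0 < k) : Function.Surjective (fusionToQuot n k) := by
  intro a
  obtain ⟨f, rfl⟩ : ∃ f, fusionMk n k f = a := Ideal.Quotient.mk_surjective a
  obtain ⟨p, rfl⟩ := esymmAlgHom_fin_surjective ℤ le_rfl f
  change _ ∈ LinearMap.range (fusionToQuot n k)
  induction p using MvPolynomial.induction_on with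
  | C c =>
    rw [eq_intCast C c, map_intCast, map_intCast, ← zsmul_one]
    exact Submodule.smul_mem _ c ⟨_, fusionToQuot_single_partEmpty⟩
  | add p q hp hq =>
    rw [map_add, map_add]
    exact add_mem hp hq
  | mul_X p i hp =>
    have hX : esymmAlgHom (Fin k) ℤ k (X i) = eLamInt k (i + 1 : ℕ) := by
      refine Subtype.ext ?_
      rw [esymmAlgHom_apply, aeval_X, coe_eLamInt_natCast]
    rw [mul_comm, map_mul, map_mul, hX]
    exact eQuot_mul_mem_range_fusionToQuot hk i.2 hp

end Quotient

section BaseChange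

variable {R S : Type*} [CommRing R] [CommRing S] (f : R →+* S) {n k : ℕ}

/-- Extension of scalars along `f` on the `k`-particle space. -/
def baseChange : HkSp R n k →+ HkSp S n k := Finsupp.mapRange.addMonoidHom f

lemma baseChange_apply (v : HkSp R n k) (σ : PartBox (n - 1) k) : baseChange f v σ = f (v σ) :=
  rfl

lemma baseChange_single (σ : PartBox (n - 1) k) (c : R) :
    baseChange f (Finsupp.single σ c) = Finsupp.single σ (f c) :=
  Finsupp.mapRange_single (hf := map_zero f)

lemma baseChange_smul (c : R) (v : HkSp R n k) : baseChange f (c • v) = f c • baseChange f v :=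
  Finsupp.ext fun σ => map_mul f c (v σ)

lemma pairHk_single_one (nu : PartBox (n - 1) k) (v : HkSp ℂ n k) :
    pairHk (Finsupp.single nu 1) v = v nu := by
  simp [pairHk, Finsupp.single_apply, ite_mul]

variable [NeZero n]

lemma baseChange_toBasis (m : ZMod n → ℕ) (c : R) :
    baseChange f (toBasis R n k m c) = toBasis S n k m (f c) := by
  simp only [toBasis, map_sum, apply_ite (baseChange f), map_zero, baseChange_single]

lemma baseChange_aOp (z : R) (i : ZMod n) (v : HkSp R n k) :
    baseChange f (aOp R n k z i v) = aOp S n k (f z) i (baseChange f v) := by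
  induction v using Finsupp.induction_linear with
  | zero => simp only [map_zero]
  | add v w hv hw => simp only [map_add, hv, hw]
  | single σ c =>
    rw [← mul_one c, ← smul_eq_mul, ← Finsupp.smul_single, map_smul, baseChange_smul,
      baseChange_smul, baseChange_single, map_one, map_smul, aOp_single, aOp_single,
      apply_ite (baseChange f), map_zero, baseChange_toBasis, apply_ite f, map_one]

lemma baseChange_cycProdDesc (z : R) (I : Finset (ZMod n)) (v : HkSp R n k) :
    baseChange f (cycProdDesc (aOp R n k z) I v) =
      cycProdDesc (aOp S n k (f z)) I (baseChange f v) := by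
  refine map_list_prod_apply (baseChange f) _ (fun t w => ?_) v
  split_ifs
  · exact baseChange_aOp f z _ w
  · rfl

lemma baseChange_eAInt (z : R) (t : ℤ) (v : HkSp R n k) :
    baseChange f (eAInt R n k z t v) = eAInt S n k (f z) t (baseChange f v) := by
  rw [eAInt, eAInt]
  split_ifs
  · rfl
  · simp only [LinearMap.sum_apply, map_sum, baseChange_cycProdDesc]
  · exact baseChange_smul f z v
  · exact map_zero _

lemma baseChange_sAOp (z : R) (σ : PartBox (n - 1) k) (v : HkSp R n k) :
    baseChange f (sAOp R n k z σ v) = sAOp S n k (f z) σ (baseChange f v) :=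
  map_ncDet_apply (baseChange f) (fun _ _ => baseChange_eAInt f z _) v

theorem pairHk_single_sAOp_single (lam mu nu : PartBox (n - 1) k) :
    pairHk (Finsupp.single nu 1) (sAOp ℂ n k 1 lam (Finsupp.single mu 1)) =
      (sAOp ℤ n k 1 lam (Finsupp.single mu 1) nu : ℤ) := by
  have hbase := baseChange_sAOp (Int.castRingHom ℂ) 1 lam (Finsupp.single mu 1)
  rw [baseChange_single, map_one] at hbase
  rw [pairHk_single_one, ← hbase, baseChange_apply, eq_intCast]

theorem fusionMulZ_eq_sAOp_single (lam mu : PartBox (n - 1) k) :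
    fusionMulZ n k lam mu = sAOp ℤ n k 1 lam (Finsupp.single mu 1) := by
  simp only [fusionMulZ, pairHk_single_sAOp_single, Complex.intCast_re, Int.floor_intCast]
  exact Finsupp.univ_sum_single _

end BaseChange

section CardPartBox

lemma card_partBox_le (r c : ℕ) : Fintype.card (PartBox r c) ≤ (r + c).choose r := by
  let parts (σ : PartBox r c) : Sym (Fin (c + 1)) r := ⟨List.ofFn σ.1, by simp⟩
  have hsorted (σ : PartBox r c) : (List.ofFn σ.1).Pairwise (· ≥ ·) :=
    List.pairwise_ofFn.2 fun i j hij => σ.2 i j hij.le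
  have hparts : Function.Injective parts := fun σ τ hστ =>
    Subtype.ext <| List.ofFn_injective <|
      (Multiset.coe_eq_coe.1 (congrArg Subtype.val hστ)).eq_of_pairwise'
        (hsorted σ) (hsorted τ)
  calc Fintype.card (PartBox r c) ≤ Fintype.card (Sym (Fin (c + 1)) r) :=
        Fintype.card_le_of_injective parts hparts
    _ = (r + c).choose r := by
        rw [Sym.card_sym_eq_choose, Fintype.card_fin]
        congr 1
        omega

end CardPartBox

section Characters

variable {P A K ι : Type*} [Fintype P] [Ring A] [Field K] [CharZero K] [Fintype ι]

/-- Distinct characters are linearly independent, so `card P` of them separate the points of a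
quotient of `P →₀ ℤ`. -/
theorem injective_of_card_le_of_surjective {φ : (P →₀ ℤ) →ₗ[ℤ] A}
    (hφ : Function.Surjective φ) {χ : ι → A →+* K} (hχ : Function.Injective χ)
    (hcard : Fintype.card P ≤ Fintype.card ι) : Function.Injective φ := by
  let v (i : ι) (p : P) : K := χ i (φ (Finsupp.single p 1))
  have hv (i : ι) (w : P →₀ ℤ) : ∑ p, v i p * w p = χ i (φ w) := by
    conv_rhs => rw [← Finsupp.univ_sum_single w]
    simp only [map_sum]
    refine Finset.sum_congr rfl fun p _ => ?_
    rw [← Finsupp.smul_single_one, map_smul, map_zsmul, zsmul_eq_mul, mul_comm]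
  have hindep : LinearIndependent K v := by
    have hmonoid := linearIndependent_monoidHom A K
    have hchar := hmonoid.comp (fun i => (χ i : A →* K)) fun i j hij =>
      hχ (RingHom.coe_monoidHom_injective hij)
    refine Fintype.linearIndependent_iff.2 fun g hg => Fintype.linearIndependent_iff.1 hchar g ?_
    funext a
    obtain ⟨w, rfl⟩ := hφ a
    have hgv (p : P) : ∑ i, g i * v i p = 0 := by simpa using congrFun hg p
    calc (∑ i, g i • ⇑(χ i : A →* K)) (φ w) = ∑ i, g i * ∑ p, v i p * w p := by
          simp [hv]
      _ = ∑ p, (∑ i, g i * v i p) * w p := by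
          simp only [Finset.mul_sum, Finset.sum_mul, mul_assoc]
          exact Finset.sum_comm
      _ = 0 := by simp [hgv]
  have hspan : Submodule.span K (Set.range v) = ⊤ :=
    hindep.span_eq_top_of_card_eq_finrank' <|
      le_antisymm hindep.fintype_card_le_finrank (by rwa [Module.finrank_fintype_fun_eq_card])
  refine (injective_iff_map_eq_zero φ).2 fun w hw => ?_
  have hzero : Fintype.linearCombination K (fun p => (w p : K)) = 0 := by
    refine LinearMap.ext_on_range hspan fun i => ?_
    simp [Fintype.linearCombination_apply, hv, hw]
  classical
  ext p
  simpa [Fintype.linearCombination_apply, Pi.single_apply] using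
    LinearMap.congr_fun hzero (Pi.single p 1)

end Characters

section BetheTuples

open Polynomial (C X)

open MvPolynomial (aeval hsymm esymm)

variable {K : Type*} [Field K] {n k : ℕ}

lemma prod_one_sub_C_mul_X_dvd {ι : Type*} (s : Finset ι) {x : ι → K} (hx : Function.Injective x)
    {N : ℕ} {c : K} (hpow : ∀ i, x i ^ N = c) :
    ∏ i ∈ s, (1 - C (x i) * X) ∣ 1 - C c * X ^ N := by
  refine Finset.prod_dvd_of_coprime (fun i _ j _ hij => ?_) fun i _ => ?_
  · have hsub : x i - x j ≠ 0 := sub_ne_zero.2 (hx.ne hij)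
    refine ⟨-C ((x i - x j)⁻¹ * x j), C ((x i - x j)⁻¹ * x i), ?_⟩
    calc _ = C ((x i - x j)⁻¹ * (x i - x j)) := by simp only [map_mul, map_sub]; ring
      _ = 1 := by rw [inv_mul_cancel₀ hsub, map_one]
  · rw [← hpow i, C.map_pow, ← mul_pow]
    exact one_sub_dvd_one_sub_pow _ N

lemma natDegree_one_sub_C_mul_X_pow {c : K} (hc : c ≠ 0) {N : ℕ} (hN : 0 < N) :
    (1 - C c * X ^ N).natDegree = N := by
  rw [Polynomial.natDegree_sub_eq_right_of_natDegree_lt] <;>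
    rw [Polynomial.natDegree_C_mul_X_pow N c hc]
  rwa [Polynomial.natDegree_one]

lemma leadingCoeff_one_sub_C_mul_X_pow {c : K} (hc : c ≠ 0) {N : ℕ} (hN : 0 < N) :
    (1 - C c * X ^ N).leadingCoeff = -c := by
  rw [Polynomial.leadingCoeff, natDegree_one_sub_C_mul_X_pow hc hN, Polynomial.coeff_sub,
    Polynomial.coeff_C_mul_X_pow, if_pos rfl, Polynomial.coeff_one, if_neg hN.ne', zero_sub]

lemma mk_aeval_hsymm_mul_prod_one_sub {σ : Type*} [Fintype σ] [DecidableEq σ] (x : σ → K) :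
    (PowerSeries.mk fun m => aeval x (hsymm σ ℤ m)) *
      ((∏ i, (1 - C (x i) * X) : Polynomial K) : PowerSeries K) = 1 := by
  have hmap := congrArg (PowerSeries.map (aeval x : MvPolynomial σ ℤ →ₐ[ℤ] K).toRingHom)
    (mk_hsymm_mul_prod_one_sub (σ := σ) (R := ℤ))
  rw [map_mul, map_one, map_prod] at hmap
  rw [← Polynomial.coeToPowerSeries.ringHom_apply, map_prod]
  convert hmap using 2
  · ext m
    simp
  · refine Finset.prod_congr rfl fun i _ => ?_
    simp [Polynomial.coeToPowerSeries.ringHom_apply]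

lemma natDegree_prod_one_sub_C_mul_X {ι : Type*} (s : Finset ι) {x : ι → K} (hx : ∀ i, x i ≠ 0) :
    (∏ i ∈ s, (1 - C (x i) * X)).natDegree = s.card := by
  have hdeg (i : ι) : (1 - C (x i) * X).natDegree = 1 := by
    simpa using natDegree_one_sub_C_mul_X_pow (hx i) one_pos
  rw [Polynomial.natDegree_prod _ _ fun i _ h => by simpa [h] using hdeg i]
  simp only [hdeg, Finset.card_eq_sum_ones]

lemma leadingCoeff_prod_one_sub_C_mul_X {ι : Type*} (s : Finset ι) {x : ι → K}
    (hx : ∀ i, x i ≠ 0) :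
    (∏ i ∈ s, (1 - C (x i) * X)).leadingCoeff = (-1) ^ s.card * ∏ i ∈ s, x i := by
  have hlead (i : ι) : (1 - C (x i) * X).leadingCoeff = -x i := by
    simpa using leadingCoeff_one_sub_C_mul_X_pow (hx i) one_pos
  simp only [Polynomial.leadingCoeff_prod, hlead, Finset.prod_neg]

/-- Evaluation of symmetric polynomials at a tuple. -/
def symmEval (x : Fin k → K) : MvPolynomial.symmetricSubalgebra (Fin k) ℤ →+* K :=
  ((aeval x).comp (MvPolynomial.symmetricSubalgebra (Fin k) ℤ).val : _ →ₐ[ℤ] K)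

/-- A solution `x` of the Bethe equations at `z = 1`: distinct nonzero elements with
`x_i ^ (n + k) = (-1) ^ (k + 1) x_1 ⋯ x_k`. -/
structure IsBetheTuple (n : ℕ) (x : Fin k → K) : Prop where
  injective : Function.Injective x
  ne_zero : ∀ i, x i ≠ 0
  pow_eq : ∀ i, x i ^ (n + k) = (-1) ^ (k + 1) * ∏ j, x j

namespace IsBetheTuple

variable {x : Fin k → K}

lemma exists_monic_mul_prod_one_sub (hk : 0 < k) (hx : IsBetheTuple n x) :
    ∃ G : Polynomial K, G.Monic ∧ G.natDegree = n ∧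
      G * ∏ i, (1 - C (x i) * X) = 1 - C ((-1) ^ (k + 1) * ∏ j, x j) * X ^ (n + k) := by
  obtain ⟨G, hG⟩ := prod_one_sub_C_mul_X_dvd Finset.univ hx.injective hx.pow_eq
  replace hG := (mul_comm _ _).trans hG.symm
  have hc : (-1) ^ (k + 1) * ∏ j, x j ≠ 0 :=
    mul_ne_zero (pow_ne_zero _ (neg_ne_zero.2 one_ne_zero))
      (Finset.prod_ne_zero_iff.2 fun i _ => hx.ne_zero i)
  have hmonic : G.Monic := by
    have hlead := congrArg Polynomial.leadingCoeff hG
    rw [leadingCoeff_one_sub_C_mul_X_pow hc (by omega), Polynomial.leadingCoeff_mul,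
      leadingCoeff_prod_one_sub_C_mul_X _ hx.ne_zero, Finset.card_fin] at hlead
    exact mul_right_cancel₀ hc (by rw [pow_succ]; linear_combination -hlead)
  refine ⟨G, hmonic, ?_, hG⟩
  have hfactor : (∏ i, (1 - C (x i) * X)).natDegree = k := by
    rw [natDegree_prod_one_sub_C_mul_X _ hx.ne_zero, Finset.card_fin]
  have hdeg := congrArg Polynomial.natDegree hG
  rw [natDegree_one_sub_C_mul_X_pow hc (by omega),
    hmonic.natDegree_mul' (Polynomial.ne_zero_of_natDegree_gt (hk.trans_eq hfactor.symm)),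
    hfactor] at hdeg
  omega

lemma exists_monic_coeff_eq (hk : 0 < k) (hx : IsBetheTuple n x) :
    ∃ G : Polynomial K, G.Monic ∧ G.natDegree = n ∧ ∀ m,
      G.coeff m = aeval x (hsymm (Fin k) ℤ m) - (-1) ^ (k + 1) * (∏ j, x j) *
        if n + k ≤ m then aeval x (hsymm (Fin k) ℤ (m - (n + k))) else 0 := by
  obtain ⟨G, hmonic, hdeg, hG⟩ := hx.exists_monic_mul_prod_one_sub hk
  refine ⟨G, hmonic, hdeg, fun m => ?_⟩
  have hseries : (PowerSeries.mk fun m => aeval x (hsymm (Fin k) ℤ m)) *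
      (1 - PowerSeries.C ((-1) ^ (k + 1) * ∏ j, x j) * PowerSeries.X ^ (n + k)) =
        (G : PowerSeries K) := by
    have hcoe := congrArg (Polynomial.toPowerSeries) hG
    rw [Polynomial.coe_mul, Polynomial.coe_sub, Polynomial.coe_one, Polynomial.coe_mul,
      Polynomial.coe_C, Polynomial.coe_pow, Polynomial.coe_X] at hcoe
    rw [← hcoe, mul_left_comm, mk_aeval_hsymm_mul_prod_one_sub, mul_one]
  have hcoeff := congrArg (PowerSeries.coeff m) hseries
  rw [mul_sub, mul_one, mul_left_comm, map_sub, PowerSeries.coeff_C_mul,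
    PowerSeries.coeff_mul_X_pow', Polynomial.coeff_coe] at hcoeff
  simpa only [PowerSeries.coeff_mk] using hcoeff.symm

lemma aeval_hsymm_level (hk : 0 < k) (hx : IsBetheTuple n x) :
    aeval x (hsymm (Fin k) ℤ n) = 1 := by
  obtain ⟨G, hmonic, hdeg, hG⟩ := hx.exists_monic_coeff_eq hk
  have hcoeff := hG n
  rw [if_neg (by omega), mul_zero, sub_zero] at hcoeff
  rw [← hcoeff, ← hdeg, hmonic.coeff_natDegree]

lemma aeval_hsymm_eq_zero (hx : IsBetheTuple n x) {m : ℕ} (hnm : n < m) (hm : m < n + k) :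
    aeval x (hsymm (Fin k) ℤ m) = 0 := by
  obtain ⟨G, -, hdeg, hG⟩ := hx.exists_monic_coeff_eq (by omega)
  have hcoeff := hG m
  rw [if_neg (by omega), mul_zero, sub_zero] at hcoeff
  rw [← hcoeff, Polynomial.coeff_eq_zero_of_natDegree_lt (by omega)]

lemma aeval_hsymm_add (hk : 0 < k) (hx : IsBetheTuple n x) :
    aeval x (hsymm (Fin k) ℤ (n + k)) = (-1) ^ (k + 1) * ∏ j, x j := by
  obtain ⟨G, -, hdeg, hG⟩ := hx.exists_monic_coeff_eq hk
  have hcoeff := hG (n + k)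
  rw [if_pos le_rfl, Nat.sub_self, MvPolynomial.hsymm_zero, map_one, mul_one,
    Polynomial.coeff_eq_zero_of_natDegree_lt (by omega)] at hcoeff
  exact sub_eq_zero.1 hcoeff.symm

lemma fusionIdeal_le_ker_symmEval (hk : 0 < k) (hx : IsBetheTuple n x) :
    fusionIdeal n k ≤ RingHom.ker (symmEval x) := by
  refine Ideal.span_le.2 ?_
  have hh (m : ℕ) : symmEval x (hLam k m) = aeval x (hsymm (Fin k) ℤ m) :=
    congrArg (aeval x) (coe_hLam_natCast k m)
  rintro _ (rfl | ⟨j, hj, hjk, rfl⟩ | rfl) <;> rw [SetLike.mem_coe, RingHom.mem_ker]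
  · rw [map_sub, map_one, hh, hx.aeval_hsymm_level hk, sub_self]
  · rw [← Nat.cast_add, hh, hx.aeval_hsymm_eq_zero (by omega) (by omega)]
  · have he : symmEval x (eLam k k) = ∏ j, x j := by
      have huniv : (Finset.univ : Finset (Fin k)).powersetCard k = {Finset.univ} := by
        simpa only [Finset.card_fin] using Finset.powersetCard_self (Finset.univ : Finset (Fin k))
      change aeval x (esymm (Fin k) ℤ k) = _
      simp [esymm, huniv]
    rw [map_add, ← Nat.cast_add, hh, hx.aeval_hsymm_add hk, map_mul, he, map_pow, map_neg, map_one]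
    ring

/-- The character of the fusion ring given by evaluation at a Bethe tuple. -/
def character (hk : 0 < k) (hx : IsBetheTuple n x) :
    MvPolynomial.symmetricSubalgebra (Fin k) ℤ ⧸ fusionIdeal n k →+* K :=
  Ideal.Quotient.lift _ (symmEval x) (hx.fusionIdeal_le_ker_symmEval hk)

lemma range_eq_of_character_eq (hk : 0 < k) {y : Fin k → K} (hx : IsBetheTuple n x)
    (hy : IsBetheTuple n y) (hxy : hx.character hk = hy.character hk) :
    Set.range x = Set.range y := by
  have hesymm (m : ℕ) : aeval x (esymm (Fin k) ℤ m) = aeval y (esymm (Fin k) ℤ m) :=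
    RingHom.congr_fun hxy (fusionMk n k (eLam k m))
  simp only [MvPolynomial.aeval_esymm_eq_multiset_esymm] at hesymm
  have hprod : ((Finset.univ.val.map x).map fun a => X - C a).prod =
      ((Finset.univ.val.map y).map fun a => X - C a).prod := by
    simp only [Multiset.prod_X_sub_X_eq_sum_esymm, hesymm, Multiset.card_map]
  have hroots := congrArg Polynomial.roots hprod
  rw [Polynomial.roots_multiset_prod_X_sub_C, Polynomial.roots_multiset_prod_X_sub_C] at hroots
  ext a
  simpa using congrArg (a ∈ ·) hroots

end IsBetheTuple

end BetheTuples

section Counting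

open Polynomial (nthRootsFinset mem_nthRootsFinset)

open scoped Pointwise

variable {n k : ℕ}

lemma isBetheTuple_mul {K : Type*} [Field K] {y : Fin k → K} (hy : Function.Injective y)
    (hpow : ∀ i, y i ^ (n + k) = 1) {t : K} (ht0 : t ≠ 0)
    (ht : t ^ n = (-1) ^ (k + 1) * ∏ j, y j) : IsBetheTuple n fun i => t * y i where
  injective i j hij := hy (mul_left_cancel₀ ht0 hij)
  ne_zero i := mul_ne_zero ht0 (IsUnit.of_pow_eq_one (hpow i) (by have := i.pos; omega)).ne_zero
  pow_eq i := by
    rw [mul_pow, hpow, mul_one, pow_add, ht, Finset.prod_mul_distrib, Finset.prod_const,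
      Finset.card_fin]
    ring

lemma card_nthRootsFinset_complex (hn : 0 < n) {a : ℂ} (ha : a ≠ 0) :
    (nthRootsFinset n a).card = n := by
  have hζ := Complex.isPrimitiveRoot_exp n hn.ne'
  have hroot : ∃ b : ℂ, b ^ n = a := IsAlgClosed.exists_pow_nat_eq a hn
  rw [nthRootsFinset, ← Multiset.toFinset_eq (hζ.nthRoots_nodup ha), Finset.card_mk,
    hζ.card_nthRoots, if_pos hroot]

/-- The pairs `(Y, t)` of a `k`-set `Y` of `(n + k)`-th roots of unity and a scalar `t` for which
`t • Y` solves the Bethe equations. -/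
def bethePairs (n k : ℕ) : Finset (Σ _ : Finset ℂ, ℂ) :=
  ((nthRootsFinset (n + k) (1 : ℂ)).powersetCard k).sigma fun Y =>
    nthRootsFinset n ((-1) ^ (k + 1) * ∏ y ∈ Y, y)

/-- The sets of values of the complex Bethe tuples. -/
def betheSets (n k : ℕ) : Finset (Finset ℂ) := (bethePairs n k).image fun p => p.2 • p.1

lemma mem_bethePairs (hn : 0 < n) {p : Σ _ : Finset ℂ, ℂ} :
    p ∈ bethePairs n k ↔
      ((∀ y ∈ p.1, y ^ (n + k) = 1) ∧ p.1.card = k) ∧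
        p.2 ^ n = (-1) ^ (k + 1) * ∏ y ∈ p.1, y := by
  rw [bethePairs, Finset.mem_sigma, Finset.mem_powersetCard, mem_nthRootsFinset hn,
    Finset.subset_iff]
  simp only [mem_nthRootsFinset (Nat.add_pos_left hn k)]

lemma neg_one_pow_mul_prod_ne_zero (hn : 0 < n) {Y : Finset ℂ} (hY : ∀ y ∈ Y, y ^ (n + k) = 1) :
    (-1) ^ (k + 1) * ∏ y ∈ Y, y ≠ 0 :=
  mul_ne_zero (pow_ne_zero _ (neg_ne_zero.2 one_ne_zero)) <|
    Finset.prod_ne_zero_iff.2 fun y hy => (IsUnit.of_pow_eq_one (hY y hy) (by omega)).ne_zero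

lemma ne_zero_of_mem_bethePairs (hn : 0 < n) {p : Σ _ : Finset ℂ, ℂ} (hp : p ∈ bethePairs n k) :
    p.2 ≠ 0 := by
  obtain ⟨⟨hpow, -⟩, ht⟩ := (mem_bethePairs hn).1 hp
  exact (pow_ne_zero_iff hn.ne').1 (ht ▸ neg_one_pow_mul_prod_ne_zero hn hpow)

lemma card_bethePairs (hn : 0 < n) : (bethePairs n k).card = (n + k).choose k * n := by
  have hN := Nat.add_pos_left hn k
  rw [bethePairs, Finset.card_sigma, Finset.sum_const_nat fun Y hY => ?_,
    Finset.card_powersetCard, card_nthRootsFinset_complex hN one_ne_zero]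
  refine card_nthRootsFinset_complex hn (neg_one_pow_mul_prod_ne_zero hn fun y hy => ?_)
  exact (mem_nthRootsFinset hN 1).1 ((Finset.mem_powersetCard.1 hY).1 hy)

lemma exists_isBetheTuple_of_mem_betheSets (hn : 0 < n) {S : Finset ℂ} (hS : S ∈ betheSets n k) :
    ∃ x : Fin k → ℂ, IsBetheTuple n x ∧ Set.range x = S := by
  obtain ⟨⟨Y, t⟩, hp, rfl⟩ := Finset.mem_image.1 hS
  obtain ⟨⟨hpow, hcard⟩, ht⟩ := (mem_bethePairs hn).1 hp
  let y : Fin k ≃ Y := (Y.equivFinOfCardEq hcard).symm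
  have hprod : ∏ j, (y j : ℂ) = ∏ a ∈ Y, a := by
    rw [y.prod_comp fun a : Y => (a : ℂ), Finset.prod_coe_sort Y fun a => a]
  refine ⟨fun i => t * y i, isBetheTuple_mul (Subtype.val_injective.comp y.injective)
    (fun i => hpow _ (y i).2) (ne_zero_of_mem_bethePairs hn hp) (ht.trans (by rw [← hprod]; rfl)),
    ?_⟩
  rw [Finset.coe_smul_finset]
  ext a
  simp [y.exists_congr_left, Set.mem_smul_set]

lemma card_filter_bethePairs_le (hn : 0 < n) (hk : 0 < k) {S : Finset ℂ} (hS : S ∈ betheSets n k) :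
    ((bethePairs n k).filter fun p => p.2 • p.1 = S).card ≤ n + k := by
  have hsub {p} (hp : p ∈ (bethePairs n k).filter fun p => p.2 • p.1 = S) :
      p.1 = p.2⁻¹ • S := by
    obtain ⟨hpair, rfl⟩ := Finset.mem_filter.1 hp
    rw [inv_smul_smul₀ (ne_zero_of_mem_bethePairs hn hpair)]
  obtain ⟨s, hs⟩ : S.Nonempty := by
    obtain ⟨p, hp, rfl⟩ := Finset.mem_image.1 hS
    refine Finset.Nonempty.smul_finset (Finset.card_pos.1 ?_)
    rwa [((mem_bethePairs hn).1 hp).1.2]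
  have hroot {p} (hp : p ∈ (bethePairs n k).filter fun p => p.2 • p.1 = S) :
      p.2 ∈ nthRootsFinset (n + k) (s ^ (n + k)) := by
    obtain ⟨hpair, rfl⟩ := Finset.mem_filter.1 hp
    obtain ⟨y, hy, rfl⟩ := Finset.mem_smul_finset.1 hs
    rw [mem_nthRootsFinset (by omega), smul_eq_mul, mul_pow, ((mem_bethePairs hn).1 hpair).1.1 y hy,
      mul_one]
  refine (Finset.card_le_card_of_injOn Sigma.snd (fun p hp => hroot hp) ?_).trans
    ((Multiset.toFinset_card_le _).trans (Polynomial.card_nthRoots _ _))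
  rintro ⟨Y, t⟩ hp ⟨Y', t'⟩ hp' rfl
  exact Sigma.ext ((hsub hp).trans (hsub hp').symm) HEq.rfl

lemma choose_le_card_betheSets (hn : 0 < n) (hk : 0 < k) :
    (n - 1 + k).choose k ≤ (betheSets n k).card := by
  obtain ⟨n, rfl⟩ := Nat.exists_eq_succ_of_ne_zero hn.ne'
  have hfiber := Finset.card_le_mul_card_image (bethePairs (n + 1) k) (n + 1 + k) fun S hS =>
    card_filter_bethePairs_le hn hk hS
  rw [card_bethePairs hn] at hfiber
  have hchoose := Nat.choose_mul_succ_eq (n + k) k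
  rw [show n + k + 1 - k = n + 1 by omega, show n + k + 1 = n + 1 + k by omega] at hchoose
  rw [← hchoose, mul_comm] at hfiber
  exact Nat.le_of_mul_le_mul_left hfiber (by omega)

theorem fusionToQuot_injective [NeZero n] (hk : 0 < k) : Function.Injective (fusionToQuot n k) := by
  have hn : 0 < n := Nat.pos_of_neZero n
  choose x hx hrange using fun S : betheSets n k => exists_isBetheTuple_of_mem_betheSets hn S.2
  refine injective_of_card_le_of_surjective (fusionToQuot_surjective hk)
    (χ := fun S => (hx S).character hk) (fun S T hST => ?_) ?_
  · refine Subtype.ext (Finset.coe_injective ?_)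
    rw [← hrange, ← hrange, (hx S).range_eq_of_character_eq hk (hx T) hST]
  · calc Fintype.card (PartBox (n - 1) k) ≤ (n - 1 + k).choose (n - 1) := card_partBox_le _ _
      _ = (n - 1 + k).choose k := Nat.choose_symm_add
      _ ≤ (betheSets n k).card := choose_le_card_betheSets hn hk
      _ = Fintype.card (betheSets n k) := (Fintype.card_coe _).symm

end Counting

end FusionRing

/-- At `z = 1`: all structure constants `⟨m(ν), s_λ(𝒜) m(μ)⟩` are
integers, and the ℤ-linear map sending a partition `λ ∈ 𝔓_{≤ n-1,k}` to the class of the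
Schur polynomial `s_{λ^t}` in `Λ^{(k)}/⟨h_n - 1, h_{n+1}, …, h_{n+k-1}, h_{n+k} + (-1)^k e_k⟩`
is an isomorphism of rings. -/
theorem fusion_ring_isomorphism (n k : ℕ) [NeZero n] (hn : 2 ≤ n) (hk : 1 ≤ k) :
    (∀ lam mu nu : PartBox (n - 1) k, ∃ c : ℤ,
        pairHk (Finsupp.single nu 1) (sAOp ℂ n k 1 lam (Finsupp.single mu 1)) = (c : ℂ)) ∧
    Function.Bijective (fusionToQuot n k) ∧
    (∀ lam mu : PartBox (n - 1) k,
        fusionToQuot n k (fusionMulZ n k lam mu) =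
          fusionToQuot n k (Finsupp.single lam 1) * fusionToQuot n k (Finsupp.single mu 1)) ∧
    fusionToQuot n k (Finsupp.single (partEmpty (n - 1) k) 1) = 1 := by
  refine ⟨fun lam mu nu => ⟨_, FusionRing.pairHk_single_sAOp_single lam mu nu⟩,
    ⟨FusionRing.fusionToQuot_injective hk, FusionRing.fusionToQuot_surjective hk⟩,
    fun lam mu => ?_, FusionRing.fusionToQuot_single_partEmpty⟩
  rw [FusionRing.fusionMulZ_eq_sAOp_single, FusionRing.fusionToQuot_sAOp hk]
end
end
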